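/- arXiv:1308.1804 — 4 statements merged into one kernel-verified Lean document; each statement's English description precedes it below -/
import Mathlib

section
/- Let G be a Grothendieck category and T an object of G. Then T is a tilting object (i.e., there is a ring R and a triangle equivalence from the unbounded derived category D(G) to D(R) sending T to R) if and only if the following three conditions hold: (T1) T is a compact object of D(G); (T2) Ext^i_G(T,T) = 0 for every i > 0; (T3) T generates D(G), i.e., for every nonzero object X of D(G) there exists i ∈ ℤ with Hom_{D(G)}(Σ^i T, X) ≠ 0. In that case R ≅ End_G(T), and for R = End_G(T) the total right derived functor RHom_G(T,−) : D(G) → D(R) is a triangle equivalence sending T to R. -/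
/-!
Statement 0: For a Grothendieck category `G` and `T : G`, `T` is tilting (there is a ring `R`
and a triangle equivalence `D(G) ≌ D(Mod-R)` sending `T` to `R`) iff `T` is compact in `D(G)`,
rigid, and generates `D(G)`.  In that case `R ≅ End_G(T)` and there is a triangle equivalence
`D(G) ≌ D(Mod-End_G(T))` sending `T` to the regular module.
(Right `R`-modules are formalized as `ModuleCat R`, whence the `ᵐᵒᵖ` on endomorphism rings.)
-/

universe w w' v u

open CategoryTheory Category Limits Pretriangulated

namespace PaperStmt

variable {T : Type u} [Category.{v} T]

/-- An object `Z` of a preadditive category is compact if for every small family `(X i)`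
having a coproduct, the canonical map `⨁ᵢ Hom(Z, X i) → Hom(Z, ∐ X)` is bijective. -/
def IsCompactObj [Preadditive T] (Z : T) : Prop :=
  ∀ ⦃ι : Type v⦄ (X : ι → T) [HasCoproduct X],
    letI := Classical.decEq ι
    Function.Bijective
      (DFinsupp.sumAddHom (β := fun i => (Z ⟶ X i))
        (fun i => Preadditive.rightComp Z (Sigma.ι X i)))

/-- `Z` is a generator of a triangulated category in the triangulated sense:
every nonzero object receives a nonzero morphism from some shift of `Z`. -/
def IsTriangulatedGen [Preadditive T] [HasShift T ℤ] (Z : T) : Prop :=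
  ∀ (X : T), ¬ IsZero X → ∃ (i : ℤ) (f : Z⟦i⟧ ⟶ X), f ≠ 0

/-- A triangle equivalence: an equivalence of categories commuting with the shift and
preserving distinguished triangles. -/
structure TriangleEquivalenceData (D₁ : Type u) (D₂ : Type w)
    [Category.{v} D₁] [Category.{w'} D₂]
    [HasZeroObject D₁] [HasZeroObject D₂] [Preadditive D₁] [Preadditive D₂]
    [HasShift D₁ ℤ] [HasShift D₂ ℤ]
    [∀ n : ℤ, (shiftFunctor D₁ n).Additive] [∀ n : ℤ, (shiftFunctor D₂ n).Additive]
    [Pretriangulated D₁] [Pretriangulated D₂] where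
  functor : D₁ ⥤ D₂
  commShift : functor.CommShift ℤ
  isTriangulated : letI := commShift; functor.IsTriangulated
  isEquivalence : functor.IsEquivalence

variable (G : Type u) [Category.{v} G] [Abelian G] [HasDerivedCategory.{w} G]

/-- `T` is a tilting object of `G`: there is a ring `R` and a triangle equivalence
`D(G) ≌ D(Mod-R)` sending `T` to `R`. -/
def IsTiltingObject (Tt : G) : Prop :=
  ∃ (R : Type v) (_ : Ring R),
    letI : HasDerivedCategory (ModuleCat.{v} R) := HasDerivedCategory.standard _
    ∃ E : TriangleEquivalenceData (DerivedCategory G) (DerivedCategory (ModuleCat.{v} R)),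
      Nonempty (E.functor.obj ((DerivedCategory.singleFunctor G 0).obj Tt)
        ≅ (DerivedCategory.singleFunctor (ModuleCat.{v} R) 0).obj (ModuleCat.of R R))

end PaperStmt


namespace TiltAux

section Cop

universe t t' v₁ u₁ v₂ u₂

variable {C : Type u₁} [Category.{v₁} C] {D : Type u₂} [Category.{v₂} D]

/-- The family `ι` exhibits `A` as a coproduct of the family `X`. -/
def IsCop {J : Type t} {X : J → C} {A : C} (ι : ∀ j, X j ⟶ A) : Prop :=
  ∀ (W : C) (f : ∀ j, X j ⟶ W), ∃! u : A ⟶ W, ∀ j, ι j ≫ u = f j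

namespace IsCop

variable {J : Type t} {X : J → C} {A : C} {ι : ∀ j, X j ⟶ A} (h : IsCop ι)

noncomputable def desc {W : C} (f : ∀ j, X j ⟶ W) : A ⟶ W := (h W f).choose

@[simp]
lemma fac {W : C} (f : ∀ j, X j ⟶ W) (j : J) : ι j ≫ h.desc f = f j :=
  (h W f).choose_spec.1 j

@[simp]
lemma fac_assoc {W W' : C} (f : ∀ j, X j ⟶ W) (j : J) (g : W ⟶ W') :
    ι j ≫ h.desc f ≫ g = f j ≫ g := by
  rw [← assoc, fac]

include h in
lemma hom_ext {W : C} {f g : A ⟶ W} (hfg : ∀ j, ι j ≫ f = ι j ≫ g) : f = g :=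
  (h W (fun j => ι j ≫ g)).unique hfg (fun _ => rfl)

open Classical in
/-- Projections. -/
noncomputable def proj [HasZeroMorphisms C] (j : J) : A ⟶ X j :=
  h.desc (fun i => if hij : i = j then eqToHom (by rw [hij]) else 0)

@[simp]
lemma ι_proj [HasZeroMorphisms C] (j : J) : ι j ≫ h.proj j = 𝟙 _ := by
  simp [proj]

lemma ι_proj_ne [HasZeroMorphisms C] {i j : J} (hij : i ≠ j) : ι i ≫ h.proj j = 0 := by
  simp [proj, hij]

include h in
lemma of_iso {B : C} (e : A ≅ B) : IsCop (fun j => ι j ≫ e.hom) := by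
  intro W f
  refine ⟨e.inv ≫ h.desc f, by simp, fun u hu => ?_⟩
  rw [← cancel_epi e.hom]
  apply h.hom_ext
  intro j
  simpa using hu j

include h in
lemma precomp_iso {X' : J → C} (e : ∀ j, X' j ≅ X j) : IsCop (fun j => (e j).hom ≫ ι j) := by
  intro W f
  refine ⟨h.desc (fun j => (e j).inv ≫ f j), by simp, fun u hu => ?_⟩
  apply h.hom_ext
  intro j
  simp [← hu j]

noncomputable def iso {B : C} {ι' : ∀ j, X j ⟶ B} (h' : IsCop ι') : A ≅ B where
  hom := h.desc ι'
  inv := h'.desc ι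
  hom_inv_id := h.hom_ext (by simp)
  inv_hom_id := h'.hom_ext (by simp)

@[simp]
lemma ι_iso_hom {B : C} {ι' : ∀ j, X j ⟶ B} (h' : IsCop ι') (j : J) :
    ι j ≫ (h.iso h').hom = ι' j := h.fac _ _

include h in
lemma reindex {J' : Type t'} (e : J' ≃ J) : IsCop (fun j => ι (e j)) := by
  intro W f
  have key : ∀ (a b : J') (hab : a = b), eqToHom (show X (e a) = X (e b) by rw [hab]) ≫ f b = f a := by
    intro a b hab; subst hab; simp
  refine ⟨h.desc (fun j => eqToHom (by simp) ≫ f (e.symm j)), ?_, fun u hu => ?_⟩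
  · intro j
    simp only [fac]
    exact key j _ (by simp)
  · apply h.hom_ext
    intro j
    obtain ⟨k, rfl⟩ := e.surjective j
    rw [fac]
    exact (hu k).trans (key k _ (by simp)).symm

include h in
lemma map_leftAdj {F : C ⥤ D} {G : D ⥤ C} (adj : F ⊣ G) : IsCop (fun j => F.map (ι j)) := by
  intro W f
  refine ⟨(adj.homEquiv _ _).symm (h.desc fun j => adj.homEquiv _ _ (f j)), ?_, fun u hu => ?_⟩
  · intro j
    rw [← adj.homEquiv_naturality_left_symm]
    simp
  · apply (adj.homEquiv _ _).injective
    simp only [Equiv.apply_symm_apply]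
    apply h.hom_ext
    intro j
    rw [← adj.homEquiv_naturality_left, hu]
    simp

include h in
lemma map_equiv (F : C ⥤ D) [F.IsEquivalence] : IsCop (fun j => F.map (ι j)) :=
  h.map_leftAdj F.asEquivalence.toAdjunction

lemma of_isColimit {c : Cofan X} (hc : IsColimit c) : IsCop c.inj := by
  intro W f
  exact ⟨Cofan.IsColimit.desc hc f, by simp, fun u hu => Cofan.IsColimit.hom_ext hc _ _ (by simpa using hu)⟩

include h in
lemma hasCoproduct : HasCoproduct X :=
  ⟨⟨⟨Cofan.mk A ι, Cofan.IsColimit.mk _ (fun t => h.desc t.inj) (by simp [Cofan.inj])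
    (fun t m hm => h.hom_ext (by simpa [Cofan.inj] using hm))⟩⟩⟩

end IsCop

lemma isCop_sigma {J : Type t} (X : J → C) [HasCoproduct X] : IsCop (Sigma.ι X) :=
  IsCop.of_isColimit (coproductIsCoproduct X)

/-- `C` has coproducts of size `t`. -/
def HasCop (C : Type u₁) [Category.{v₁} C] : Prop :=
  ∀ (J : Type t) (X : J → C), ∃ (A : C) (ι : ∀ j, X j ⟶ A), IsCop ι

def PresCop (F : C ⥤ D) : Prop :=
  ∀ (J : Type t) (X : J → C) (A : C) (ι : ∀ j, X j ⟶ A), IsCop ι → IsCop (fun j => F.map (ι j))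

def CopClosed (P : ObjectProperty C) : Prop :=
  ∀ (J : Type t) (X : J → C) (A : C) (ι : ∀ j, X j ⟶ A), IsCop ι → (∀ j, P (X j)) → P A

/-- Compact objects, for coproducts of size `t`. -/
def Cpt [Preadditive C] (Z : C) : Prop :=
  ∀ (J : Type t) (X : J → C) (A : C) (ι : ∀ j, X j ⟶ A), IsCop ι → ∀ f : Z ⟶ A,
    ∃ (s : Finset J) (g : ∀ j, Z ⟶ X j), f = ∑ j ∈ s, g j ≫ ι j

lemma PresCop.comp {E : Type*} [Category* E] {F : C ⥤ D} {G : D ⥤ E} (hF : PresCop.{t} F)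
    (hG : PresCop.{t} G) : PresCop.{t} (F ⋙ G) :=
  fun J X A ι h => hG J _ _ _ (hF J X A ι h)

end Cop

section Tri

universe t v₁ u₁ v₂ u₂

variable {C : Type u₁} [Category.{v₁} C] [Preadditive C] [HasZeroObject C] [HasShift C ℤ]
  [∀ n : ℤ, (shiftFunctor C n).Additive] [Pretriangulated C]

lemma yoneda_exact₁ (T : Triangle C) (hT : T ∈ distTriang C) {X : C} (f : T.obj₁⟦(1 : ℤ)⟧ ⟶ X)
    (hf : T.mor₃ ≫ f = 0) : ∃ g : T.obj₂⟦(1 : ℤ)⟧ ⟶ X, f = T.mor₁⟦(1 : ℤ)⟧' ≫ g := by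
  obtain ⟨q, hq⟩ : ∃ q : T.obj₂⟦(1 : ℤ)⟧ ⟶ X, f = (-T.mor₁⟦(1 : ℤ)⟧') ≫ q :=
    Triangle.yoneda_exact₃ _ (rot_of_distTriang _ hT) f hf
  exact ⟨-q, by rw [hq, Preadditive.neg_comp, Preadditive.comp_neg]⟩

/-- the cone of a coproduct is the coproduct of the cones -/
lemma isCop_cone {J : Type t} (T : J → Triangle C) (hT : ∀ j, T j ∈ distTriang C)
    (S : Triangle C) (hS : S ∈ distTriang C) (φ : ∀ j, T j ⟶ S)
    (h₁ : IsCop (fun j => (φ j).hom₁)) (h₂ : IsCop (fun j => (φ j).hom₂)) :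
    IsCop (fun j => (φ j).hom₃) := by
  have h₁' := h₁.map_equiv (shiftFunctor C (1 : ℤ))
  have h₂' := h₂.map_equiv (shiftFunctor C (1 : ℤ))
  intro W u
  obtain ⟨x, hx⟩ := Triangle.yoneda_exact₂ S hS (h₂.desc (fun j => (T j).mor₂ ≫ u j)) (by
    apply h₁.hom_ext
    intro j
    rw [← reassoc_of% (φ j).comm₁, h₂.fac, comp_distTriang_mor_zero₁₂_assoc _ (hT j)]
    simp)
  have hv : ∀ j, ∃ v : (T j).obj₁⟦(1 : ℤ)⟧ ⟶ W, u j - (φ j).hom₃ ≫ x = (T j).mor₃ ≫ v := by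
    intro j
    refine Triangle.yoneda_exact₃ _ (hT j) _ ?_
    rw [Preadditive.comp_sub, reassoc_of% (φ j).comm₂, ← hx, h₂.fac, sub_self]
  choose v hv using hv
  refine ⟨x + S.mor₃ ≫ h₁'.desc v, fun j => ?_, fun y hy => ?_⟩
  · rw [Preadditive.comp_add, ← reassoc_of% (φ j).comm₃, h₁'.fac, ← hv]
    abel
  · -- uniqueness
    rw [← sub_eq_zero]
    set d := y - (x + S.mor₃ ≫ h₁'.desc v) with hd
    have hd0 : ∀ j, (φ j).hom₃ ≫ d = 0 := by
      intro j
      rw [hd, Preadditive.comp_sub, hy, Preadditive.comp_add, ← reassoc_of% (φ j).comm₃, h₁'.fac,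
        ← hv]
      abel
    obtain ⟨p, hp⟩ := Triangle.yoneda_exact₃ _ hS d (h₂.hom_ext fun j => by
      rw [← reassoc_of% (φ j).comm₂, hd0]; simp)
    have hq : ∀ j, ∃ q : (T j).obj₂⟦(1 : ℤ)⟧ ⟶ W,
        (φ j).hom₁⟦(1 : ℤ)⟧' ≫ p = (T j).mor₁⟦(1 : ℤ)⟧' ≫ q := by
      intro j
      exact yoneda_exact₁ _ (hT j) _ (by rw [reassoc_of% (φ j).comm₃, ← hp, hd0])
    choose q hq using hq
    have hpq : p = S.mor₁⟦(1 : ℤ)⟧' ≫ h₂'.desc q := by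
      apply h₁'.hom_ext
      intro j
      rw [hq, ← Functor.map_comp_assoc, ← (φ j).comm₁, Functor.map_comp_assoc, h₂'.fac]
    rw [hp, hpq, comp_distTriang_mor_zero₃₁_assoc _ hS, zero_comp]

end Tri

end TiltAux



namespace TiltAux

section Tri

universe t v₁ u₁ v₂ u₂

variable {C : Type u₁} [Category.{v₁} C] [Preadditive C] [HasZeroObject C] [HasShift C ℤ]
  [∀ n : ℤ, (shiftFunctor C n).Additive] [Pretriangulated C]

lemma trW_cop {E : ObjectProperty C} (hE : CopClosed.{t} E) {J : Type t} {X Y : J → C}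
    {A B : C} {ι : ∀ j, X j ⟶ A} {κ : ∀ j, Y j ⟶ B} (hι : IsCop ι) (hκ : IsCop κ)
    (f : ∀ j, X j ⟶ Y j) (hf : ∀ j, E.trW (f j)) (φ : A ⟶ B) (hφ : ∀ j, ι j ≫ φ = f j ≫ κ j) :
    E.trW φ := by
  choose Z g h hd hZ using hf
  obtain ⟨Z', g', h', hd'⟩ := distinguished_cocone_triangle φ
  have hc : ∀ j, ∃ c : Triangle.mk (f j) (g j) (h j) ⟶ Triangle.mk φ g' h',
      c.hom₁ = ι j ∧ c.hom₂ = κ j := by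
    intro j
    obtain ⟨c, hc⟩ := complete_distinguished_triangle_morphism _ _ (hd j) hd' (ι j) (κ j)
      (hφ j).symm
    exact ⟨⟨ι j, κ j, c, (hφ j).symm, hc.1, hc.2⟩, rfl, rfl⟩
  choose c hc₁ hc₂ using hc
  have := isCop_cone _ hd _ hd' c
    (by have h : (fun j => (c j).hom₁) = ι := funext hc₁; exact h ▸ hι)
    (by have h : (fun j => (c j).hom₂) = κ := funext hc₂; exact h ▸ hκ)
  exact ⟨Z', g', h', hd', hE J _ _ _ this hZ⟩

lemma trW_of_comp [IsTriangulated C] {E : ObjectProperty C} [E.IsTriangulated]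
    [E.IsClosedUnderIsomorphisms] {X Y Z : C} (f : X ⟶ Y) (g : Y ⟶ Z) (hg : E.trW g)
    (hfg : E.trW (f ≫ g)) : E.trW f := by
  obtain ⟨Z₂₃, _, _, h₂₃, hZ₂₃⟩ := hg
  obtain ⟨Z₁₃, _, _, h₁₃, hZ₁₃⟩ := hfg
  obtain ⟨Z₁₂, a, b, h₁₂⟩ := distinguished_cocone_triangle f
  have o := Triangulated.someOctahedron rfl h₁₂ h₂₃ h₁₃
  exact ⟨Z₁₂, a, b, h₁₂, E.ext_of_isTriangulatedClosed₁ _ o.mem hZ₁₃ hZ₂₃⟩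

/-- cell attachment -/
lemma exists_next (hC : HasCop.{t} C) (T : C) (hsmall : ∀ (X : C) (n : ℤ), Small.{t} (T ⟶ X⟦n⟧))
    {E : ObjectProperty C} [E.IsTriangulated]
    [E.IsClosedUnderIsomorphisms] (hE : CopClosed.{t} E) (hT : E T) (Y : C) :
    ∃ (Y' : C) (y : Y ⟶ Y'), E.trW y ∧ ∀ (n : ℤ) (f : T ⟶ Y⟦n⟧), f ≫ y⟦n⟧' = 0 := by
  have := hsmall Y
  let J := Shrink.{t} (Σ n : ℤ, T ⟶ Y⟦n⟧)
  let e : (Σ n : ℤ, T ⟶ Y⟦n⟧) ≃ J := equivShrink _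
  let X : J → C := fun j => T⟦-(e.symm j).1⟧
  let x : ∀ j, X j ⟶ Y := fun j => (e.symm j).2⟦-(e.symm j).1⟧' ≫ (shiftShiftNeg Y (e.symm j).1).hom
  obtain ⟨A, ι, hι⟩ := hC J X
  obtain ⟨Y', y, z, hd⟩ := distinguished_cocone_triangle (hι.desc x)
  refine ⟨Y', y, ObjectProperty.trW.mk' E hd
    (hE _ _ _ _ hι (fun j => E.le_shift _ _ hT)), fun n f => ?_⟩
  apply (shiftFunctor C (-n)).map_injective
  obtain ⟨j, hj⟩ := e.symm.surjective ⟨n, f⟩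
  have h1 : x j ≫ y = 0 := by
    rw [← hι.fac x j, assoc]
    have : hι.desc x ≫ y = 0 := comp_distTriang_mor_zero₁₂ _ hd
    rw [this, comp_zero]
  have h2 : ∀ (p : Σ n : ℤ, T ⟶ Y⟦n⟧), (p.2⟦-p.1⟧' ≫ (shiftShiftNeg Y p.1).hom) ≫ y = 0 →
      (shiftFunctor C (-p.1)).map (p.2 ≫ y⟦p.1⟧') = 0 := by
    intro p hp
    rw [← cancel_mono (shiftShiftNeg Y' p.1).hom]
    rw [Functor.map_comp, assoc, zero_comp]
    rw [assoc] at hp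
    rw [← hp]
    congr 1
    exact (shiftEquiv C p.1).unitIso.inv.naturality y
  have h3 := h2 (e.symm j) h1
  rw [hj] at h3
  simpa using h3

/-- If `A` is a coproduct of copies of `X` indexed by the naturals then the cone of `1 - shift`
is isomorphic to `X`. -/
lemma exists_iso_cone {X A : C} {ι : ULift.{t} ℕ → (X ⟶ A)} (hι : IsCop ι)
    (s : A ⟶ A) (hs : ∀ n : ℕ, ι ⟨n⟩ ≫ s = ι ⟨n + 1⟩)
    {Z : C} (g : A ⟶ Z) (h : Z ⟶ A⟦(1 : ℤ)⟧) (hd : Triangle.mk (𝟙 A - s) g h ∈ distTriang C) :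
    Nonempty (Z ≅ X) := by
  let σ : A ⟶ X := hι.desc (fun _ => 𝟙 X)
  let r : A ⟶ A := hι.desc (fun n => -∑ i ∈ Finset.range n.down, ι ⟨i⟩)
  have hr : (𝟙 A - s) ≫ r = 𝟙 A := by
    apply hι.hom_ext
    rintro ⟨n⟩
    simp only [Preadditive.sub_comp, Preadditive.comp_sub, id_comp, comp_id]
    rw [reassoc_of% (hs n)]
    simp only [r, hι.fac, Finset.sum_range_succ]
    abel
  have hr' : r ≫ (𝟙 A - s) = 𝟙 A - σ ≫ ι ⟨0⟩ := by
    apply hι.hom_ext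
    rintro ⟨n⟩
    simp only [σ, r, hι.fac_assoc, hι.fac, Preadditive.comp_sub, comp_id, id_comp, Preadditive.neg_comp,
      Preadditive.sum_comp, hs]
    induction n with
    | zero => simp
    | succ n ih =>
      rw [Finset.sum_range_succ, Finset.sum_range_succ]
      calc _ = (-∑ x ∈ Finset.range n, ι ⟨x⟩ - -∑ x ∈ Finset.range n, ι ⟨x + 1⟩) -
          ι ⟨n⟩ + ι ⟨n+1⟩ := by abel
        _ = _ := by rw [ih]; abel
  have hfg : (𝟙 A - s) ≫ g = 0 := comp_distTriang_mor_zero₁₂ _ hd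
  have hg : h = 0 := by
    have : h ≫ (𝟙 A - s)⟦(1 : ℤ)⟧' = 0 := comp_distTriang_mor_zero₃₁ _ hd
    have h2 := this =≫ r⟦(1 : ℤ)⟧'
    rw [assoc, ← Functor.map_comp, hr] at h2
    simpa using h2
  have : Epi g := (Triangle.mor₃_eq_zero_iff_epi₂ _ hd).1 hg
  have hσ : (𝟙 A - s) ≫ σ = 0 := by
    apply hι.hom_ext
    rintro ⟨n⟩
    simp only [Preadditive.sub_comp, Preadditive.comp_sub, id_comp, comp_id]
    rw [reassoc_of% (hs n)]
    simp [σ]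
  obtain ⟨τ, hτ⟩ : ∃ τ, σ = g ≫ τ := Triangle.yoneda_exact₂ _ hd σ hσ
  refine ⟨⟨τ, ι ⟨0⟩ ≫ g, ?_, ?_⟩⟩
  · rw [← cancel_epi g, ← assoc, ← hτ, comp_id, ← assoc]
    have : σ ≫ ι ⟨0⟩ = 𝟙 A - r ≫ (𝟙 A - s) := by rw [hr']; abel
    rw [this, Preadditive.sub_comp, assoc, hfg]
    simp
  · rw [assoc, ← hτ]
    simp [σ]

lemma eq_zero_shift_add {T A B : C} (s : A ⟶ B) (h : ∀ (n : ℤ) (f : T ⟶ A⟦n⟧), f ≫ s⟦n⟧' = 0)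
    (m n : ℤ) (f : T ⟶ A⟦m⟧⟦n⟧) : f ≫ s⟦m⟧'⟦n⟧' = 0 := by
  have := h (m + n) (f ≫ (shiftFunctorAdd C m n).inv.app A)
  rw [assoc, ← (shiftFunctorAdd C m n).inv.naturality, ← assoc] at this
  rw [← cancel_mono ((shiftFunctorAdd C m n).inv.app B), zero_comp]
  exact this

lemma isIso_one_sub {T A : C} (gen : ∀ X : C, (∀ (n : ℤ) (f : T ⟶ X⟦n⟧), f = 0) → IsZero X)
    (s : A ⟶ A) (h : ∀ (n : ℤ) (f : T ⟶ A⟦n⟧), f ≫ s⟦n⟧' = 0) : IsIso (𝟙 A - s) := by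
  obtain ⟨Z, g, k, hd⟩ := distinguished_cocone_triangle (𝟙 A - s)
  have hfg : (𝟙 A - s) ≫ g = 0 := comp_distTriang_mor_zero₁₂ _ hd
  refine (Triangle.isZero₃_iff_isIso₁ _ hd).1 (gen Z fun n u => ?_)
  have hd' := Triangle.shift_distinguished _ hd n
  have h1 : (u ≫ k⟦n⟧') ≫ (𝟙 A - s)⟦(1 : ℤ)⟧'⟦n⟧' = 0 := by
    rw [assoc, ← Functor.map_comp]
    have : k ≫ (𝟙 A - s)⟦(1 : ℤ)⟧' = 0 := comp_distTriang_mor_zero₃₁ _ hd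
    rw [this]
    simp
  have h2 : u ≫ k⟦n⟧' = 0 := by
    rw [Functor.map_sub, Functor.map_sub, Preadditive.comp_sub, eq_zero_shift_add s h] at h1
    simpa using h1
  have h3 : u ≫ (n.negOnePow • (k⟦n⟧' ≫ (shiftFunctorComm C (1 : ℤ) n).hom.app A)) = 0 := by
    rw [Linear.comp_units_smul, reassoc_of% h2]
    simp
  obtain ⟨a, ha⟩ : ∃ a : T ⟶ A⟦n⟧, u = a ≫ (n.negOnePow • g⟦n⟧') :=
    Triangle.coyoneda_exact₃ _ hd' u h3
  have h4 : a = a ≫ (𝟙 A - s)⟦n⟧' := by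
    rw [Functor.map_sub, Preadditive.comp_sub, h]
    simp
  rw [ha, h4, assoc]
  have : (𝟙 A - s)⟦n⟧' ≫ (n.negOnePow • g⟦n⟧') = 0 := by
    rw [Linear.comp_units_smul, ← Functor.map_comp, hfg]
    simp
  rw [this, comp_zero]

theorem loc_eq_top [IsTriangulated C] (hC : HasCop.{t} C) (T : C)
    (hsmall : ∀ (X : C) (n : ℤ), Small.{t} (T ⟶ X⟦n⟧)) (hcpt : Cpt.{t} T)
    (gen : ∀ X : C, (∀ (n : ℤ) (f : T ⟶ X⟦n⟧), f = 0) → IsZero X)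
    (E : ObjectProperty C) [E.IsTriangulated]
    [E.IsClosedUnderIsomorphisms] (hE : CopClosed.{t} E) (hT : E T) (X : C) : E X := by
  choose N y hy hk using exists_next hC T hsmall hE hT
  let Y : ℕ → C := fun n => Nat.rec X (fun _ Z => N Z) n
  let q : ∀ n, Y n ⟶ Y (n + 1) := fun n => y (Y n)
  let φ : ∀ n, X ⟶ Y n := fun n => Nat.rec (𝟙 X) (fun n f => f ≫ q n) n
  have hφ : ∀ n, E.trW (φ n) := by
    intro n
    induction n with
    | zero => exact ObjectProperty.trW_of_isIso E (𝟙 X)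
    | succ n ih => exact E.trW.comp_mem _ _ ih (hy _)
  obtain ⟨A, ι, hι⟩ := hC (ULift.{t} ℕ) (fun _ => X)
  obtain ⟨B, κ, hκ⟩ := hC (ULift.{t} ℕ) (fun n => Y n.down)
  let s : A ⟶ A := hι.desc (fun n => ι ⟨n.down + 1⟩)
  let s' : B ⟶ B := hκ.desc (fun n => q n.down ≫ κ ⟨n.down + 1⟩)
  let Φ : A ⟶ B := hι.desc (fun n => φ n.down ≫ κ n)
  have hΦ : E.trW Φ := trW_cop hE hι hκ (fun n => φ n.down) (fun n => hφ _) Φ (by simp [Φ])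
  have hs' : IsIso (𝟙 B - s') := by
    apply isIso_one_sub gen
    intro n f
    obtain ⟨F, g, rfl⟩ := hcpt _ _ _ _ (hκ.map_equiv (shiftFunctor C n)) f
    rw [Preadditive.sum_comp]
    refine Finset.sum_eq_zero fun j _ => ?_
    rw [assoc, ← Functor.map_comp]
    simp only [s', hκ.fac]
    rw [Functor.map_comp, reassoc_of% (hk (Y j.down) n (g j))]
    simp
  have comm : (𝟙 A - s) ≫ Φ = Φ ≫ (𝟙 B - s') := by
    apply hι.hom_ext
    intro n
    simp only [Preadditive.sub_comp, Preadditive.comp_sub, id_comp, comp_id, s, Φ, hι.fac_assoc,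
      hι.fac, assoc, s', hκ.fac]
    congr 1
    change (φ n.down ≫ q n.down) ≫ _ = _
    rw [assoc]
  have h1 : E.trW (𝟙 A - s) := by
    apply trW_of_comp _ Φ hΦ
    rw [comm]
    exact E.trW.comp_mem _ _ hΦ (ObjectProperty.trW_of_isIso E _)
  obtain ⟨Z, g, h, hd, hZ⟩ := h1
  obtain ⟨e⟩ := exists_iso_cone hι s (by simp [s]) g h hd
  exact E.prop_of_iso e hZ

end Tri

end TiltAux



namespace TiltAux

section FF

universe t v₁ u₁ v₂ u₂

variable {C : Type u₁} [Category.{v₁} C] [Preadditive C] [HasZeroObject C] [HasShift C ℤ]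
  [∀ n : ℤ, (shiftFunctor C n).Additive] [Pretriangulated C]
  {D : Type u₂} [Category.{v₂} D] [Preadditive D] [HasZeroObject D] [HasShift D ℤ]
  [∀ n : ℤ, (shiftFunctor D n).Additive] [Pretriangulated D]

lemma isTri_mk (P : ObjectProperty C) [P.IsClosedUnderIsomorphisms] (h0 : ∀ X, IsZero X → P X)
    (hs : ∀ (X : C) (n : ℤ), P X → P (X⟦n⟧))
    (h2 : ∀ T : Triangle C, T ∈ distTriang C → P T.obj₁ → P T.obj₃ → P T.obj₂) :
    P.IsTriangulated where
  exists_zero := ⟨_, isZero_zero C, h0 _ (isZero_zero _)⟩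
  isStableUnderShiftBy n := ⟨fun X hX => hs X n hX⟩
  toIsTriangulatedClosed₂ := .mk' h2

/-- The localizing subcategory generated by an object. -/
def Loc (Z : C) : ObjectProperty C := fun X =>
  ∀ (Q : ObjectProperty C) (_ : Q.IsClosedUnderIsomorphisms) (_ : Q.IsTriangulated)
    (_ : CopClosed.{t} Q), Q Z → Q X

instance (Z : C) : (Loc.{t} Z).IsClosedUnderIsomorphisms where
  of_iso e h Q h1 h2 h3 h4 := Q.prop_of_iso e (h Q h1 h2 h3 h4)

instance (Z : C) : (Loc.{t} Z).IsTriangulated := by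
  refine isTri_mk _ ?_ ?_ ?_
  · intro X hX Q h1 h2 h3 h4
    exact Q.prop_of_isZero hX
  · intro X n hX Q h1 h2 h3 h4
    exact Q.le_shift n _ (hX Q h1 h2 h3 h4)
  · intro T hT h h' Q h1 h2 h3 h4
    exact Q.ext_of_isTriangulatedClosed₂ T hT (h Q h1 h2 h3 h4) (h' Q h1 h2 h3 h4)

lemma loc_copClosed (Z : C) : CopClosed.{t} (Loc.{t} Z) :=
  fun J X A ι h hX Q h1 h2 h3 h4 => h3 J X A ι h fun j => hX j Q h1 h2 h3 h4

lemma loc_self (Z : C) : Loc.{t} Z Z := fun _ _ _ _ h => h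

/-- `F` is bijective on morphisms from `X` to `Y`. -/
def FB (F : C ⥤ D) (X Y : C) : Prop := Function.Bijective (F.map : (X ⟶ Y) → _)

omit [Preadditive C] [HasZeroObject C] [HasShift C ℤ]
  [∀ n : ℤ, (shiftFunctor C n).Additive] [Pretriangulated C]
  [Preadditive D] [HasZeroObject D] [HasShift D ℤ]
  [∀ n : ℤ, (shiftFunctor D n).Additive] [Pretriangulated D] in
lemma FB.of_iso {F : C ⥤ D} {X Y X' Y' : C} (h : FB F X Y) (e : X ≅ X') (e' : Y ≅ Y') :
    FB F X' Y' := by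
  constructor
  · intro f g hfg
    have : e.hom ≫ f ≫ e'.inv = e.hom ≫ g ≫ e'.inv := by
      apply h.1
      simp [hfg]
    simpa using this
  · intro f
    obtain ⟨g, hg⟩ := h.2 (F.map e.hom ≫ f ≫ F.map e'.inv)
    refine ⟨e.inv ≫ g ≫ e'.hom, ?_⟩
    simp only [Functor.map_comp, hg, assoc]
    simp [← Functor.map_comp, ← Functor.map_comp_assoc]

variable {F : C ⥤ D} [F.CommShift ℤ] [F.IsTriangulated]

omit [Preadditive C] [HasZeroObject C]
  [∀ n : ℤ, (shiftFunctor C n).Additive] [Pretriangulated C]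
  [Preadditive D] [HasZeroObject D]
  [∀ n : ℤ, (shiftFunctor D n).Additive] [Pretriangulated D] [F.IsTriangulated] in
lemma FB.shift {X Y : C} (h : FB F X Y) (n : ℤ) : FB F (X⟦n⟧) (Y⟦n⟧) := by
  have key : ∀ f : X ⟶ Y, F.map (f⟦n⟧') = (F.commShiftIso n).hom.app X ≫ (F.map f)⟦n⟧' ≫
      (F.commShiftIso n).inv.app Y := by
    intro f
    have := (F.commShiftIso n).hom.naturality f
    dsimp at this
    rw [← reassoc_of% this]
    simp
  constructor
  · intro f g hfg
    obtain ⟨f, rfl⟩ := (shiftFunctor C n).map_surjective f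
    obtain ⟨g, rfl⟩ := (shiftFunctor C n).map_surjective g
    rw [key, key] at hfg
    have h1 : (F.map f)⟦n⟧' = (F.map g)⟦n⟧' := by
      rwa [cancel_epi, cancel_mono] at hfg
    rw [h.1 ((shiftFunctor D n).map_injective h1)]
  · intro f
    obtain ⟨g, hg⟩ := (shiftFunctor D n).map_surjective
      ((F.commShiftIso n).inv.app X ≫ f ≫ (F.commShiftIso n).hom.app Y)
    obtain ⟨g', rfl⟩ := h.2 g
    exact ⟨g'⟦n⟧', by rw [key, hg]; simp⟩

omit [Preadditive C] [HasZeroObject C]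
  [∀ n : ℤ, (shiftFunctor C n).Additive] [Pretriangulated C]
  [Preadditive D] [HasZeroObject D]
  [∀ n : ℤ, (shiftFunctor D n).Additive] [Pretriangulated D] [F.IsTriangulated] in
lemma FB.shift' {X Y : C} (n : ℤ) (h : FB F X (Y⟦-n⟧)) : FB F (X⟦n⟧) Y :=
  (h.shift n).of_iso (Iso.refl _) (shiftNegShift _ _)

lemma FB.five {Z : C} {T : Triangle C} (hT : T ∈ distTriang C)
    (h1 : FB F Z T.obj₁) (h3 : FB F Z T.obj₃) (h0 : FB F Z (T.obj₃⟦(-1 : ℤ)⟧))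
    (h4 : FB F Z (T.obj₁⟦(1 : ℤ)⟧)) : FB F Z T.obj₂ := by
  obtain ⟨δ, ε, hT', hδ⟩ : ∃ (δ : T.obj₃⟦(-1 : ℤ)⟧ ⟶ T.obj₁) (ε : _),
      Triangle.mk δ T.mor₁ ε ∈ distTriang C ∧ δ ≫ T.mor₁ = 0 :=
    ⟨T.invRotate.mor₁, T.invRotate.mor₃, inv_rot_of_distTriang _ hT,
      comp_distTriang_mor_zero₁₂ _ (inv_rot_of_distTriang _ hT)⟩
  constructor
  · refine (injective_iff_map_eq_zero (F.mapAddHom (X := Z) (Y := T.obj₂))).2 ?_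
    intro f hf
    replace hf : F.map f = 0 := hf
    obtain ⟨a, rfl⟩ : ∃ a, f = a ≫ T.mor₁ := Triangle.coyoneda_exact₂ T hT f (h3.1 (by simp [hf]))
    obtain ⟨c, hc⟩ : ∃ c : F.obj Z ⟶ F.obj (T.obj₃⟦(-1 : ℤ)⟧), F.map a = c ≫ F.map δ :=
      Triangle.coyoneda_exact₂ _ (F.map_distinguished _ hT') (F.map a)
        (by rw [Functor.map_comp] at hf; exact hf)
    obtain ⟨c', rfl⟩ := h0.2 c
    have h5 : a = c' ≫ δ := h1.1 (by rw [hc, Functor.map_comp])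
    rw [h5, assoc, hδ, comp_zero]
  · intro g
    obtain ⟨b, hb⟩ := h3.2 (g ≫ F.map T.mor₂)
    obtain ⟨f, rfl⟩ : ∃ f, b = f ≫ T.mor₂ := Triangle.coyoneda_exact₃ T hT b (h4.1 (by
      rw [Functor.map_comp, hb, assoc, ← Functor.map_comp, comp_distTriang_mor_zero₂₃ _ hT]
      simp))
    obtain ⟨a, ha⟩ : ∃ a : F.obj Z ⟶ F.obj T.obj₁, g - F.map f = a ≫ F.map T.mor₁ :=
      Triangle.coyoneda_exact₂ _ (F.map_distinguished _ hT) (g - F.map f) (by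
        have : (g - F.map f) ≫ F.map T.mor₂ = 0 := by
          rw [Preadditive.sub_comp, ← hb, Functor.map_comp, sub_self]
        exact this)
    obtain ⟨a, rfl⟩ := h1.2 a
    exact ⟨f + a ≫ T.mor₁, by rw [Functor.map_add, Functor.map_comp, ← ha]; abel⟩

lemma FB.five' {Z : C} {T : Triangle C} (hT : T ∈ distTriang C)
    (h1 : FB F T.obj₁ Z) (h3 : FB F T.obj₃ Z) (h0 : FB F (T.obj₃⟦(-1 : ℤ)⟧) Z)
    (h4 : FB F (T.obj₁⟦(1 : ℤ)⟧) Z) : FB F T.obj₂ Z := by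
  obtain ⟨δ, ε, hT', hδ⟩ : ∃ (δ : T.obj₃⟦(-1 : ℤ)⟧ ⟶ T.obj₁) (ε : _),
      Triangle.mk δ T.mor₁ ε ∈ distTriang C ∧ δ ≫ T.mor₁ = 0 :=
    ⟨T.invRotate.mor₁, T.invRotate.mor₃, inv_rot_of_distTriang _ hT,
      comp_distTriang_mor_zero₁₂ _ (inv_rot_of_distTriang _ hT)⟩
  have hR := rot_of_distTriang _ hT
  constructor
  · refine (injective_iff_map_eq_zero (F.mapAddHom (X := T.obj₂) (Y := Z))).2 ?_
    intro f hf
    replace hf : F.map f = 0 := hf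
    obtain ⟨a, rfl⟩ : ∃ a, f = T.mor₂ ≫ a := Triangle.yoneda_exact₂ T hT f (h1.1 (by simp [hf]))
    obtain ⟨c, hc⟩ : ∃ c : F.obj (T.obj₁⟦(1 : ℤ)⟧) ⟶ F.obj Z, F.map a = F.map T.mor₃ ≫ c :=
      Triangle.yoneda_exact₂ _ (F.map_distinguished _ hR) (F.map a)
        (by rw [Functor.map_comp] at hf; exact hf)
    obtain ⟨c', rfl⟩ := h4.2 c
    have h5 : a = T.mor₃ ≫ c' := h3.1 (by rw [hc, Functor.map_comp])
    rw [h5, ← assoc, comp_distTriang_mor_zero₂₃ _ hT, zero_comp]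
  · intro g
    obtain ⟨b, hb⟩ := h1.2 (F.map T.mor₁ ≫ g)
    have hb0 : δ ≫ b = 0 := h0.1 (by
      rw [Functor.map_comp, hb, ← Functor.map_comp_assoc, hδ]
      simp)
    obtain ⟨f, rfl⟩ : ∃ f, b = T.mor₁ ≫ f := Triangle.yoneda_exact₂ _ hT' b hb0
    obtain ⟨a, ha⟩ : ∃ a : F.obj T.obj₃ ⟶ F.obj Z, g - F.map f = F.map T.mor₂ ≫ a :=
      Triangle.yoneda_exact₂ _ (F.map_distinguished _ hT) (g - F.map f) (by
        have : F.map T.mor₁ ≫ (g - F.map f) = 0 := by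
          rw [Preadditive.comp_sub, ← hb, Functor.map_comp, sub_self]
        exact this)
    obtain ⟨a, rfl⟩ := h3.2 a
    exact ⟨f + T.mor₂ ≫ a, by rw [Functor.map_add, Functor.map_comp, ← ha]; abel⟩

omit [HasZeroObject C] [HasShift C ℤ]
  [∀ n : ℤ, (shiftFunctor C n).Additive] [Pretriangulated C] in
lemma eq_zero_of_proj {J : Type t} {X : J → C} {A Z : C} {ι : ∀ j, X j ⟶ A} (h : IsCop ι)
    (s : Finset J) (g : ∀ j, Z ⟶ X j) (h0 : ∀ j, (∑ j ∈ s, g j ≫ ι j) ≫ h.proj j = 0) :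
    ∑ j ∈ s, g j ≫ ι j = 0 := by
  refine Finset.sum_eq_zero fun j hj => ?_
  have := h0 j
  rw [Preadditive.sum_comp, Finset.sum_eq_single_of_mem j hj] at this
  · simp only [assoc, IsCop.ι_proj, comp_id] at this
    rw [this, zero_comp]
  · intro b _ hb
    rw [assoc, h.ι_proj_ne hb, comp_zero]

theorem loc_ff (hF : PresCop.{t} F) {Z : C} (hZ : Cpt.{t} Z) (hFZ : Cpt.{t} (F.obj Z))
    (h : ∀ n : ℤ, FB F Z (Z⟦n⟧)) {A B : C} (hA : Loc.{t} Z A) (hB : Loc.{t} Z B) : FB F A B := by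
  have step1 : ∀ n : ℤ, FB F Z (B⟦n⟧) := by
    let Q : ObjectProperty C := fun B => ∀ n : ℤ, FB F Z (B⟦n⟧)
    have i1 : Q.IsClosedUnderIsomorphisms := ⟨fun e h n =>
      (h n).of_iso (Iso.refl _) ((shiftFunctor C n).mapIso e)⟩
    have hs : ∀ (X : C) (n : ℤ), Q X → Q (X⟦n⟧) := fun X m hX n =>
      (hX (m + n)).of_iso (Iso.refl _) ((shiftFunctorAdd C m n).app X)
    refine hB Q i1 (isTri_mk Q ?_ hs ?_) ?_ h
    · intro X hX n
      have h1 : IsZero (X⟦n⟧) := (shiftFunctor C n).map_isZero hX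
      exact ⟨fun _ _ _ => h1.eq_of_tgt _ _, fun f => ⟨0, (F.map_isZero h1).eq_of_tgt _ _⟩⟩
    · intro T hT h1 h3 n
      exact FB.five (Triangle.shift_distinguished _ hT n) (h1 n) (h3 n) (hs _ n h3 (-1)) (hs _ n h1 1)
    · intro J X A ι hι hX n
      have hι' := hι.map_equiv (shiftFunctor C n)
      have hFι' := hF _ _ _ _ hι'
      constructor
      · refine (injective_iff_map_eq_zero (F.mapAddHom (X := Z) (Y := A⟦n⟧))).2 ?_
        intro f hf
        replace hf : F.map f = 0 := hf
        obtain ⟨s, g, rfl⟩ := hZ _ _ _ _ hι' f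
        refine eq_zero_of_proj hι' s g fun j => (hX j n).1 ?_
        rw [Functor.map_comp, hf]
        simp
      · intro f
        obtain ⟨s, g, rfl⟩ := hFZ _ _ _ _ hFι' f
        choose g' hg' using fun j => (hX j n).2 (g j)
        exact ⟨∑ j ∈ s, g' j ≫ (ι j)⟦n⟧', by simp [hg']⟩
  let Q : ObjectProperty C := fun A => ∀ n : ℤ, FB F (A⟦n⟧) B
  have i1 : Q.IsClosedUnderIsomorphisms := ⟨fun e h n =>
      (h n).of_iso ((shiftFunctor C n).mapIso e) (Iso.refl _)⟩
  have hs : ∀ (X : C) (n : ℤ), Q X → Q (X⟦n⟧) := fun X m hX n =>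
      (hX (m + n)).of_iso ((shiftFunctorAdd C m n).app X) (Iso.refl _)
  suffices Q A from (this 0).of_iso ((shiftFunctorZero C ℤ).app A) (Iso.refl _)
  refine hA Q i1 (isTri_mk Q ?_ hs ?_) ?_ (fun n => FB.shift' n (step1 _))
  · intro X hX n
    have h1 : IsZero (X⟦n⟧) := (shiftFunctor C n).map_isZero hX
    exact ⟨fun _ _ _ => h1.eq_of_src _ _, fun f => ⟨0, (F.map_isZero h1).eq_of_src _ _⟩⟩
  · intro T hT h1 h3 n
    exact FB.five' (Triangle.shift_distinguished _ hT n) (h1 n) (h3 n) (hs _ n h3 (-1)) (hs _ n h1 1)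
  · intro J X A ι hι hX n
    have hι' := hι.map_equiv (shiftFunctor C n)
    have hFι' := hF _ _ _ _ hι'
    constructor
    · intro f g hfg
      refine hι'.hom_ext fun j => (hX j n).1 ?_
      simp [hfg]
    · intro f
      choose g hg using fun j => (hX j n).2 (F.map ((ι j)⟦n⟧') ≫ f)
      refine ⟨hι'.desc g, hFι'.hom_ext fun j => ?_⟩
      rw [← Functor.map_comp, hι'.fac, hg]

theorem loc_equiv [IsTriangulated C] [IsTriangulated D] (hF : PresCop.{t} F) {Z : C} (hZ : Cpt.{t} Z)
    (hFZ : Cpt.{t} (F.obj Z))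
    (h : ∀ n : ℤ, FB F Z (Z⟦n⟧)) (hC : HasCop.{t} C) (hD : HasCop.{t} D)
    (hsmall : ∀ (X : D) (n : ℤ), Small.{t} (F.obj Z ⟶ X⟦n⟧))
    (gen : ∀ X : D, (∀ (n : ℤ) (f : F.obj Z ⟶ X⟦n⟧), f = 0) → IsZero X) :
    ((Loc.{t} Z).ι ⋙ F).IsEquivalence := by
  have ff := fun {A B : C} hA hB => loc_ff (A := A) (B := B) hF hZ hFZ h hA hB
  have h1 : ((Loc.{t} Z).ι ⋙ F).Faithful := ⟨fun {X Y f g} hfg =>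
    (Loc.{t} Z).ι.map_injective ((ff X.2 Y.2).1 hfg)⟩
  have h2 : ((Loc.{t} Z).ι ⋙ F).Full := ⟨fun {X Y} f => by
    obtain ⟨g, hg⟩ := (ff X.2 Y.2).2 f
    obtain ⟨g, rfl⟩ := (Loc.{t} Z).ι.map_surjective g
    exact ⟨g, hg⟩⟩
  have h3 : ((Loc.{t} Z).ι ⋙ F).EssSurj := by
    refine ⟨fun X => ?_⟩
    refine loc_eq_top hD (F.obj Z) hsmall hFZ gen ((Loc.{t} Z).ι ⋙ F).essImage ?_
      ⟨⟨Z, loc_self Z⟩, ⟨Iso.refl _⟩⟩ X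
    intro J X A ι hι hX
    choose Y e using hX
    obtain ⟨B, κ, hκ⟩ := hC J (fun j => (Y j).obj)
    refine ⟨⟨B, loc_copClosed Z _ _ _ _ hκ fun j => (Y j).2⟩, ⟨?_⟩⟩
    exact ((hF _ _ _ _ hκ).iso (hι.precomp_iso fun j => (e j).some))
  exact {}

end FF

end TiltAux



namespace TiltAux

section B1

universe t v₁ u₁ v₂ u₂

variable {C : Type u₁} [Category.{v₁} C] {D : Type u₂} [Category.{v₂} D]

noncomputable def IsCop.isColimit {J : Type t} {X : J → C} {A : C} {ι : ∀ j, X j ⟶ A} (h : IsCop ι) :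
    IsColimit (Cofan.mk A ι) :=
  Cofan.IsColimit.mk _ (fun t => h.desc t.inj) (by simp [Cofan.inj])
    (fun t m hm => h.hom_ext (by simpa [Cofan.inj] using hm))

lemma presCop_of_preserves (F : C ⥤ D) [∀ J : Type t, PreservesColimitsOfShape (Discrete J) F] :
    PresCop.{t} F := by
  intro J X A ι h
  have := IsCop.of_isColimit (isColimitCofanMkObjOfIsColimit F _ _ h.isColimit)
  exact this

lemma hasCop_of_hasCoproducts [HasCoproducts.{t} C] : HasCop.{t} C :=
  fun _ X => ⟨_, _, isCop_sigma X⟩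

/-- localization functors preserve coproducts -/
lemma presCop_of_localization (L : C ⥤ D) (W : MorphismProperty C) [L.IsLocalization W]
    [W.HasRightCalculusOfFractions] [W.HasLeftCalculusOfFractions] (hC : HasCop.{t} C)
    (hW : ∀ (J : Type t) (X Y : J → C) (A B : C) (ι : ∀ j, X j ⟶ A) (κ : ∀ j, Y j ⟶ B),
      IsCop ι → IsCop κ → ∀ (f : ∀ j, X j ⟶ Y j) (_ : ∀ j, W (f j)) (φ : A ⟶ B)
      (_ : ∀ j, ι j ≫ φ = f j ≫ κ j), W φ) : PresCop.{t} L := by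
  have hinv := Localization.inverts L W
  intro J X A ι h
  -- uniqueness
  have uniq : ∀ (V : D) (f g : L.obj A ⟶ V) (_ : ∀ j, L.map (ι j) ≫ f = L.map (ι j) ≫ g), f = g := by
    have aux : ∀ (V : C) (f g : A ⟶ V) (_ : ∀ j, L.map (ι j) ≫ L.map f = L.map (ι j) ≫ L.map g),
        L.map f = L.map g := by
      intro V f g hfg
      have h1 : ∀ j, ∃ (Z : C) (s : Z ⟶ X j), W s ∧ s ≫ ι j ≫ f = s ≫ ι j ≫ g := by
        intro j
        have := hfg j
        rw [← Functor.map_comp, ← Functor.map_comp] at this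
        obtain ⟨Z, s, hs, e⟩ := (MorphismProperty.map_eq_iff_precomp L W _ _).1 this
        exact ⟨Z, s, hs, e⟩
      choose Z s hs e using h1
      obtain ⟨B, κ, hκ⟩ := hC J Z
      have hφ : W (hκ.desc (fun j => s j ≫ ι j)) := hW J Z X B A κ ι hκ h s hs _ (by simp)
      refine (MorphismProperty.map_eq_iff_precomp L W _ _).2 ⟨B, _, hφ, hκ.hom_ext fun j => ?_⟩
      simp [e]
    intro V f g hfg
    obtain ⟨V', ⟨e⟩⟩ : ∃ V', Nonempty (L.obj V' ≅ V) := by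
      have := Localization.essSurj L W
      exact ⟨_, ⟨L.objObjPreimageIso V⟩⟩
    suffices f ≫ e.inv = g ≫ e.inv by simpa using this
    obtain ⟨φ, h1, h2⟩ := Localization.exists_leftFraction₂ L W (f ≫ e.inv) (g ≫ e.inv)
    have : IsIso (L.map φ.s) := hinv _ φ.hs
    have h1' : (f ≫ e.inv) ≫ L.map φ.s = L.map φ.f := by
      rw [h1]; exact φ.fst.map_comp_map_s L hinv
    have h2' : (g ≫ e.inv) ≫ L.map φ.s = L.map φ.f' := by
      rw [h2]; exact φ.snd.map_comp_map_s L hinv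
    rw [← cancel_mono (L.map φ.s), h1', h2']
    apply aux
    intro j
    rw [← h1', ← h2']
    simp [reassoc_of% (hfg j)]
  intro V f
  obtain ⟨V', ⟨e⟩⟩ : ∃ V', Nonempty (L.obj V' ≅ V) := by
    have := Localization.essSurj L W
    exact ⟨_, ⟨L.objObjPreimageIso V⟩⟩
  have h1 : ∀ j, ∃ (Z : C) (s : Z ⟶ X j) (g : Z ⟶ V'), W s ∧ L.map s ≫ f j = L.map g ≫ e.hom := by
    intro j
    obtain ⟨φ, hφ⟩ := Localization.exists_rightFraction L W (f j ≫ e.inv)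
    refine ⟨_, φ.s, φ.f, φ.hs, ?_⟩
    rw [← cancel_mono e.inv, assoc, hφ]
    simp
  choose Z s g hs hg using h1
  obtain ⟨B, κ, hκ⟩ := hC J Z
  let φ := hκ.desc (fun j => s j ≫ ι j)
  have hφ : W φ := hW J Z X B A κ ι hκ h s hs _ (by simp [φ])
  have i1 : IsIso (L.map φ) := hinv _ hφ
  have key : ∀ j, L.map (ι j) ≫ inv (L.map φ) ≫ L.map (hκ.desc g) ≫ e.hom = f j := by
    intro j
    have i2 : IsIso (L.map (s j)) := hinv _ (hs j)
    have h2 : s j ≫ ι j = κ j ≫ φ := (hκ.fac (fun j => s j ≫ ι j) j).symm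
    rw [← cancel_epi (L.map (s j)), hg, ← Functor.map_comp_assoc, h2, Functor.map_comp_assoc,
      IsIso.hom_inv_id_assoc, ← Functor.map_comp_assoc, hκ.fac]
  exact ⟨_, key, fun y hy => uniq _ _ _ fun j => (hy j).trans (key j).symm⟩

lemma hasCop_of_essSurj (L : C ⥤ D) [L.EssSurj] (hL : PresCop.{t} L) (hC : HasCop.{t} C) :
    HasCop.{t} D := by
  intro J X
  obtain ⟨A, ι, hι⟩ := hC J (fun j => L.objPreimage (X j))
  exact ⟨_, _, (hL _ _ _ _ hι).precomp_iso (fun j => (L.objObjPreimageIso (X j)).symm)⟩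

end B1

section B2

universe t v₁ u₁ v₂ u₂

variable {C : Type u₁} [Category.{v₁} C] [Abelian C] [HasCoproducts.{t} C]

open HomologicalComplex

lemma ch_hasCop : HasCop.{t} (CochainComplex C ℤ) := hasCop_of_hasCoproducts

lemma ch_eval {J : Type t} {X : J → CochainComplex C ℤ} {A : CochainComplex C ℤ}
    {ι : ∀ j, X j ⟶ A} (h : IsCop ι) (n : ℤ) : IsCop (fun j => (ι j).f n) :=
  presCop_of_preserves (HomologicalComplex.eval C (ComplexShape.up ℤ) n) _ _ _ _ h

lemma quotient_presCop : PresCop.{t} (HomotopyCategory.quotient C (ComplexShape.up ℤ)) := by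
  intro J X A ι h
  have aux : ∀ (W : CochainComplex C ℤ) (u : A ⟶ W) (_ : ∀ j, Nonempty (Homotopy (ι j ≫ u) 0)),
      Nonempty (Homotopy u 0) := by
    intro W u H
    replace H := fun j => (H j).some
    refine ⟨{ hom := fun a b => (ch_eval h a).desc (fun j => (H j).hom a b), zero := ?_, comm := ?_ }⟩
    · intro a b hab
      refine (ch_eval h a).hom_ext fun j => ?_
      rw [comp_zero]
      exact ((ch_eval h a).fac _ j).trans ((H j).zero a b hab)
    · intro n
      refine (ch_eval h n).hom_ext fun j => ?_
      have h1 := (H j).comm n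
      rw [dNext_eq _ (show (ComplexShape.up ℤ).Rel n (n + 1) by simp),
        prevD_eq _ (show (ComplexShape.up ℤ).Rel (n - 1) n by simp)] at h1 ⊢
      simp only [HomologicalComplex.comp_f] at h1
      rw [h1]
      simp only [Preadditive.comp_add]
      rw [(ι j).comm_assoc]
      have e1 := (ch_eval h (n + 1)).fac (fun j => (H j).hom (n + 1) n) j
      have e2 := (ch_eval h n).fac_assoc (fun j => (H j).hom n (n - 1)) j (W.d (n - 1) n)
      rw [e1, e2]
      simp
  intro W f
  obtain ⟨W, rfl⟩ := HomotopyCategory.quotient_obj_surjective W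
  choose g hg using fun j => (HomotopyCategory.quotient C (ComplexShape.up ℤ)).map_surjective (f j)
  refine ⟨(HomotopyCategory.quotient C (ComplexShape.up ℤ)).map (h.desc g), fun j => ?_, fun y hy => ?_⟩
  · rw [← Functor.map_comp, h.fac, hg]
  · obtain ⟨y, rfl⟩ := (HomotopyCategory.quotient C (ComplexShape.up ℤ)).map_surjective y
    rw [← sub_eq_zero, ← Functor.map_sub]
    obtain ⟨H⟩ := aux W (y - h.desc g) (fun j => ⟨HomotopyCategory.homotopyOfEq _ _ (by
      rw [Preadditive.comp_sub, h.fac, Functor.map_sub, Functor.map_comp, hy, hg]; simp)⟩)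
    have := HomotopyCategory.eq_of_homotopy _ _ H
    rw [this]
    simp

lemma k_hasCop : HasCop.{t} (HomotopyCategory C (ComplexShape.up ℤ)) := by
  intro J X
  obtain ⟨A, ι, hι⟩ := ch_hasCop (C := C) J (fun j => (X j).as)
  exact ⟨_, _, quotient_presCop _ _ _ _ hι⟩

variable [AB4OfSize.{t} C]

lemma isCop_mono {J : Type t} {X Y : J → C} {A B : C} {ι : ∀ j, X j ⟶ A} {κ : ∀ j, Y j ⟶ B}
    (hι : IsCop ι) (hκ : IsCop κ) (f : ∀ j, X j ⟶ Y j) (hf : ∀ j, Mono (f j)) (φ : A ⟶ B)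
    (hφ : ∀ j, ι j ≫ φ = f j ≫ κ j) : Mono φ := by
  let F : Discrete.functor X ⟶ Discrete.functor Y := Discrete.natTrans (fun j => f j.as)
  have : ∀ j, Mono (F.app j) := fun j => hf j.as
  have : Mono F := NatTrans.mono_of_mono_app F
  exact colim.map_mono' F hι.isColimit hκ.isColimit φ (fun j => hφ j.as)

lemma isCop_exact {J : Type t} (S : J → ShortComplex C) (S' : ShortComplex C) (φ : ∀ j, S j ⟶ S')
    (h1 : IsCop (fun j => (φ j).τ₁)) (h2 : IsCop (fun j => (φ j).τ₂)) (h3 : IsCop (fun j => (φ j).τ₃))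
    (hS : ∀ j, (S j).Exact) : S'.Exact := by
  rw [ShortComplex.exact_iff_mono_cokernel_desc]
  have hm := fun j => ((S j).exact_iff_mono_cokernel_desc).1 (hS j)
  let ψ : ∀ j, cokernel (S j).f ⟶ cokernel S'.f := fun j =>
    cokernel.map _ _ (φ j).τ₁ (φ j).τ₂ (φ j).comm₁₂.symm
  have hψ : IsCop ψ := by
    intro W f
    refine ⟨cokernel.desc _ (h2.desc fun j => cokernel.π _ ≫ f j) (h1.hom_ext fun j => ?_),
      fun j => ?_, fun y hy => ?_⟩
    · rw [(φ j).comm₁₂_assoc, h2.fac]; simp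
    · rw [← cancel_epi (cokernel.π _)]
      simp only [ψ, cokernel.map, cokernel.π_desc_assoc, assoc, cokernel.π_desc]
      exact h2.fac (fun j => cokernel.π _ ≫ f j) j
    · rw [← cancel_epi (cokernel.π _)]
      refine h2.hom_ext fun j => ?_
      rw [cokernel.π_desc]
      refine Eq.trans ?_ (h2.fac (fun j => cokernel.π _ ≫ f j) j).symm
      simp [← hy, ψ]
  refine isCop_mono hψ h3 _ hm _ (fun j => ?_)
  rw [← cancel_epi (cokernel.π _)]
  simp [ψ, (φ j).comm₂₃]

lemma acyclic_copClosed : CopClosed.{t} (HomotopyCategory.subcategoryAcyclic C) := by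
  intro J X A ι hι hX
  obtain ⟨B, κ, hκ⟩ := ch_hasCop (C := C) J (fun j => (X j).as)
  have e := (quotient_presCop _ _ _ _ hκ).iso hι
  refine (HomotopyCategory.subcategoryAcyclic C).prop_of_iso e ?_
  rw [HomotopyCategory.quotient_obj_mem_subcategoryAcyclic_iff_exactAt]
  intro n
  refine isCop_exact (fun j => (X j).as.sc n) (B.sc n)
    (fun j => (HomologicalComplex.shortComplexFunctor C (ComplexShape.up ℤ) n).map (κ j))
    (ch_eval hκ _) (ch_eval hκ _) (ch_eval hκ _) ?_
  intro j
  exact (HomotopyCategory.quotient_obj_mem_subcategoryAcyclic_iff_exactAt _).1 (hX j) n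

variable [HasDerivedCategory.{w} C]

lemma Qh_presCop : PresCop.{t} (DerivedCategory.Qh (C := C)) :=
  presCop_of_localization _ (HomotopyCategory.subcategoryAcyclic C).trW k_hasCop
    (fun _ _ _ _ _ _ _ hι hκ f hf φ hφ => trW_cop acyclic_copClosed hι hκ f hf φ hφ)

lemma d_hasCop : HasCop.{t} (DerivedCategory C) :=
  hasCop_of_essSurj (DerivedCategory.Qh (C := C)) Qh_presCop k_hasCop

end B2
end TiltAux



namespace TiltAux

section C1

universe t v₁ u₁ v₂ u₂

variable {C : Type u₁} [Category.{v₁} C] {D : Type u₂} [Category.{v₂} D] [Preadditive C] [Preadditive D]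

lemma Cpt.of_iso {Z Z' : C} (hZ : Cpt.{t} Z) (e : Z ≅ Z') : Cpt.{t} Z' := by
  intro J X A ι h f
  obtain ⟨s, g, hg⟩ := hZ J X A ι h (e.hom ≫ f)
  refine ⟨s, fun j => e.inv ≫ g j, ?_⟩
  rw [← cancel_epi e.hom, hg, Preadditive.comp_sum]
  simp

lemma Cpt.of_functor (L : C ⥤ D) [L.Additive] [L.EssSurj] (hL : PresCop.{t} L) (hC : HasCop.{t} C)
    {Z : C} (hZ : Cpt.{t} Z) (hs : ∀ Y, Function.Surjective (L.map : (Z ⟶ Y) → _)) :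
    Cpt.{t} (L.obj Z) := by
  intro J X A ι h f
  obtain ⟨B, κ, hκ⟩ := hC J (fun j => L.objPreimage (X j))
  have hκ' := (hL _ _ _ _ hκ).precomp_iso (fun j => (L.objObjPreimageIso (X j)).symm)
  let e := h.iso hκ'
  obtain ⟨f', hf'⟩ := hs _ (f ≫ e.hom)
  obtain ⟨s, g, hg⟩ := hZ _ _ _ _ hκ f'
  refine ⟨s, fun j => L.map (g j) ≫ (L.objObjPreimageIso (X j)).hom, ?_⟩
  rw [← cancel_mono e.hom, ← hf', hg, Functor.map_sum, Preadditive.sum_comp]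
  refine Finset.sum_congr rfl fun j _ => ?_
  have : ι j ≫ e.hom = (L.objObjPreimageIso (X j)).inv ≫ L.map (κ j) := h.ι_iso_hom hκ' j
  rw [assoc, assoc, this]
  simp

lemma cpt_module (R : Type v) [Ring R] : Cpt.{v} (ModuleCat.of R R) := by
  intro J X A ι h f
  let N : Submodule R A := ⨆ j, LinearMap.range (ι j).hom
  have hN : N = ⊤ := by
    have : ModuleCat.ofHom N.mkQ = 0 := by
      refine h.hom_ext fun j => ?_
      rw [comp_zero]
      ext x
      have : (ι j).hom x ∈ N := Submodule.mem_iSup_of_mem j ⟨x, rfl⟩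
      simpa using this
    have h2 : N.mkQ = 0 := by simpa using congrArg ModuleCat.Hom.hom this
    rw [← Submodule.ker_mkQ N, h2, LinearMap.ker_zero]
  have hx : f.hom (1 : R) ∈ N := by rw [hN]; trivial
  classical
  obtain ⟨y, hy, hy'⟩ := (Submodule.mem_iSup_iff_exists_finsupp _ _).1 hx
  choose z hz using hy
  refine ⟨y.support, fun j => ModuleCat.ofHom (LinearMap.toSpanSingleton R _ (z j)), ?_⟩
  ext
  change f.hom (1 : R) = _
  rw [← hy', ModuleCat.hom_sum, LinearMap.sum_apply, Finsupp.sum]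
  refine Finset.sum_congr rfl fun j _ => ?_
  simp [hz]

end C1
section C2

variable {C : Type u} [Category.{v} C] [Abelian C] [HasCoproducts.{v} C]

lemma cpt_single {M : C} (hM : Cpt.{v} M) (n : ℤ) :
    Cpt.{v} ((HomologicalComplex.single C (ComplexShape.up ℤ) n).obj M) := by
  intro J X A ι h f
  obtain ⟨s, g, hg⟩ := hM _ _ _ _ (ch_eval h n)
    ((HomologicalComplex.singleObjXSelf (ComplexShape.up ℤ) n M).inv ≫ f.f n)
  have hp : ∀ i j, i ≠ j → (ι i).f n ≫ (h.proj j).f n = 0 := fun i j hij => by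
    rw [← HomologicalComplex.comp_f, h.ι_proj_ne hij]; rfl
  have hp' : ∀ j, (ι j).f n ≫ (h.proj j).f n = 𝟙 _ := fun j => by
    rw [← HomologicalComplex.comp_f, h.ι_proj]; rfl
  refine ⟨s, fun j => f ≫ h.proj j, ?_⟩
  apply HomologicalComplex.from_single_hom_ext
  rw [← cancel_epi (HomologicalComplex.singleObjXSelf (ComplexShape.up ℤ) n M).inv, hg]
  have hsum : (∑ j ∈ s, (f ≫ h.proj j) ≫ ι j).f n = ∑ j ∈ s, ((f ≫ h.proj j) ≫ ι j).f n :=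
    (HomologicalComplex.eval C (ComplexShape.up ℤ) n).map_sum (fun j => (f ≫ h.proj j) ≫ ι j) s
  rw [hsum, Preadditive.comp_sum]
  refine Finset.sum_congr rfl fun j hj => ?_
  simp only [HomologicalComplex.comp_f]
  rw [← assoc, ← assoc, hg, Preadditive.sum_comp, Finset.sum_eq_single j]
  · simp only [assoc]
    rw [reassoc_of% hp' j]
  · intro i _ hij
    simp only [assoc]
    rw [hp i j hij, comp_zero]
  · exact fun h => (h hj).elim

lemma cpt_single_K {M : C} (hM : Cpt.{v} M) (n : ℤ) :
    Cpt.{v} ((HomotopyCategory.quotient C (ComplexShape.up ℤ)).obj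
      ((HomologicalComplex.single C (ComplexShape.up ℤ) n).obj M)) :=
  Cpt.of_functor (HomotopyCategory.quotient C (ComplexShape.up ℤ)) quotient_presCop ch_hasCop
    (cpt_single hM n) (fun _ => Functor.map_surjective _)

variable [AB4OfSize.{v} C] [HasDerivedCategory.{w} C]

omit [HasCoproducts.{v} C] [AB4OfSize.{v} C] in
lemma Qh_bij (M : C) [Projective M] (n : ℤ) (Y : HomotopyCategory C (ComplexShape.up ℤ)) :
    Function.Bijective (DerivedCategory.Qh.map : ((HomotopyCategory.quotient C (ComplexShape.up ℤ)).obj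
      ((HomologicalComplex.single C (ComplexShape.up ℤ) n).obj M) ⟶ Y) → _) := by
  have : ∀ m, Projective (((HomologicalComplex.single C (ComplexShape.up ℤ) n).obj M).X m) := by
    intro m
    by_cases h : m = n
    · subst h
      exact Projective.of_iso (HomologicalComplex.singleObjXSelf (ComplexShape.up ℤ) m M).symm inferInstance
    · exact (HomologicalComplex.isZero_single_obj_X (ComplexShape.up ℤ) n M m h).projective
  have := CochainComplex.isKProjective_of_projective
    ((HomologicalComplex.single C (ComplexShape.up ℤ) n).obj M) n
  exact CochainComplex.IsKProjective.Qh_map_bijective _ Y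

lemma cpt_single_D {M : C} [Projective M] (hM : Cpt.{v} M) (n : ℤ) :
    Cpt.{v} ((DerivedCategory.singleFunctor C n).obj M) :=
  Cpt.of_functor DerivedCategory.Qh Qh_presCop k_hasCop
    (cpt_single_K hM n) (fun Y => (Qh_bij M n Y).2)

end C2

end TiltAux



namespace TiltAux

section C3

open ZeroObject

lemma Qh_isZero {C : Type u} [Category.{v} C] [Abelian C] [HasDerivedCategory.{w} C]
    {X : HomotopyCategory C (ComplexShape.up ℤ)} (hX : HomotopyCategory.subcategoryAcyclic C X) :
    IsZero (DerivedCategory.Qh.obj X) := by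
  have h : (HomotopyCategory.subcategoryAcyclic C).trW (0 : (0 : HomotopyCategory C (ComplexShape.up ℤ)) ⟶ X) := 
    ⟨_, _, _, contractible_distinguished₁ X, hX⟩
  have := Localization.inverts DerivedCategory.Qh (HomotopyCategory.subcategoryAcyclic C).trW _ h
  exact ((DerivedCategory.Qh (C := C)).map_isZero (isZero_zero _)).of_iso (asIso (DerivedCategory.Qh.map (0 : (0 : HomotopyCategory C (ComplexShape.up ℤ)) ⟶ X))).symm

variable (R : Type v) [Ring R] [HasDerivedCategory.{w} (ModuleCat.{v} R)]

/-- the regular module as a complex up to homotopy -/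
noncomputable abbrev KR : HomotopyCategory (ModuleCat.{v} R) (ComplexShape.up ℤ) :=
  (HomotopyCategory.quotient _ (ComplexShape.up ℤ)).obj
    ((HomologicalComplex.single (ModuleCat.{v} R) (ComplexShape.up ℤ) 0).obj (ModuleCat.of R R))

instance : Projective (ModuleCat.of R R) :=
  (IsProjective.iff_projective (R := R) R).mp inferInstance

instance : IsGrothendieckAbelian.{v} (ModuleCat.{v} R) := inferInstance
instance : AB4OfSize.{v} (ModuleCat.{v} R) := AB4.of_AB5 _

lemma KR_small (X : DerivedCategory (ModuleCat.{v} R)) : 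
    Small.{v} (DerivedCategory.Qh.obj (KR R) ⟶ X) := by
  obtain ⟨Y, ⟨e⟩⟩ : ∃ Y, Nonempty (DerivedCategory.Qh.obj Y ≅ X) := ⟨_, ⟨DerivedCategory.Qh.objObjPreimageIso X⟩⟩
  obtain ⟨Y, rfl⟩ := HomotopyCategory.quotient_obj_surjective Y
  let φ : (((HomologicalComplex.single (ModuleCat.{v} R) (ComplexShape.up ℤ) 0).obj (ModuleCat.of R R)) ⟶ Y) →
    (DerivedCategory.Qh.obj (KR R) ⟶ X) := fun f => DerivedCategory.Qh.map ((HomotopyCategory.quotient _ (ComplexShape.up ℤ)).map f) ≫ e.hom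
  refine small_of_surjective (f := φ) fun g => ?_
  obtain ⟨g', hg'⟩ := (Qh_bij (ModuleCat.of R R) 0 _).2 (g ≫ e.inv)
  obtain ⟨g'', rfl⟩ := (HomotopyCategory.quotient _ (ComplexShape.up ℤ)).map_surjective g'
  exact ⟨g'', by simp only [φ]; rw [hg']; simp⟩

/-- generation -/
lemma single_gen (X : DerivedCategory (ModuleCat.{v} R))
    (hX : ∀ (n : ℤ) (f : (DerivedCategory.singleFunctor _ n).obj (ModuleCat.of R R) ⟶ X), f = 0) : IsZero X := by
  obtain ⟨Y, ⟨e⟩⟩ : ∃ Y, Nonempty (DerivedCategory.Qh.obj Y ≅ X) := ⟨_, ⟨DerivedCategory.Qh.objObjPreimageIso X⟩⟩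
  refine IsZero.of_iso ?_ e.symm
  obtain ⟨Y, rfl⟩ := HomotopyCategory.quotient_obj_surjective Y
  have hac : (HomotopyCategory.subcategoryAcyclic _) ((HomotopyCategory.quotient _ (ComplexShape.up ℤ)).obj Y) := by
    rw [HomotopyCategory.quotient_obj_mem_subcategoryAcyclic_iff_exactAt]
    intro n
    rw [HomologicalComplex.exactAt_iff' _ (n-1) n (n+1) (by simp) (by simp),
      ShortComplex.moduleCat_exact_iff]
    intro x hx
    replace hx : (Y.d n (n+1)).hom x = 0 := hx
    obtain ⟨a, ha1⟩ : ∃ a : ModuleCat.of R R ⟶ Y.X n, a.hom (1 : R) = x :=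
      ⟨ModuleCat.ofHom (LinearMap.toSpanSingleton R (Y.X n) x), by
        simp only [ModuleCat.hom_ofHom]
        exact LinearMap.toSpanSingleton_apply_one R (Y.X n) x⟩
    have ha : a ≫ Y.d n (n+1) = 0 := by
      ext
      simp [ha1, hx]
    let f : (HomologicalComplex.single (ModuleCat.{v} R) (ComplexShape.up ℤ) n).obj (ModuleCat.of R R) ⟶ Y :=
      HomologicalComplex.mkHomFromSingle a (fun k hk => by
        obtain rfl : n + 1 = k := hk
        exact ha)
    have h1 := hX n (DerivedCategory.Qh.map ((HomotopyCategory.quotient _ (ComplexShape.up ℤ)).map f) ≫ e.hom)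
    have h2 : DerivedCategory.Qh.map ((HomotopyCategory.quotient _ (ComplexShape.up ℤ)).map f) = 0 := by
      rw [← cancel_mono e.hom, zero_comp]; exact h1
    have h3 : (HomotopyCategory.quotient _ (ComplexShape.up ℤ)).map f = 0 :=
      (Qh_bij (ModuleCat.of R R) n _).1 (by rw [h2, Functor.map_zero])
    have H : Homotopy f 0 := HomotopyCategory.homotopyOfEq _ _ (by rw [h3]; simp)
    have h4 := H.comm n
    rw [dNext_eq _ (show (ComplexShape.up ℤ).Rel n (n + 1) by simp),
        prevD_eq _ (show (ComplexShape.up ℤ).Rel (n - 1) n by simp)] at h4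
    have h5 : ((HomologicalComplex.single (ModuleCat.{v} R) (ComplexShape.up ℤ) n).obj (ModuleCat.of R R)).d n (n+1) = 0 :=
      HomologicalComplex.single_obj_d ..
    rw [h5] at h4
    have h6 : (HomologicalComplex.singleObjXSelf (ComplexShape.up ℤ) n (ModuleCat.of R R)).inv ≫ f.f n = a := by
      simp only [f, HomologicalComplex.mkHomFromSingle_f]
      exact Iso.inv_hom_id_assoc _ _
    rw [h4] at h6
    refine ⟨((HomologicalComplex.singleObjXSelf (ComplexShape.up ℤ) n (ModuleCat.of R R)).inv ≫ H.hom n (n-1)).hom (1 : R), ?_⟩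
    have h7 := ConcreteCategory.congr_hom h6 (1 : R)
    refine Eq.trans ?_ (h7.trans ha1)
    simp
    rfl
  exact Qh_isZero hac

variable {C : Type u} [Category.{v} C] [Abelian C] [HasDerivedCategory.{w} C]

lemma single_zero_of (M : C) (n : ℤ) (X : DerivedCategory C)
    (h : ∀ f : (DerivedCategory.singleFunctor C 0).obj M ⟶ X⟦n⟧, f = 0)
    (f : (DerivedCategory.singleFunctor C n).obj M ⟶ X) : f = 0 := by
  let e := ((DerivedCategory.singleFunctors C).shiftIso n 0 n (by simp)).app M
  have h1 := h (e.inv ≫ f⟦n⟧')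
  apply (shiftFunctor (DerivedCategory C) n).map_injective
  rw [Functor.map_zero, ← cancel_epi e.inv, comp_zero]
  exact h1

lemma KR_gen (X : DerivedCategory (ModuleCat.{v} R))
    (hX : ∀ (n : ℤ) (f : (DerivedCategory.singleFunctor _ 0).obj (ModuleCat.of R R) ⟶ X⟦n⟧), f = 0) :
    IsZero X :=
  single_gen R X fun n f => single_zero_of _ n X (hX n) f

omit [HasDerivedCategory.{w} (ModuleCat.{v} R)] in
lemma KR_cpt : Cpt.{v} (KR R) := cpt_single_K (cpt_module R) 0

lemma KR_cpt_D : Cpt.{v} (DerivedCategory.Qh.obj (KR R)) := cpt_single_D (cpt_module R) 0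

lemma KR_FB (X) : FB DerivedCategory.Qh (KR R) X := Qh_bij (ModuleCat.of R R) 0 _

lemma KR_equiv : ((Loc.{v} (KR R)).ι ⋙ DerivedCategory.Qh).IsEquivalence :=
  loc_equiv (F := DerivedCategory.Qh) Qh_presCop (KR_cpt R) (KR_cpt_D R) (fun _ => KR_FB R _)
    k_hasCop d_hasCop (fun _ _ => KR_small R _) (KR_gen R)

end C3
end TiltAux



namespace TiltAux

section C3a
universe t v₁ u₁ v₂ u₂

lemma IsCop.congr {C : Type u₁} [Category.{v₁} C] {J : Type t} {X : J → C} {A : C} {ι ι' : ∀ j, X j ⟶ A}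
    (h : IsCop ι) (e : ∀ j, ι j = ι' j) : IsCop ι' := by
  obtain rfl : ι = ι' := funext e
  exact h

lemma isCop_ch {C : Type u₁} [Category.{v₁} C] [Abelian C] {J : Type t}
    {X : J → CochainComplex C ℤ} {A : CochainComplex C ℤ}
    {ι : ∀ j, X j ⟶ A} (h : ∀ n, IsCop (fun j => (ι j).f n)) : IsCop ι := by
  intro W f
  refine ⟨{ f := fun n => (h n).desc fun j => (f j).f n, comm' := ?_ }, ?_, ?_⟩
  · intro a b _
    refine (h a).hom_ext fun j => ?_
    have e1 := (h a).fac_assoc (fun j => (f j).f a) j (W.d a b)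
    have e2 := (h b).fac (fun j => (f j).f b) j
    rw [e1, (ι j).comm_assoc, e2, (f j).comm]
  · intro j
    ext n
    exact (h n).fac (fun j => (f j).f n) j
  · intro y hy
    ext n
    refine (h n).hom_ext fun j => ?_
    refine Eq.trans ?_ ((h n).fac (fun j => (f j).f n) j).symm
    rw [← hy j]
    rfl

variable {C : Type u₁} [Category.{v₁} C] [Abelian C] [HasCoproducts.{t} C]
  {D : Type u₂} [Category.{v₂} D] [Abelian D] [HasCoproducts.{t} D]

lemma mapK_presCop (F : C ⥤ D) [F.Additive] (hF : PresCop.{t} F) :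
    PresCop.{t} (F.mapHomotopyCategory (ComplexShape.up ℤ)) := by
  intro J X A ι h
  obtain ⟨B, κ, hκ⟩ := ch_hasCop (C := C) J (fun j => (X j).as)
  have h1 : IsCop (fun j => (F.mapHomologicalComplex (ComplexShape.up ℤ)).map (κ j)) :=
    isCop_ch fun n => hF _ _ _ _ (ch_eval hκ n)
  have h2 := quotient_presCop _ _ _ _ h1
  have h3 : IsCop (fun j => (F.mapHomotopyCategory (ComplexShape.up ℤ)).map
    ((HomotopyCategory.quotient C (ComplexShape.up ℤ)).map (κ j))) := h2
  have h4 := quotient_presCop _ _ _ _ hκ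
  have h5 := h3.of_iso ((F.mapHomotopyCategory (ComplexShape.up ℤ)).mapIso (h4.iso h))
  refine IsCop.congr (ι' := fun j => (F.mapHomotopyCategory (ComplexShape.up ℤ)).map (ι j)) h5 fun j => ?_
  have h6 := h4.ι_iso_hom h j
  exact ((F.mapHomotopyCategory (ComplexShape.up ℤ)).map_comp _ _).symm.trans (congrArg _ h6)

end C3a

section C3b

variable {G : Type u} [Category.{v} G] [Abelian G] [IsGrothendieckAbelian.{v} G] (T : G)

open IsGrothendieckAbelian

noncomputable abbrev adjT : tensorObj T ⊣ preadditiveCoyonedaObj T := tensorObjPreadditiveCoyonedaObjAdjunction T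

noncomputable abbrev RT : ModuleCat.{v} (End T)ᵐᵒᵖ := ModuleCat.of (End T)ᵐᵒᵖ (End T)ᵐᵒᵖ

instance : (tensorObj T).Additive := (adjT T).left_adjoint_additive

/-- evaluation at 1 -/
noncomputable def ev {Y : G} (f : (tensorObj T).obj (RT T) ⟶ Y) : T ⟶ Y :=
  ((adjT T).homEquiv _ _ f).hom (1 : (End T)ᵐᵒᵖ)

lemma ev_comp {Y Y' : G} (f : (tensorObj T).obj (RT T) ⟶ Y) (g : Y ⟶ Y') : ev T (f ≫ g) = ev T f ≫ g := by
  simp only [ev]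
  rw [Adjunction.homEquiv_naturality_right]
  rfl

lemma ev_bij (Y : G) : Function.Bijective (ev T (Y := Y)) := by
  constructor
  · intro f g h
    apply ((adjT T).homEquiv _ _).injective
    ext
    exact h
  · intro g
    refine ⟨((adjT T).homEquiv _ _).symm (ModuleCat.ofHom (LinearMap.toSpanSingleton _ _ g)), ?_⟩
    have h := ((adjT T).homEquiv (RT T) Y).apply_symm_apply (ModuleCat.ofHom (LinearMap.toSpanSingleton (End T)ᵐᵒᵖ (T ⟶ Y) g))
    refine Eq.trans (congrArg (fun a : RT T ⟶ ModuleCat.of _ (T ⟶ Y) => a.hom (1 : (End T)ᵐᵒᵖ)) h) ?_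
    exact LinearMap.toSpanSingleton_apply_one (End T)ᵐᵒᵖ (T ⟶ Y) g

noncomputable def tensorIso : (tensorObj T).obj (RT T) ≅ T where
  hom := (Equiv.ofBijective _ (ev_bij T T)).symm (𝟙 T)
  inv := ev T (𝟙 _)
  hom_inv_id := by
    apply (ev_bij T _).1
    rw [ev_comp]
    have := (Equiv.ofBijective _ (ev_bij T T)).apply_symm_apply (𝟙 T)
    exact (congrArg (fun a : T ⟶ T => a ≫ ev T (𝟙 _)) this).trans (id_comp _)
  inv_hom_id := by
    rw [← ev_comp, id_comp]
    exact (Equiv.ofBijective _ (ev_bij T T)).apply_symm_apply (𝟙 T)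

lemma tensor_bij : Function.Bijective ((tensorObj T).map : (RT T ⟶ RT T) → _) := by
  have key : ∀ f : RT T ⟶ RT T, ev T ((tensorObj T).map f ≫ (tensorIso T).hom) = (f.hom (1 : (End T)ᵐᵒᵖ)).unop := by
    intro f
    have h0 : ev T (tensorIso T).hom = 𝟙 T := (Equiv.ofBijective _ (ev_bij T T)).apply_symm_apply (𝟙 T)
    simp only [ev] at h0 ⊢
    rw [Adjunction.homEquiv_naturality_left]
    generalize (adjT T).homEquiv _ _ (tensorIso T).hom = a at h0 ⊢
    replace h0 : a.hom (1 : (End T)ᵐᵒᵖ) = (𝟙 T : T ⟶ T) := h0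
    change a.hom (f.hom (1 : (End T)ᵐᵒᵖ)) = _
    have : (f.hom (1 : (End T)ᵐᵒᵖ)) = (f.hom (1 : (End T)ᵐᵒᵖ)) • (1 : (End T)ᵐᵒᵖ) := by
      rw [smul_eq_mul, mul_one]
    have h1 : a.hom (f.hom (1 : (End T)ᵐᵒᵖ)) = (f.hom (1 : (End T)ᵐᵒᵖ)) • a.hom (1 : (End T)ᵐᵒᵖ) :=
      (congrArg _ this).trans (map_smul a.hom _ _)
    refine h1.trans ((congrArg _ h0).trans ?_)
    exact comp_id ((f.hom (1 : (End T)ᵐᵒᵖ)).unop : T ⟶ T)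
  constructor
  · intro f g h
    ext
    apply MulOpposite.unop_injective
    rw [← key, ← key, h]
  · intro g
    refine ⟨ModuleCat.ofHom (LinearMap.toSpanSingleton _ _ (MulOpposite.op (ev T (g ≫ (tensorIso T).hom)))), ?_⟩
    rw [← cancel_mono (tensorIso T).hom]
    apply (ev_bij T _).1
    rw [key]
    simp

end C3b

end TiltAux



namespace TiltAux

section C4

variable {G : Type u} [Category.{v} G] [Abelian G] [HasDerivedCategory.{w} G] 

open IsGrothendieckAbelian DerivedCategory

lemma hom_neg (A B : G) (m n : ℤ) (h : n < m) (f : (singleFunctor G n).obj A ⟶ (singleFunctor G m).obj B) : f = 0 :=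
  TStructure.t.zero f n m h

lemma hom_zero {A : G} (hA : ∀ n : ℤ, 0 < n → ∀ f : (singleFunctor G 0).obj A ⟶ ((singleFunctor G 0).obj A)⟦n⟧, f = 0)
    (m : ℤ) (hm : m ≠ 0) (f : (singleFunctor G 0).obj A ⟶ (singleFunctor G m).obj A) : f = 0 := by
  rcases lt_or_gt_of_ne hm with h | h
  · let e := ((singleFunctors G).shiftIso (-m) m 0 (by simp)).app A
    have := hA (-m) (by lia) (f ≫ e.inv)
    rw [← cancel_mono e.inv, zero_comp]
    exact this
  · exact hom_neg A A m 0 h f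

variable [IsGrothendieckAbelian.{v} G] (T : G)

noncomputable abbrev FT : HomotopyCategory (ModuleCat.{v} (End T)ᵐᵒᵖ) (ComplexShape.up ℤ) ⥤ DerivedCategory G :=
  (tensorObj T).mapHomotopyCategory (ComplexShape.up ℤ) ⋙ Qh

noncomputable def FTsingle (m : ℤ) : (HomologicalComplex.single (ModuleCat.{v} (End T)ᵐᵒᵖ) (ComplexShape.up ℤ) m ⋙
    HomotopyCategory.quotient _ _) ⋙ FT T ≅ tensorObj T ⋙ singleFunctor G m :=
  Functor.isoWhiskerRight (HomologicalComplex.singleMapHomologicalComplex (tensorObj T) (ComplexShape.up ℤ) m)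
    (HomotopyCategory.quotient _ _ ⋙ Qh)

noncomputable def FTiso (m : ℤ) : (FT T).obj ((HomotopyCategory.quotient _ (ComplexShape.up ℤ)).obj
    ((HomologicalComplex.single (ModuleCat.{v} (End T)ᵐᵒᵖ) (ComplexShape.up ℤ) m).obj (RT T))) ≅ 
    (singleFunctor G m).obj T :=
  (FTsingle T m).app (RT T) ≪≫ (singleFunctor G m).mapIso (tensorIso T)

lemma FT_FB_single (hT : ∀ n : ℤ, 0 < n → ∀ f : (singleFunctor G 0).obj T ⟶ ((singleFunctor G 0).obj T)⟦n⟧, f = 0)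
    (m : ℤ) : FB (FT T) (KR (End T)ᵐᵒᵖ) ((HomotopyCategory.quotient _ (ComplexShape.up ℤ)).obj
    ((HomologicalComplex.single (ModuleCat.{v} (End T)ᵐᵒᵖ) (ComplexShape.up ℤ) m).obj (RT T))) := by
  by_cases hm : m = 0
  · subst hm
    have h1 : Function.Bijective ((((HomologicalComplex.single (ModuleCat.{v} (End T)ᵐᵒᵖ) (ComplexShape.up ℤ) 0 ⋙
      HomotopyCategory.quotient _ _) ⋙ FT T).map : (RT T ⟶ RT T) → _)) := by
      have h2 : Function.Bijective ((tensorObj T ⋙ singleFunctor G 0).map : (RT T ⟶ RT T) → _) := by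
        have h3 : Function.Bijective ((singleFunctor G 0).map :
          ((tensorObj T).obj (RT T) ⟶ (tensorObj T).obj (RT T)) → _) :=
          ⟨(singleFunctor G 0).map_injective, (singleFunctor G 0).map_surjective⟩
        exact h3.comp (tensor_bij T)
      constructor
      · intro f g hfg
        apply h2.1
        rw [← cancel_epi ((FTsingle T 0).hom.app _), ← NatTrans.naturality, ← NatTrans.naturality, hfg]
      · intro g
        obtain ⟨g', hg'⟩ := h2.2 ((FTsingle T 0).inv.app _ ≫ g ≫ (FTsingle T 0).hom.app _)
        refine ⟨g', ?_⟩
        rw [← cancel_mono ((FTsingle T 0).hom.app _), NatTrans.naturality, hg', Iso.hom_inv_id_app_assoc]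
    constructor
    · intro f g hfg
      obtain ⟨f, rfl⟩ := (HomologicalComplex.single (ModuleCat.{v} (End T)ᵐᵒᵖ) (ComplexShape.up ℤ) 0 ⋙
        HomotopyCategory.quotient _ _).map_surjective f
      obtain ⟨g, rfl⟩ := (HomologicalComplex.single (ModuleCat.{v} (End T)ᵐᵒᵖ) (ComplexShape.up ℤ) 0 ⋙
        HomotopyCategory.quotient _ _).map_surjective g
      rw [h1.1 hfg]
    · intro g
      obtain ⟨f, hf⟩ := h1.2 g
      exact ⟨(HomologicalComplex.single (ModuleCat.{v} (End T)ᵐᵒᵖ) (ComplexShape.up ℤ) 0 ⋙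
        HomotopyCategory.quotient _ _).map f, hf⟩
  · constructor
    · intro f g _
      obtain ⟨f, rfl⟩ := (HomotopyCategory.quotient _ _).map_surjective f
      obtain ⟨g, rfl⟩ := (HomotopyCategory.quotient _ _).map_surjective g
      congr 1
      apply HomologicalComplex.from_single_hom_ext
      exact (HomologicalComplex.isZero_single_obj_X (ComplexShape.up ℤ) m _ 0 (Ne.symm hm)).eq_of_tgt _ _
    · intro g
      refine ⟨0, ?_⟩
      rw [Functor.map_zero, ← cancel_mono (FTiso T m).hom, ← cancel_epi (FTiso T 0).inv]
      exact (hom_zero hT m hm _).trans (hom_zero hT m hm _).symm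

lemma FT_FB (hT : ∀ n : ℤ, 0 < n → ∀ f : (singleFunctor G 0).obj T ⟶ ((singleFunctor G 0).obj T)⟦n⟧, f = 0)
    (n : ℤ) : FB (FT T) (KR (End T)ᵐᵒᵖ) ((KR (End T)ᵐᵒᵖ)⟦n⟧) :=
  (FT_FB_single T hT (-n)).of_iso (Iso.refl _) 
    (((HomotopyCategory.singleFunctors (ModuleCat.{v} (End T)ᵐᵒᵖ)).shiftIso n (-n) 0 (by simp)).app (RT T)).symm

omit [HasDerivedCategory.{w} G] in
lemma ab4 : AB4OfSize.{v} G := 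
  have : HasCoproducts.{v} G := inferInstance
  have : HasFiniteBiproducts G := Abelian.hasFiniteBiproducts
  AB4.of_AB5 _

lemma FT_presCop : PresCop.{v} (FT T) :=
  have := ab4 (G := G)
  (mapK_presCop (tensorObj T) (fun _ _ _ _ h => h.map_leftAdj (adjT T))).comp Qh_presCop

lemma FT_equiv (hT : ∀ n : ℤ, 0 < n → ∀ f : (singleFunctor G 0).obj T ⟶ ((singleFunctor G 0).obj T)⟦n⟧, f = 0)
    (hc : Cpt.{v} ((singleFunctor G 0).obj T)) 
    (hsmall : ∀ X (n : ℤ), Small.{v} ((singleFunctor G 0).obj T ⟶ X⟦n⟧)) 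
    (gen : ∀ X, (∀ (n : ℤ) (f : (singleFunctor G 0).obj T ⟶ X⟦n⟧), f=0) → IsZero X) :
    ((Loc.{v} (KR (End T)ᵐᵒᵖ)).ι ⋙ FT T).IsEquivalence := by
  have := ab4 (G := G)
  refine loc_equiv (F := FT T) (FT_presCop T) (KR_cpt _) (hc.of_iso (FTiso T 0).symm) (FT_FB T hT)
    k_hasCop d_hasCop (fun X n => ?_) (fun X hX => gen X fun n f => ?_)
  · have := hsmall X n
    exact small_of_injective (f := fun f : (FT T).obj (KR (End T)ᵐᵒᵖ) ⟶ X⟦n⟧ => (FTiso T 0).inv ≫ f)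
      (fun f g h => (cancel_epi _).1 h)
  · rw [← cancel_epi (FTiso T 0).hom, comp_zero]
    exact hX n _

end C4

end TiltAux


open PaperStmt DerivedCategory

namespace TiltAux

section D1
universe v₁ u₁ v₂ u₂ v₃ u₃

variable {C : Type u₁} [Category.{v₁} C] {D : Type u₂} [Category.{v₂} D] [Preadditive C] [HasZeroObject C]
  [HasShift C ℤ] [∀ n : ℤ, (shiftFunctor C n).Additive] [Pretriangulated C]
  [Preadditive D] [HasZeroObject D] [HasShift D ℤ] [∀ n : ℤ, (shiftFunctor D n).Additive] [Pretriangulated D]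
  {E : Type u₃} [Category.{v₃} E] [Preadditive E] [HasZeroObject E]
  [HasShift E ℤ] [∀ n : ℤ, (shiftFunctor E n).Additive] [Pretriangulated E]

lemma exists_tri (F₁ : C ⥤ D) [F₁.CommShift ℤ] [F₁.IsTriangulated] [F₁.IsEquivalence]
    (F₂ : C ⥤ E) [F₂.CommShift ℤ] [F₂.IsTriangulated] [F₂.IsEquivalence] (Z : C) :
    ∃ e : TriangleEquivalenceData D E, Nonempty (e.functor.obj (F₁.obj Z) ≅ F₂.obj Z) := by
  have adj : F₁ ⊣ F₁.inv := F₁.asEquivalence.toAdjunction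
  letI := adj.rightAdjointCommShift ℤ
  haveI := adj.commShift_of_leftAdjoint ℤ
  haveI : F₁.inv.IsTriangulated := adj.isTriangulated_rightAdjoint
  exact ⟨⟨F₁.inv ⋙ F₂, inferInstance, inferInstance, inferInstance⟩,
    ⟨F₂.mapIso (F₁.asEquivalence.unitIso.app Z).symm⟩⟩

end D1

section D2
variable {G : Type u} [Category.{v} G] [Abelian G] [HasDerivedCategory.{w} G]  [IsGrothendieckAbelian.{v} G] (T : G)
  [HasDerivedCategory.{w'} (ModuleCat.{v} (End T)ᵐᵒᵖ)]
lemma forward (hT : ∀ n : ℤ, 0 < n → ∀ f : (singleFunctor G 0).obj T ⟶ ((singleFunctor G 0).obj T)⟦n⟧, f = 0)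
    (hc : Cpt.{v} ((singleFunctor G 0).obj T)) 
    (hsmall : ∀ X (n : ℤ), Small.{v} ((singleFunctor G 0).obj T ⟶ X⟦n⟧)) 
    (gen : ∀ X, (∀ (n : ℤ) (f : (singleFunctor G 0).obj T ⟶ X⟦n⟧), f=0) → IsZero X) :
    ∃ E : TriangleEquivalenceData (DerivedCategory G)
          (DerivedCategory (ModuleCat.{v} (End T)ᵐᵒᵖ)),
        Nonempty (E.functor.obj ((singleFunctor G 0).obj T)
          ≅ (singleFunctor (ModuleCat.{v} (End T)ᵐᵒᵖ) 0).obj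
              (ModuleCat.of (End T)ᵐᵒᵖ (End T)ᵐᵒᵖ)) := by
  have h1 := FT_equiv T hT hc hsmall gen
  have h2 := KR_equiv (End T)ᵐᵒᵖ
  obtain ⟨E, ⟨e⟩⟩ := exists_tri ((Loc.{v} (KR (End T)ᵐᵒᵖ)).ι ⋙ FT T) ((Loc.{v} (KR (End T)ᵐᵒᵖ)).ι ⋙ Qh)
    ⟨KR (End T)ᵐᵒᵖ, loc_self _⟩
  exact ⟨E, ⟨E.functor.mapIso (FTiso T 0).symm ≪≫ e⟩⟩

end D2
end TiltAux


namespace TiltAux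

section Small1
universe t v₁ u₁
variable {C : Type u₁} [Category.{v₁} C] [Preadditive C] [HasZeroObject C]
  [HasShift C ℤ] [∀ n : ℤ, (shiftFunctor C n).Additive] [Pretriangulated C]

lemma small_tri {Z : C} {T : Triangle C} (hT : T ∈ distTriang C) (h1 : Small.{t} (Z ⟶ T.obj₁))
    (h3 : Small.{t} (Z ⟶ T.obj₃)) : Small.{t} (Z ⟶ T.obj₂) := by
  let S := Set.range (fun f : Z ⟶ T.obj₂ => f ≫ T.mor₂)
  let φ : S × (Z ⟶ T.obj₁) → (Z ⟶ T.obj₂) := fun p => p.1.2.choose + p.2 ≫ T.mor₁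
  refine small_of_surjective (f := φ) fun f => ?_
  let s : S := ⟨f ≫ T.mor₂, f, rfl⟩
  have hs : s.2.choose ≫ T.mor₂ = f ≫ T.mor₂ := s.2.choose_spec
  obtain ⟨g, hg⟩ := Triangle.coyoneda_exact₂ T hT (f - s.2.choose) (by rw [Preadditive.sub_comp, hs, sub_self])
  exact ⟨⟨s, g⟩, by simp only [φ]; rw [← hg]; abel⟩

lemma small_tri_shift {Z : C} {T : Triangle C} (hT : T ∈ distTriang C) 
    (h1 : ∀ n : ℤ, Small.{t} (Z ⟶ T.obj₁⟦n⟧))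
    (h3 : ∀ n : ℤ, Small.{t} (Z ⟶ T.obj₃⟦n⟧)) (n : ℤ) : Small.{t} (Z ⟶ T.obj₂⟦n⟧) :=
  small_tri (Triangle.shift_distinguished T hT n) (h1 n) (h3 n)

lemma small_iso {Z X Y : C} (e : X ≅ Y) (n : ℤ) (h : Small.{t} (Z ⟶ X⟦n⟧)) : Small.{t} (Z ⟶ Y⟦n⟧) :=
  small_of_injective (f := fun f : Z ⟶ Y⟦n⟧ => f ≫ e.inv⟦n⟧') fun f g h => (cancel_mono _).1 h

omit [HasZeroObject C] [∀ n : ℤ, (shiftFunctor C n).Additive] [Pretriangulated C] in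
lemma small_cop {Z A : C} (hZ : Cpt.{t} Z) {J : Type t} {X : J → C} {ι : ∀ j, X j ⟶ A} (h : IsCop ι)
    (hX : ∀ (j) (n : ℤ), Small.{t} (Z ⟶ (X j)⟦n⟧)) (n : ℤ) : Small.{t} (Z ⟶ A⟦n⟧) := by
  have h' := h.map_equiv (shiftFunctor C n)
  have := fun j => hX j n
  let φ : Finset J × (∀ j, Z ⟶ (X j)⟦n⟧) → (Z ⟶ A⟦n⟧) := fun p => ∑ j ∈ p.1, p.2 j ≫ (ι j)⟦n⟧'
  refine small_of_surjective (f := φ) fun f => ?_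
  obtain ⟨s, g, hg⟩ := hZ _ _ _ _ h' f
  exact ⟨⟨s, g⟩, hg.symm⟩
end Small1

section Small2
variable {G : Type u} [Category.{v} G] [Abelian G]

lemma isCop_zeroDiff (K : CochainComplex G ℤ) (hK : ∀ i j, K.d i j = 0) :
    IsCop (J := ULift.{v} ℤ) (fun n => HomologicalComplex.mkHomFromSingle (K := K) (j := n.down) (𝟙 _)
      (fun k _ => by rw [hK, comp_zero])) := by
  refine isCop_ch fun n => ?_
  intro W f
  have e0 : ∀ j (hj : j = n), (HomologicalComplex.mkHomFromSingle (K := K) (j := j) (𝟙 _)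
      (fun k _ => by rw [hK, comp_zero])).f n = eqToHom (by rw [hj]) ≫ 
        (HomologicalComplex.singleObjXSelf (ComplexShape.up ℤ) n (K.X n)).hom := by
    rintro j rfl
    simp [HomologicalComplex.mkHomFromSingle_f]
  have e1 := e0 n rfl
  rw [eqToHom_refl, id_comp] at e1
  refine ⟨(HomologicalComplex.singleObjXSelf (ComplexShape.up ℤ) n (K.X n)).inv ≫ f ⟨n⟩, ?_, ?_⟩
  · rintro ⟨j⟩
    by_cases hj : j = n
    · subst hj
      dsimp only
      rw [e1, Iso.hom_inv_id_assoc]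
    · exact (HomologicalComplex.isZero_single_obj_X (ComplexShape.up ℤ) j _ n (Ne.symm hj)).eq_of_src _ _
  · intro y hy
    rw [← hy ⟨n⟩]
    dsimp only
    rw [e1, Iso.inv_hom_id_assoc]

/-- cycles as a complex -/
noncomputable def cyc (K : CochainComplex G ℤ) : CochainComplex G ℤ where
  X n := K.cycles n
  d _ _ := 0

noncomputable def bnd (K : CochainComplex G ℤ) : CochainComplex G ℤ where
  X n := cokernel (K.iCycles n)
  d _ _ := 0

lemma d_cokernel (K : CochainComplex G ℤ) (i j : ℤ) : K.d i j ≫ cokernel.π (K.iCycles j) = 0 := by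
  rw [← K.toCycles_i i j, assoc, cokernel.condition, comp_zero]

noncomputable def cycSES (K : CochainComplex G ℤ) : ShortComplex (CochainComplex G ℤ) where
  X₁ := cyc K
  X₂ := K
  X₃ := bnd K
  f := { f := fun n => K.iCycles n, comm' := fun i j _ => 
          (K.iCycles_d i j).trans zero_comp.symm }
  g := { f := fun n => cokernel.π (K.iCycles n), comm' := fun i j _ => 
          comp_zero.trans (d_cokernel K i j).symm }
  zero := by
    ext n
    exact cokernel.condition _

lemma cycSES_shortExact (K : CochainComplex G ℤ) : (cycSES K).ShortExact := by
  refine HomologicalComplex.shortExact_of_degreewise_shortExact _ fun n => ?_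
  have : Mono ((cycSES K).map (HomologicalComplex.eval G (ComplexShape.up ℤ) n)).f := 
    inferInstanceAs (Mono (K.iCycles n))
  have : Epi ((cycSES K).map (HomologicalComplex.eval G (ComplexShape.up ℤ) n)).g := 
    inferInstanceAs (Epi (cokernel.π (K.iCycles n)))
  refine ShortComplex.ShortExact.mk' ?_ ‹_› this
  exact ShortComplex.exact_of_g_is_cokernel _ (cokernelIsCokernel (K.iCycles n))

variable [HasDerivedCategory.{w} G] [IsGrothendieckAbelian.{v} G]

lemma small_single (T A : G) (m n : ℤ) : 
    Small.{v} ((singleFunctor G 0).obj T ⟶ ((singleFunctor G m).obj A)⟦n⟧) := by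
  let e := ((singleFunctors G).shiftIso n (m - n) m (by simp)).app A
  let e' := ((singleFunctors G).shiftIso (n - m) (m - n) 0 (by simp)).app A
  by_cases h : n - m < 0
  · refine small_of_injective (β := PUnit.{v+1}) (f := fun _ => PUnit.unit) fun f g _ => ?_
    rw [← cancel_mono e.hom]
    exact (hom_neg _ _ _ _ (by lia) _).trans (hom_neg _ _ _ _ (by lia) _).symm
  · obtain ⟨k, hk⟩ := Int.eq_ofNat_of_zero_le (not_lt.1 h)
    have key : ∀ p : ℤ, p = (k : ℤ) → Small.{v} ((singleFunctor G 0).obj T ⟶ ((singleFunctor G 0).obj A)⟦p⟧) := by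
      rintro p rfl
      exact small_of_injective (β := Abelian.Ext.{v} T A k) (f := Abelian.Ext.homEquiv.symm)
        (Equiv.injective _)
    have := key _ hk
    refine small_of_injective (f := fun f : (singleFunctor G 0).obj T ⟶ ((singleFunctor G m).obj A)⟦n⟧ => 
      (f ≫ e.hom ≫ e'.inv : (singleFunctor G 0).obj T ⟶ ((singleFunctor G 0).obj A)⟦n - m⟧)) fun f g h => ?_
    exact (cancel_mono (e.hom ≫ e'.inv)).1 h

lemma small_zeroDiff {T : G} (hT : Cpt.{v} ((singleFunctor G 0).obj T))
    (K : CochainComplex G ℤ) (hK : ∀ i j, K.d i j = 0) (n : ℤ) :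
    Small.{v} ((singleFunctor G 0).obj T ⟶ (Q.obj K)⟦n⟧) := by
  have := ab4 (G := G)
  have h1 := quotient_presCop _ _ _ _ (isCop_zeroDiff K hK)
  have h2 := Qh_presCop _ _ _ _ h1
  exact small_cop hT h2 (fun j n => small_single T _ _ n) n

lemma small_all {T : G} (hT : Cpt.{v} ((singleFunctor G 0).obj T)) (X : DerivedCategory G) (n : ℤ) :
    Small.{v} ((singleFunctor G 0).obj T ⟶ X⟦n⟧) := by
  obtain ⟨K, ⟨e⟩⟩ : ∃ K, Nonempty (Q.obj K ≅ X) := ⟨_, ⟨Q.objObjPreimageIso X⟩⟩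
  refine small_iso e n ?_
  exact small_tri_shift (triangleOfSES_distinguished (cycSES_shortExact K))
    (small_zeroDiff hT (cyc K) (fun _ _ => rfl)) (small_zeroDiff hT (bnd K) (fun _ _ => rfl)) n
end Small2
end TiltAux


namespace TiltAux

section D3
universe t t' v₁ u₁
variable {C : Type u₁} [Category.{v₁} C] [Preadditive C]

lemma sum_embed {J : Type t} {J' : Type t'} {X : J → C} {A Z : C} {ι : ∀ j, X j ⟶ A} (h : IsCop ι)
    (e : J' ↪ J) (f : Z ⟶ A) (s' : Finset J') (g' : ∀ j', Z ⟶ X (e j')) (hf : f = ∑ j ∈ s', g' j ≫ ι (e j)) :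
    ∃ (s : Finset J) (g : ∀ j, Z ⟶ X j), f = ∑ j ∈ s, g j ≫ ι j := by
  refine ⟨s'.map e, fun j => f ≫ h.proj j, ?_⟩
  rw [Finset.sum_map]
  conv_lhs => rw [hf]
  refine Finset.sum_congr rfl fun j hj => ?_
  congr 1
  beta_reduce
  rw [hf, Preadditive.sum_comp, Finset.sum_eq_single j]
  · rw [assoc, h.ι_proj, comp_id]
  · intro i _ hij
    rw [assoc, h.ι_proj_ne (fun h => hij (e.injective h)), comp_zero]
  · exact fun h => (h hj).elim

lemma cpt_of_compactObj (hC : HasCop.{t} C) {Z : C} (hZ : IsCompactObj Z) : Cpt.{t} Z := by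
  intro J X A ι h f
  by_cases hid : 𝟙 Z = 0
  · refine ⟨∅, fun _ => 0, ?_⟩
    rw [← id_comp f, hid]; simp
  obtain ⟨B, κ, hκ⟩ := hC J (fun _ => Z)
  have : Small.{v₁} J := by
    refine small_of_injective (f := fun j => (hκ.proj j : B ⟶ Z)) fun i j hij => ?_
    by_contra hne
    apply hid
    rw [← hκ.ι_proj i, ← hκ.ι_proj_ne hne]
    exact congrArg (fun p => κ i ≫ p) hij
  let e := (equivShrink.{v₁} J).symm
  have h' := h.reindex e
  have := h'.hasCoproduct
  let i := h'.iso (isCop_sigma (fun j => X (e j)))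
  obtain ⟨x, hx⟩ := (hZ (fun j => X (e j))).2 (f ≫ i.hom)
  classical
  rw [DFinsupp.sumAddHom_apply] at hx
  refine sum_embed h e.toEmbedding f x.support (fun j => x j) ?_
  rw [← cancel_mono i.hom, ← hx, Preadditive.sum_comp]
  rw [DFinsupp.sum]
  convert rfl using 2 with j
  rw [assoc]
  exact congrArg (fun p => x j ≫ p) (h'.ι_iso_hom (isCop_sigma (fun j => X (e j))) j)

lemma compactObj_of_cpt {Z : C} (hZ : Cpt.{v₁} Z) : IsCompactObj Z := by
  intro J X _
  classical
  have h := isCop_sigma X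
  constructor
  · rw [injective_iff_map_eq_zero]
    intro x hx
    rw [DFinsupp.sumAddHom_apply, DFinsupp.sum] at hx
    ext j
    by_cases hj : x j = 0
    · exact hj
    have hx' := congrArg (fun p => p ≫ h.proj j) hx
    simp only [zero_comp, Preadditive.sum_comp] at hx'
    rw [Finset.sum_eq_single j] at hx'
    · refine Eq.trans ?_ hx'
      exact ((assoc _ _ _).trans ((congrArg (fun p => x j ≫ p) (h.ι_proj j)).trans (comp_id _))).symm
    · intro i _ hij
      exact (assoc _ _ _).trans ((congrArg (fun p => x i ≫ p) (h.ι_proj_ne hij)).trans comp_zero)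
    · intro hj'
      exact (hj' (by simpa using hj)).elim
  · intro f
    obtain ⟨s, g, rfl⟩ := hZ _ _ _ _ h f
    refine ⟨∑ j ∈ s, DFinsupp.single j (g j), ?_⟩
    rw [map_sum]
    refine Finset.sum_congr rfl fun j _ => ?_
    exact DFinsupp.sumAddHom_single _ _ _

lemma cpt_enlarge [HasShift C ℤ] [∀ n : ℤ, (shiftFunctor C n).Additive] {Z : C} (hZ : Cpt.{t} Z)
    (hsmall : ∀ (X : C) (n : ℤ), Small.{t} (Z ⟶ X⟦n⟧)) 
    (gen : ∀ X : C, (∀ (n : ℤ) (f : Z ⟶ X⟦n⟧), f = 0) → IsZero X) : Cpt.{t'} Z := by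
  intro J X A ι h f
  let J' := {j // ¬ IsZero (X j)}
  have hJ : ∀ j : J', ∃ (n : ℤ) (g : Z ⟶ (X j.1)⟦n⟧), g ≠ 0 := by
    intro j
    by_contra! hj
    exact j.2 (gen _ hj)
  choose n g hg using hJ
  have : Small.{t} J' := by
    refine small_of_injective (f := fun j => (⟨n j, g j ≫ (ι j.1)⟦n j⟧'⟩ : Σ n : ℤ, (Z ⟶ A⟦n⟧))) fun i j hij => ?_
    by_contra hne
    have hne' : j.1 ≠ i.1 := fun h => hne (Subtype.ext h).symm
    have hp : ∀ a b : (Σ n : ℤ, (Z ⟶ A⟦n⟧)), a = b → b.2 ≫ (h.proj i.1)⟦b.1⟧' = 0 → 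
        a.2 ≫ (h.proj i.1)⟦a.1⟧' = 0 := by
      rintro a b rfl h
      exact h
    apply hg i
    have := hp _ _ hij (by
      dsimp only
      rw [assoc, ← Functor.map_comp, h.ι_proj_ne hne', Functor.map_zero, comp_zero])
    dsimp only at this
    rwa [assoc, ← Functor.map_comp, h.ι_proj, CategoryTheory.Functor.map_id, comp_id] at this
  have h1 : IsCop (fun j : J' => ι j.1) := by
    classical
    intro W φ
    refine ⟨h.desc (fun j => if hj : IsZero (X j) then 0 else φ ⟨j, hj⟩), fun j => ?_, fun u hu => ?_⟩
    · rw [h.fac, dif_neg j.2]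
    · refine h.hom_ext fun j => ?_
      rw [h.fac]
      split_ifs with hj
      · exact hj.eq_of_src _ _
      · exact hu ⟨j, hj⟩
  let e := (equivShrink.{t} J').symm
  obtain ⟨s, g, hf⟩ := hZ _ _ _ _ (h1.reindex e) f
  exact sum_embed h (e.toEmbedding.trans (Function.Embedding.subtype _)) f s g hf

end D3
section D4
universe v₁ u₁ v₂ u₂

variable {C : Type u₁} [Category.{v₁} C] [Preadditive C] 
  [HasShift C ℤ] [∀ n : ℤ, (shiftFunctor C n).Additive]

lemma gen_of {Z : C} (h : IsTriangulatedGen Z) (X : C) (hX : ∀ (n : ℤ) (f : Z ⟶ X⟦n⟧), f = 0) : IsZero X := by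
  by_contra hz
  obtain ⟨i, f, hf⟩ := h X hz
  apply hf
  apply (shiftFunctor C (-i)).map_injective
  rw [Functor.map_zero, ← cancel_epi ((shiftFunctorCompIsoId C i (-i) (by simp)).inv.app Z), comp_zero]
  exact hX _ _

lemma gen_to {Z : C} (h : ∀ X, (∀ (n : ℤ) (f : Z ⟶ X⟦n⟧), f = 0) → IsZero X) : IsTriangulatedGen Z := by
  intro X hX
  by_contra! hf
  refine hX (h X fun n f => ?_)
  apply (shiftFunctor C (-n)).map_injective
  rw [Functor.map_zero, ← cancel_mono ((shiftFunctorCompIsoId C n (-n) (by simp)).hom.app X), zero_comp]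
  exact hf _ _

end D4
end TiltAux


namespace TiltAux

section E1
universe t v₁ u₁ v₂ u₂

variable {C : Type u₁} [Category.{v₁} C] [Preadditive C] 
  [HasShift C ℤ] [∀ n : ℤ, (shiftFunctor C n).Additive]
  {D : Type u₂} [Category.{v₂} D] [Preadditive D] 
  [HasShift D ℤ] [∀ n : ℤ, (shiftFunctor D n).Additive]
  (F : C ⥤ D) [F.CommShift ℤ] [F.IsEquivalence] [F.Additive] {Z : C} {W : D} (e : F.obj Z ≅ W)

include e

omit [F.CommShift ℤ] [HasShift C ℤ] [∀ n : ℤ, (shiftFunctor C n).Additive] [HasShift D ℤ]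
  [∀ n : ℤ, (shiftFunctor D n).Additive] in
lemma cpt_back (hW : Cpt.{t} W) : Cpt.{t} Z := by
  have hW' := hW.of_iso e.symm
  intro J X A ι h f
  obtain ⟨s, g, hg⟩ := hW' _ _ _ _ (h.map_equiv F) (F.map f)
  refine ⟨s, fun j => F.preimage (g j), ?_⟩
  apply F.map_injective
  rw [hg, Functor.map_sum]
  refine Finset.sum_congr rfl fun j _ => ?_
  rw [Functor.map_comp, Functor.map_preimage]

lemma zero_back {X : C} {Y : D} (a : F.obj X ≅ Y) (n : ℤ) (h : ∀ f : W ⟶ Y⟦n⟧, f = 0) (f : Z ⟶ X⟦n⟧) : f = 0 := by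
  apply F.map_injective
  have := h (e.inv ≫ F.map f ≫ (F.commShiftIso n).hom.app X ≫ a.hom⟦n⟧')
  rw [Functor.map_zero, ← cancel_epi e.inv, ← cancel_mono ((F.commShiftIso n).hom.app X ≫ a.hom⟦n⟧')]
  simpa using this

lemma gen_back (h : ∀ X, (∀ (n : ℤ) (f : W ⟶ X⟦n⟧), f = 0) → IsZero X) (X : C)
    (hX : ∀ (n : ℤ) (f : Z ⟶ X⟦n⟧), f = 0) : IsZero X := by
  have hz : IsZero (F.obj X) := h _ fun n f => by
    rw [← cancel_epi e.hom, ← cancel_mono ((F.commShiftIso n).inv.app X)]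
    rw [← F.map_preimage ((e.hom ≫ f) ≫ (F.commShiftIso n).inv.app X), hX n (F.preimage _)]
    simp
  rw [IsZero.iff_id_eq_zero]
  exact F.map_injective (hz.eq_of_src _ _)

end E1

section E2
variable (R : Type v) [Ring R] [HasDerivedCategory.{w} (ModuleCat.{v} R)]

lemma R_rigid (n : ℤ) (hn : 0 < n) (f : (singleFunctor (ModuleCat.{v} R) 0).obj (ModuleCat.of R R) ⟶
    ((singleFunctor (ModuleCat.{v} R) 0).obj (ModuleCat.of R R))⟦n⟧) : f = 0 := by
  let e := ((singleFunctors (ModuleCat.{v} R)).shiftIso n (-n) 0 (by simp)).app (ModuleCat.of R R)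
  have key : ∀ g : (singleFunctor (ModuleCat.{v} R) 0).obj (ModuleCat.of R R) ⟶
      (singleFunctor (ModuleCat.{v} R) (-n)).obj (ModuleCat.of R R), g = 0 := by
    intro g
    obtain ⟨g', rfl⟩ := (Qh_bij (ModuleCat.of R R) 0 _).2 g
    obtain ⟨g', rfl⟩ := (HomotopyCategory.quotient _ (ComplexShape.up ℤ)).map_surjective g'
    have : g' = 0 := by
      apply HomologicalComplex.from_single_hom_ext
      exact (HomologicalComplex.isZero_single_obj_X (ComplexShape.up ℤ) (-n) _ 0 (by lia)).eq_of_tgt _ _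
    subst this
    rw [Functor.map_zero]
    exact Functor.map_zero _ _ _
  have := key (f ≫ e.hom)
  rw [← cancel_mono e.hom, zero_comp]
  exact this

lemma R_cpt : Cpt.{w'} ((singleFunctor (ModuleCat.{v} R) 0).obj (ModuleCat.of R R)) :=
  cpt_enlarge.{v} (KR_cpt_D R) (fun _ _ => KR_small R _) (KR_gen R)

end E2

section E3
universe v₁ u₁ v₂ u₂
variable {C : Type u₁} [Category.{v₁} C] [Preadditive C] 
  {D : Type u₂} [Category.{v₂} D] [Preadditive D]

/-- endomorphism rings under fully faithful functors -/
noncomputable def endEquiv (F : C ⥤ D) [F.Full] [F.Faithful] [F.Additive] (X : C) : End X ≃+* End (F.obj X) where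
  toFun f := F.map f
  invFun f := F.preimage f
  left_inv f := F.preimage_map f
  right_inv f := F.map_preimage f
  map_mul' f g := F.map_comp g f
  map_add' f g := F.map_add

noncomputable def endIso {X Y : C} (e : X ≅ Y) : End X ≃+* End Y where
  toFun f := e.inv ≫ f ≫ e.hom
  invFun f := e.hom ≫ f ≫ e.inv
  left_inv f := by simp
  right_inv f := by simp
  map_mul' f g := by simp [End.mul_def]
  map_add' f g := by 
    rw [Preadditive.add_comp, Preadditive.comp_add]

end E3
end TiltAux


namespace TiltAux

section Fin
variable (G : Type u) [Category.{v} G] [Abelian G]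
    [HasDerivedCategory.{w} G] [HasExt.{w} G] (T : G)

lemma ext_to_hom (h : ∀ i : ℕ, 0 < i → Subsingleton (Abelian.Ext.{w} T T i)) (n : ℤ) (hn : 0 < n)
    (f : (singleFunctor G 0).obj T ⟶ ((singleFunctor G 0).obj T)⟦n⟧) : f = 0 := by
  obtain ⟨k, rfl⟩ := Int.eq_ofNat_of_zero_le hn.le
  have := h k (by lia)
  exact (Abelian.Ext.homEquiv (X := T) (Y := T) (n := k)).symm.injective (Subsingleton.elim (α := Abelian.Ext.{w} T T k) _ _)

lemma hom_to_ext (h : ∀ (n : ℤ) (_ : 0 < n)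
    (f : (singleFunctor G 0).obj T ⟶ ((singleFunctor G 0).obj T)⟦n⟧), f = 0) (i : ℕ) (hi : 0 < i) :
    Subsingleton (Abelian.Ext.{w} T T i) :=
  ⟨fun a b => Abelian.Ext.homEquiv.injective ((h i (by lia) _).trans (h i (by lia) _).symm)⟩

variable [IsGrothendieckAbelian.{v} G]

lemma forward' [HasDerivedCategory.{w'} (ModuleCat.{v} (End T)ᵐᵒᵖ)] 
    (h1 : IsCompactObj ((singleFunctor G 0).obj T)) 
    (h2 : ∀ i : ℕ, 0 < i → Subsingleton (Abelian.Ext.{w} T T i)) 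
    (h3 : IsTriangulatedGen ((singleFunctor G 0).obj T)) :
    ∃ E : TriangleEquivalenceData (DerivedCategory G)
          (DerivedCategory (ModuleCat.{v} (End T)ᵐᵒᵖ)),
        Nonempty (E.functor.obj ((singleFunctor G 0).obj T)
          ≅ (singleFunctor (ModuleCat.{v} (End T)ᵐᵒᵖ) 0).obj
              (ModuleCat.of (End T)ᵐᵒᵖ (End T)ᵐᵒᵖ)) := by
  have := ab4 (G := G)
  have hc : Cpt.{v} ((singleFunctor G 0).obj T) := cpt_of_compactObj d_hasCop h1
  exact forward T (ext_to_hom G T h2) hc (small_all hc) (gen_of h3)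

omit [IsGrothendieckAbelian.{v} G] in
lemma backward (R : Type v) [Ring R] [HasDerivedCategory.{w'} (ModuleCat.{v} R)]
    (E : TriangleEquivalenceData (DerivedCategory G) (DerivedCategory (ModuleCat.{v} R)))
    (e : E.functor.obj ((DerivedCategory.singleFunctor G 0).obj T)
        ≅ (DerivedCategory.singleFunctor (ModuleCat.{v} R) 0).obj (ModuleCat.of R R)) :
    (IsCompactObj ((singleFunctor G 0).obj T) ∧
        (∀ i : ℕ, 0 < i → Subsingleton (Abelian.Ext.{w} T T i)) ∧
        IsTriangulatedGen ((singleFunctor G 0).obj T)) ∧ Nonempty (R ≃+* (End T)ᵐᵒᵖ) := by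
  obtain ⟨F, hF1, hF2, hF3⟩ := E
  have : F.Additive := inferInstance
  refine ⟨⟨compactObj_of_cpt (cpt_back F e (R_cpt R)), 
    hom_to_ext G T fun n hn f => zero_back F e e n (R_rigid R n hn) f, gen_to (gen_back F e (KR_gen R))⟩, ⟨?_⟩⟩
  have a : Rᵐᵒᵖ ≃+* End T :=
    (RingEquiv.moduleEndSelf R).trans ((ModuleCat.endRingEquiv (ModuleCat.of R R)).symm.trans
     ((endEquiv (singleFunctor (ModuleCat.{v} R) 0) (ModuleCat.of R R)).trans 
      ((endIso e.symm).trans ((endEquiv F _).symm.trans (endEquiv (singleFunctor G 0) T).symm))))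
  exact (RingEquiv.opOp R).trans a.op

end Fin
end TiltAux

theorem statement0 (G : Type u) [Category.{v} G] [Abelian G]
    [HasFilteredColimits G] [AB5 G] [HasSeparator G]
    [HasDerivedCategory.{w} G] [HasExt.{w} G] (T : G) :
    (IsTiltingObject G T ↔
      (IsCompactObj ((singleFunctor G 0).obj T) ∧
        (∀ i : ℕ, 0 < i → Subsingleton (Abelian.Ext T T i)) ∧
        IsTriangulatedGen ((singleFunctor G 0).obj T))) ∧
    (IsTiltingObject G T →
      (∀ (R : Type v) (_ : Ring R),
        letI : HasDerivedCategory (ModuleCat.{v} R) := HasDerivedCategory.standard _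
        ∀ E : TriangleEquivalenceData (DerivedCategory G) (DerivedCategory (ModuleCat.{v} R)),
          Nonempty (E.functor.obj ((singleFunctor G 0).obj T)
              ≅ (singleFunctor (ModuleCat.{v} R) 0).obj (ModuleCat.of R R)) →
            Nonempty (R ≃+* (End T)ᵐᵒᵖ)) ∧
      (letI : HasDerivedCategory (ModuleCat.{v} (End T)ᵐᵒᵖ) := HasDerivedCategory.standard _
       ∃ E : TriangleEquivalenceData (DerivedCategory G)
          (DerivedCategory (ModuleCat.{v} (End T)ᵐᵒᵖ)),
        Nonempty (E.functor.obj ((singleFunctor G 0).obj T)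
          ≅ (singleFunctor (ModuleCat.{v} (End T)ᵐᵒᵖ) 0).obj
              (ModuleCat.of (End T)ᵐᵒᵖ (End T)ᵐᵒᵖ)))) := by
  have hG : IsGrothendieckAbelian.{v} G := {}
  have hb : IsTiltingObject G T → (IsCompactObj ((singleFunctor G 0).obj T) ∧
        (∀ i : ℕ, 0 < i → Subsingleton (Abelian.Ext.{w} T T i)) ∧
        IsTriangulatedGen ((singleFunctor G 0).obj T)) := by
    rintro ⟨R, _, E, ⟨e⟩⟩
    letI : HasDerivedCategory (ModuleCat.{v} R) := HasDerivedCategory.standard _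
    exact (TiltAux.backward G T R E e).1
  letI : HasDerivedCategory (ModuleCat.{v} (End T)ᵐᵒᵖ) := HasDerivedCategory.standard _
  refine ⟨⟨hb, fun ⟨h1, h2, h3⟩ => ⟨(End T)ᵐᵒᵖ, inferInstance, TiltAux.forward' G T h1 h2 h3⟩⟩, fun h => ⟨?_, ?_⟩⟩
  · rintro R _ E ⟨e⟩
    letI : HasDerivedCategory (ModuleCat.{v} R) := HasDerivedCategory.standard _
    exact (TiltAux.backward G T R E e).2
  · obtain ⟨h1, h2, h3⟩ := hb h
    exact TiltAux.forward' G T h1 h2 h3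
end

section
/- Let G be a Grothendieck category with a classical tilting object T such that Ext^{n+1}_G(T,−) ≡ 0 for some n ≥ 0. If X ∈ D(G) satisfies Hom_{D(G)}(Σ^i T, X) = 0 for all i > 0, then the cohomology objects of X satisfy H^i(X) = 0 for all i < −n. -/
/-!
Statement 6: Let `G` be a Grothendieck category with a classical tilting object `T` such that
`Ext^{n+1}_G(T,-) ≡ 0`.  If `X ∈ D(G)` satisfies `Hom(Σ^i T, X) = 0` for all `i > 0`, then
`H^i(X) = 0` for all `i < -n`.
-/

universe w w' v u

open CategoryTheory Category Limits Pretriangulated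

open PaperStmt DerivedCategory

namespace PaperProof

section

variable {C : Type u} [Category.{v} C] [Abelian C] [HasDerivedCategory.{w} C]

/-- A morphism to the cycles of `K` which induces the zero map in the derived category
vanishes after projecting to the homology. -/
lemma comp_homologyπ_eq_zero (K : CochainComplex C ℤ) (i : ℤ) (A : C) (g : A ⟶ K.cycles i)
    (h : ∀ f : (singleFunctor C i).obj A ⟶ Q.obj K, f = 0) : g ≫ K.homologyπ i = 0 := by
  let φ : (HomologicalComplex.single C (ComplexShape.up ℤ) i).obj A ⟶ K :=
    HomologicalComplex.mkHomFromSingle (g ≫ K.iCycles i) (by intro k _; simp)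
  have h0 : Q.map φ = 0 := h (Q.map φ)
  have h1 : HomologicalComplex.homologyMap φ i = 0 := by
    have h2 := homologyFunctorFactors_hom_naturality φ i
    rw [h0, Functor.map_zero, zero_comp] at h2
    exact (cancel_epi ((homologyFunctorFactors C i).hom.app
      ((HomologicalComplex.single C (ComplexShape.up ℤ) i).obj A))).1
        (h2.symm.trans comp_zero.symm)
  have h3 : (HomologicalComplex.singleObjCyclesSelfIso (ComplexShape.up ℤ) i A).inv ≫
      HomologicalComplex.cyclesMap φ i = g := by
    rw [← cancel_mono (K.iCycles i), Category.assoc, HomologicalComplex.cyclesMap_i,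
      HomologicalComplex.singleObjCyclesSelfIso_inv_iCycles_assoc,
      HomologicalComplex.mkHomFromSingle_f, Iso.inv_hom_id_assoc]
  rw [← h3, Category.assoc, ← HomologicalComplex.homologyπ_naturality, h1, comp_zero, comp_zero]

/-- Detection of the vanishing of homology. -/
lemma isZero_homology_of_forall (P : C → Prop)
    (hP : ∀ ⦃M N : C⦄ (f : M ⟶ N), (∀ A, P A → ∀ g : A ⟶ M, g ≫ f = 0) → f = 0)
    (Z : DerivedCategory C) (i : ℤ)
    (h : ∀ A, P A → ∀ f : ((singleFunctor C 0).obj A)⟦-i⟧ ⟶ Z, f = 0) :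
    IsZero ((homologyFunctor C i).obj Z) := by
  let K := Q.objPreimage Z
  let e : Q.obj K ≅ Z := Q.objObjPreimageIso Z
  have h0 : K.homologyπ i = 0 := hP _ (fun A hA g => by
    apply comp_homologyπ_eq_zero
    intro f
    let e' : ((singleFunctor C 0).obj A)⟦-i⟧ ≅ (singleFunctor C i).obj A :=
      ((singleFunctors C).shiftIso (-i) i 0 (by simp)).app A
    rw [← cancel_epi e'.hom, ← cancel_mono e.hom]
    simpa using h A hA (e'.hom ≫ f ≫ e.hom))
  have h1 : IsZero (K.homology i) := by
    rw [IsZero.iff_id_eq_zero, ← cancel_epi (K.homologyπ i), h0, zero_comp, zero_comp]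
  exact h1.of_iso ((homologyFunctor C i).mapIso e.symm ≪≫ (homologyFunctorFactors C i).app K)

lemma shift_hom_eq_zero {D : Type*} [Category D] [Preadditive D] [HasShift D ℤ]
    [∀ n : ℤ, (shiftFunctor D n).Additive] (t a : D) (p q k : ℤ) (hk : p + k = q)
    (h : ∀ f : t ⟶ a⟦k⟧, f = 0) (f : t⟦p⟧ ⟶ a⟦q⟧) : f = 0 := by
  let e : a⟦q⟧ ≅ (a⟦k⟧)⟦p⟧ := (shiftFunctorAdd' D k p q (by omega)).app a
  obtain ⟨g, hg⟩ := (shiftFunctor D p).map_surjective (f ≫ e.hom)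
  rw [h g, Functor.map_zero] at hg
  rw [← cancel_mono e.hom, ← hg, zero_comp]

lemma functor_hom_eq_zero {D₁ : Type*} {D₂ : Type*} [Category D₁] [Category D₂]
    [Preadditive D₁] [Preadditive D₂] [HasShift D₁ ℤ] [HasShift D₂ ℤ]
    (F : D₁ ⥤ D₂) [F.CommShift ℤ] [F.Full] [F.PreservesZeroMorphisms] (t X : D₁) (r : D₂)
    (e : F.obj t ≅ r) (i : ℤ)
    (h : ∀ f : t⟦i⟧ ⟶ X, f = 0) (f : r⟦i⟧ ⟶ F.obj X) : f = 0 := by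
  let e' : F.obj (t⟦i⟧) ≅ r⟦i⟧ :=
    (F.commShiftIso i).app t ≪≫ (shiftFunctor D₂ i).mapIso e
  obtain ⟨g, hg⟩ := F.map_surjective (e'.hom ≫ f)
  rw [h g, Functor.map_zero] at hg
  rw [← cancel_epi e'.hom, ← hg, comp_zero]

lemma ext_subsingleton [EnoughInjectives C] [HasExt.{w'} C] (T : C) (n : ℕ)
    (hext : ∀ X : C, Subsingleton (Abelian.Ext.{w'} T X (n + 1))) (k : ℕ) :
    ∀ X : C, Subsingleton (Abelian.Ext.{w'} T X (n + 1 + k)) := by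
  induction k with
  | zero => exact hext
  | succ k ih =>
    intro X
    have hS : (ShortComplex.mk (Injective.ι X) (cokernel.π (Injective.ι X))
      (by simp)).ShortExact :=
      { exact := ShortComplex.exact_cokernel _ }
    have key : ∀ x : Abelian.Ext.{w'} T X (n + 1 + (k + 1)), x = 0 := by
      intro x
      obtain ⟨y, rfl⟩ := Abelian.Ext.covariant_sequence_exact₁ T hS x
        (Abelian.Ext.eq_zero_of_injective (n := n + 1 + k) _) (n₀ := n + 1 + k) rfl
      have := ih (cokernel (Injective.ι X))
      rw [Subsingleton.elim y 0, Abelian.Ext.zero_comp]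
    exact ⟨fun x y => by rw [key x, key y]⟩

end

end PaperProof

theorem statement6 (G : Type u) [Category.{v} G] [Abelian G]
    [HasFilteredColimits G] [AB5 G] [HasSeparator G]
    [HasDerivedCategory.{w} G] [HasExt.{w} G]
    (T : G) (hT : IsTiltingObject G T) (n : ℕ)
    (hext : ∀ X : G, Subsingleton (Abelian.Ext T X (n + 1)))
    (X : DerivedCategory G)
    (hX : ∀ i : ℤ, 0 < i → ∀ f : (((singleFunctor G 0).obj T)⟦i⟧ ⟶ X), f = 0) :
    ∀ i : ℤ, i < -(n : ℤ) → IsZero ((homologyFunctor G i).obj X) := by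
  have : IsGrothendieckAbelian.{v} G := {}
  obtain ⟨R, _, hE⟩ := hT
  letI : HasDerivedCategory (ModuleCat.{v} R) := HasDerivedCategory.standard _
  obtain ⟨E, ⟨e⟩⟩ := hE
  let F := E.functor
  letI : F.CommShift ℤ := E.commShift
  haveI : F.IsTriangulated := E.isTriangulated
  haveI : F.IsEquivalence := E.isEquivalence
  -- vanishing of the maps from shifts of `T`
  have hom0 : ∀ (A : G) (p q : ℤ), p + (n + 1) ≤ q →
      ∀ f : (((singleFunctor G 0).obj T)⟦p⟧ ⟶ ((singleFunctor G 0).obj A)⟦q⟧), f = 0 := by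
    intro A p q hpq
    obtain ⟨k, hk⟩ := Int.le.dest hpq
    refine PaperProof.shift_hom_eq_zero _ _ p q ((n + 1 + k : ℕ) : ℤ) (by push_cast; omega) ?_
    intro f
    have := PaperProof.ext_subsingleton T n hext k A
    exact (Abelian.Ext.homEquiv (X := T) (Y := A) (n := n + 1 + k)).symm.subsingleton.elim f 0
  -- homology of objects of `D(R)` is detected by maps from shifts of `R`
  have detect : ∀ (Y : DerivedCategory G) (j : ℤ),
      (∀ f : (((singleFunctor G 0).obj T)⟦-j⟧ ⟶ Y), f = 0) →
      IsZero ((homologyFunctor (ModuleCat.{v} R) j).obj (F.obj Y)) := by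
    intro Y j hY
    refine PaperProof.isZero_homology_of_forall (fun A => A = ModuleCat.of R R) ?_ _ _ ?_
    · intro M N f hf
      ext x
      have h := hf _ rfl (ModuleCat.ofHom (LinearMap.toSpanSingleton R M x))
      have h' := congrArg (fun φ => φ.hom (1 : R)) h
      simpa using h'
    · rintro _ rfl f
      exact PaperProof.functor_hom_eq_zero F _ _ _ e (-j) hY f
  have hge : (F.obj X).IsGE 0 := by
    rw [isGE_iff]
    exact fun i hi => detect X i (hX (-i) (by omega))
  intro i hi
  refine PaperProof.isZero_homology_of_forall (fun _ => True) ?_ _ _ ?_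
  · intro M N f hf
    simpa using hf M trivial (𝟙 M)
  · intro A _ f
    have hle : (F.obj (((singleFunctor G 0).obj A)⟦-i⟧)).IsLE (-1) := by
      rw [isLE_iff]
      exact fun j hj => detect _ j (hom0 A (-j) (-i) (by omega))
    apply F.map_injective
    rw [Functor.map_zero]
    exact TStructure.t.zero_of_isLE_of_isGE _ (-1) 0 (by omega) hle hge
end

section
/- Let R be a ring, C a big cotilting right R-module with cotilting class X_C, and let F_0 = {F ∈ Mod-R : Ext^1_R(X,F) = 0 for all X ∈ X_C}. If Z is a cochain complex of R-modules all of whose components belong to X_C, and X is an acyclic cochain complex of R-modules all of whose cocycle modules belong to F_0, then every chain map Z → X is null-homotopic, i.e., Hom_{K(R)}(Z, X) = 0 in the homotopy category of complexes. -/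
/-!
Statement 10: Let `R` be a ring, `C` a big cotilting module with cotilting class `X_C`, and
`F₀` its right `Ext¹`-orthogonal.  If `Z` is a complex with components in `X_C` and `X` is an
acyclic complex whose cocycles lie in `F₀`, then every chain map `Z ⟶ X` is null-homotopic.
-/

universe e w v u

open CategoryTheory Category Limits

namespace PaperStmt

variable {R : Type v} [Ring R]

/-- `M` belongs to `Prod C`: it is a direct summand of a product of copies of `C`. -/
def InProdOf (C M : ModuleCat.{v} R) : Prop :=
  ∃ (ι : Type v) (s : M ⟶ ∏ᶜ (fun _ : ι => C)) (r : (∏ᶜ (fun _ : ι => C)) ⟶ M),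
    s ≫ r = 𝟙 M

/-- `C` has injective dimension at most `n`. -/
def InjDimLE (C : ModuleCat.{v} R) (n : ℕ) : Prop :=
  ∃ S : ComposableArrows (ModuleCat.{v} R) (n + 3),
    S.Exact ∧ IsZero (S.obj 0) ∧ IsZero (S.obj (Fin.last (n + 3))) ∧
    Nonempty (S.obj ⟨1, by omega⟩ ≅ C) ∧
    ∀ (i : ℕ) (_ : 2 ≤ i) (_ : i ≤ n + 2), Injective (S.obj ⟨i, by omega⟩)

/-- `C` is a big `n`-cotilting module. -/
def IsBigNCotilting [HasExt.{e} (ModuleCat.{v} R)] (n : ℕ) (C : ModuleCat.{v} R) : Prop :=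
  InjDimLE C n ∧
  (∀ (ι : Type v) (j : ℕ), 0 < j →
      Subsingleton (Abelian.Ext (∏ᶜ (fun _ : ι => C)) C j)) ∧
  (∃ (r : ℕ) (S : ComposableArrows (ModuleCat.{v} R) (r + 3)),
    S.Exact ∧ IsZero (S.obj 0) ∧ IsZero (S.obj (Fin.last (r + 3))) ∧
    (∀ (i : ℕ) (_ : 1 ≤ i) (_ : i ≤ r + 1), InProdOf C (S.obj ⟨i, by omega⟩)) ∧
    Injective (S.obj ⟨r + 2, by omega⟩) ∧ IsCoseparator (S.obj ⟨r + 2, by omega⟩))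

/-- `C` is a big cotilting module. -/
def IsBigCotilting [HasExt.{e} (ModuleCat.{v} R)] (C : ModuleCat.{v} R) : Prop :=
  ∃ n : ℕ, IsBigNCotilting n C

/-- Membership in the cotilting class `X_C = {M : Ext^i(M, C) = 0 for all i > 0}`. -/
def InCotiltingClass [HasExt.{e} (ModuleCat.{v} R)] (C M : ModuleCat.{v} R) : Prop :=
  ∀ i : ℕ, 0 < i → Subsingleton (Abelian.Ext M C i)

/-- Membership in `F₀ = {F : Ext¹(X, F) = 0 for all X ∈ X_C}`. -/
def InF0 [HasExt.{e} (ModuleCat.{v} R)] (C F : ModuleCat.{v} R) : Prop :=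
  ∀ M : ModuleCat.{v} R, InCotiltingClass C M → Subsingleton (Abelian.Ext M F 1)

end PaperStmt

open PaperStmt

section ExtLemmas

variable {𝓐 : Type u} [Category.{v} 𝓐] [Abelian 𝓐] [HasExt.{e} 𝓐]

open Abelian

lemma ext_sub_of_forall {X Y : 𝓐} {n : ℕ} (h : ∀ x : Ext X Y n, x = 0) :
    Subsingleton (Ext X Y n) := ⟨fun a b => by rw [h a, h b]⟩

lemma ext_cov_mid {S : ShortComplex 𝓐} (hS : S.ShortExact) (X : 𝓐) (n : ℕ)
    (h1 : Subsingleton (Ext X S.X₁ n)) (h3 : Subsingleton (Ext X S.X₃ n)) :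
    Subsingleton (Ext X S.X₂ n) := by
  refine ext_sub_of_forall fun x => ?_
  obtain ⟨y, rfl⟩ := Ext.covariant_sequence_exact₂ X hS x (Subsingleton.elim _ _)
  rw [Subsingleton.elim y 0, Ext.zero_comp]

lemma ext_cov_right {S : ShortComplex 𝓐} (hS : S.ShortExact) (X : 𝓐) (n : ℕ)
    (h2 : Subsingleton (Ext X S.X₂ n)) (h1 : Subsingleton (Ext X S.X₁ (n + 1))) :
    Subsingleton (Ext X S.X₃ n) := by
  refine ext_sub_of_forall fun x => ?_
  obtain ⟨y, rfl⟩ := Ext.covariant_sequence_exact₃ X hS x rfl (Subsingleton.elim _ _)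
  rw [Subsingleton.elim y 0, Ext.zero_comp]

lemma ext_cov_left {S : ShortComplex 𝓐} (hS : S.ShortExact) (X : 𝓐) (n : ℕ)
    (h3 : Subsingleton (Ext X S.X₃ n)) (h2 : Subsingleton (Ext X S.X₂ (n + 1))) :
    Subsingleton (Ext X S.X₁ (n + 1)) := by
  refine ext_sub_of_forall fun x => ?_
  obtain ⟨y, rfl⟩ := Ext.covariant_sequence_exact₁ X hS x (Subsingleton.elim _ _) rfl
  rw [Subsingleton.elim y 0, Ext.zero_comp]

lemma ext_con_mid {S : ShortComplex 𝓐} (hS : S.ShortExact) (Y : 𝓐) (n : ℕ)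
    (h1 : Subsingleton (Ext S.X₁ Y n)) (h3 : Subsingleton (Ext S.X₃ Y n)) :
    Subsingleton (Ext S.X₂ Y n) := by
  refine ext_sub_of_forall fun x => ?_
  obtain ⟨y, rfl⟩ := Ext.contravariant_sequence_exact₂ hS Y x (Subsingleton.elim _ _)
  rw [Subsingleton.elim y 0, Ext.comp_zero]

lemma ext_con_left {S : ShortComplex 𝓐} (hS : S.ShortExact) (Y : 𝓐) (n : ℕ)
    (h2 : Subsingleton (Ext S.X₂ Y n)) (h3 : Subsingleton (Ext S.X₃ Y (n + 1))) :
    Subsingleton (Ext S.X₁ Y n) := by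
  refine ext_sub_of_forall fun x => ?_
  obtain ⟨y, rfl⟩ := Ext.contravariant_sequence_exact₁ hS Y x (add_comm 1 n)
    (Subsingleton.elim _ _)
  rw [Subsingleton.elim y 0, Ext.comp_zero]

lemma ext_con_right {S : ShortComplex 𝓐} (hS : S.ShortExact) (Y : 𝓐) (n : ℕ)
    (h1 : Subsingleton (Ext S.X₁ Y n)) (h2 : Subsingleton (Ext S.X₂ Y (n + 1))) :
    Subsingleton (Ext S.X₃ Y (n + 1)) := by
  refine ext_sub_of_forall fun x => ?_
  obtain ⟨y, rfl⟩ := Ext.contravariant_sequence_exact₃ hS Y x (Subsingleton.elim _ _)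
    (add_comm 1 n)
  rw [Subsingleton.elim y 0, Ext.comp_zero]

lemma ext_lift {S : ShortComplex 𝓐} (hS : S.ShortExact) {X : 𝓐}
    (h : Subsingleton (Ext X S.X₁ 1)) (a : X ⟶ S.X₃) : ∃ b : X ⟶ S.X₂, b ≫ S.g = a := by
  obtain ⟨y, hy⟩ := Ext.covariant_sequence_exact₃ X hS (Ext.mk₀ a) (zero_add 1)
    (Subsingleton.elim _ _)
  obtain ⟨b, rfl⟩ := Ext.homEquiv₀.symm.surjective y
  refine ⟨b, Ext.homEquiv₀.symm.injective ?_⟩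
  simpa using hy

/-- If every map `X₁ ⟶ Y` extends to `X₂` and `Ext¹(X₂, Y) = 0`, then `Ext¹(X₃, Y) = 0`. -/
lemma ext_one_of_extend {S : ShortComplex 𝓐} (hS : S.ShortExact) {Y : 𝓐}
    (h2 : Subsingleton (Ext S.X₂ Y 1))
    (h : ∀ a : S.X₁ ⟶ Y, ∃ b : S.X₂ ⟶ Y, S.f ≫ b = a) :
    Subsingleton (Ext S.X₃ Y 1) := by
  refine ext_sub_of_forall fun x => ?_
  obtain ⟨y, rfl⟩ := Ext.contravariant_sequence_exact₃ hS Y x (Subsingleton.elim _ _)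
    (add_zero 1)
  obtain ⟨a, rfl⟩ := Ext.homEquiv₀.symm.surjective y
  obtain ⟨b, rfl⟩ := h a
  have : Ext.homEquiv₀.symm (S.f ≫ b) = (Ext.mk₀ S.f).comp (Ext.mk₀ b) (zero_add 0) := by simp
  rw [this]
  exact hS.extClass_comp_assoc _

lemma ext_extend {S : ShortComplex 𝓐} (hS : S.ShortExact) {Y : 𝓐}
    (h : Subsingleton (Ext S.X₃ Y 1)) (a : S.X₁ ⟶ Y) : ∃ b : S.X₂ ⟶ Y, S.f ≫ b = a := by
  obtain ⟨y, hy⟩ := Ext.contravariant_sequence_exact₁ hS Y (Ext.mk₀ a) (add_zero 1)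
    (Subsingleton.elim _ _)
  obtain ⟨b, rfl⟩ := Ext.homEquiv₀.symm.surjective y
  refine ⟨b, Ext.homEquiv₀.symm.injective ?_⟩
  simpa using hy

lemma ext_zero_right {X Y : 𝓐} (hY : IsZero Y) (n : ℕ) : Subsingleton (Ext X Y n) := by
  refine ext_sub_of_forall fun x => ?_
  rw [← Ext.comp_mk₀_id x, hY.eq_of_src (𝟙 Y) 0, Ext.mk₀_zero, Ext.comp_zero]

lemma ext_retract_right {X Y Y' : 𝓐} (s : Y ⟶ Y') (r : Y' ⟶ Y) (h : s ≫ r = 𝟙 Y) (n : ℕ)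
    (hY : Subsingleton (Ext X Y' n)) : Subsingleton (Ext X Y n) := by
  refine ext_sub_of_forall fun x => ?_
  have : (x.comp (Ext.mk₀ s) (add_zero n)).comp (Ext.mk₀ r) (add_zero n) = x := by
    rw [Ext.comp_assoc_of_third_deg_zero, Ext.mk₀_comp_mk₀, h, Ext.comp_mk₀_id]
  rw [← this, Subsingleton.elim (x.comp (Ext.mk₀ s) (add_zero n)) 0, Ext.zero_comp]

lemma ext_retract_left {X Y Y' : 𝓐} (s : Y ⟶ Y') (r : Y' ⟶ Y) (h : s ≫ r = 𝟙 Y) (n : ℕ)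
    (hY : Subsingleton (Ext Y' X n)) : Subsingleton (Ext Y X n) := by
  refine ext_sub_of_forall fun x => ?_
  have : (Ext.mk₀ s).comp ((Ext.mk₀ r).comp x (zero_add n)) (zero_add n) = x := by
    rw [Ext.mk₀_comp_mk₀_assoc, h, Ext.mk₀_id_comp]
  rw [← this, Subsingleton.elim ((Ext.mk₀ r).comp x (zero_add n)) 0, Ext.comp_zero]

end ExtLemmas

section ShortExactLemmas

variable {𝓐 : Type u} [Category.{v} 𝓐] [Abelian 𝓐]

lemma shortExact_kernel {A B : 𝓐} (g : A ⟶ B) [Epi g] :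
    (ShortComplex.mk (kernel.ι g) g (kernel.condition g)).ShortExact where
  exact := ShortComplex.exact_of_f_is_kernel _ (kernelIsKernel g)
  mono_f := inferInstanceAs (Mono (kernel.ι g))
  epi_g := ‹_›

lemma shortExact_cokernel {A B : 𝓐} (g : A ⟶ B) [Mono g] :
    (ShortComplex.mk g (cokernel.π g) (cokernel.condition g)).ShortExact where
  exact := ShortComplex.exact_of_g_is_cokernel _ (cokernelIsCokernel g)
  epi_g := inferInstanceAs (Epi (cokernel.π g))
  mono_f := ‹_›

/-- Recognition of exactness from the cokernel property. -/
lemma exact_of_desc (S : ShortComplex 𝓐) [Epi S.g]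
    (h : ∀ (T : 𝓐) (t : S.X₂ ⟶ T), S.f ≫ t = 0 → ∃ q : S.X₃ ⟶ T, S.g ≫ q = t) : S.Exact := by
  refine ShortComplex.exact_of_g_is_cokernel _
    (CokernelCofork.IsColimit.ofπ _ _ (fun t ht => (h _ t ht).choose)
      (fun t ht => (h _ t ht).choose_spec) ?_)
  intro T t ht m hm
  rw [← cancel_epi S.g, hm, (h _ t ht).choose_spec]

/-- Recognition of exactness from the kernel property. -/
lemma exact_of_lift (S : ShortComplex 𝓐) [Mono S.f]
    (h : ∀ (T : 𝓐) (t : T ⟶ S.X₂), t ≫ S.g = 0 → ∃ q : T ⟶ S.X₁, q ≫ S.f = t) : S.Exact := by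
  refine ShortComplex.exact_of_f_is_kernel _
    (KernelFork.IsLimit.ofι _ _ (fun t ht => (h _ t ht).choose)
      (fun t ht => (h _ t ht).choose_spec) ?_)
  intro T t ht m hm
  rw [← cancel_mono S.f, hm, (h _ t ht).choose_spec]

lemma shortExact_pushout {S : ShortComplex 𝓐} (hS : S.ShortExact) {Y : 𝓐} (a : S.X₁ ⟶ Y) :
    (ShortComplex.mk (pushout.inr S.f a) (pushout.desc S.g 0 (by simp))
      (pushout.inr_desc _ _ _)).ShortExact := by
  have := hS.mono_f
  have := hS.epi_g
  have hepi : Epi (pushout.desc S.g 0 (by simp) : pushout S.f a ⟶ S.X₃) :=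
    epi_of_epi_fac (pushout.inl_desc S.g (0 : Y ⟶ S.X₃) (by simp))
  refine { exact := ?_, mono_f := ?_, epi_g := hepi }
  · have : Epi (ShortComplex.mk (pushout.inr S.f a) (pushout.desc S.g 0 (by simp))
      (pushout.inr_desc _ _ _)).g := hepi
    refine exact_of_desc _ fun T t ht => ?_
    dsimp at t ht ⊢
    have h0 : S.f ≫ (pushout.inl S.f a ≫ t) = 0 := by
      rw [pushout.condition_assoc, ht, comp_zero]
    refine ⟨hS.exact.desc _ h0, ?_⟩
    apply pushout.hom_ext
    · rw [pushout.inl_desc_assoc, hS.exact.g_desc]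
    · rw [pushout.inr_desc_assoc, zero_comp, ht]
  · dsimp
    infer_instance

lemma shortExact_pushout' {S : ShortComplex 𝓐} (hS : S.ShortExact) {Y : 𝓐} (u : S.X₂ ⟶ Y)
    [Mono u] :
    (ShortComplex.mk (S.f ≫ u) (pushout.inl u S.g)
      (by rw [assoc, pushout.condition, S.zero_assoc, zero_comp])).ShortExact := by
  have := hS.mono_f
  have := hS.epi_g
  have hepi : Epi (pushout.inl u S.g) := inferInstance
  refine { exact := ?_, mono_f := mono_comp _ _, epi_g := hepi }
  have : Epi (ShortComplex.mk (S.f ≫ u) (pushout.inl u S.g)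
      (by rw [assoc, pushout.condition, S.zero_assoc, zero_comp])).g := hepi
  refine exact_of_desc _ fun T t ht => ?_
  dsimp at t ht ⊢
  rw [assoc] at ht
  exact ⟨pushout.desc t (hS.exact.desc _ ht) (hS.exact.g_desc _ ht).symm, pushout.inl_desc _ _ _⟩

end ShortExactLemmas

section Cotilting

variable {R : Type v} [Ring R] [HasExt.{e} (ModuleCat.{v} R)]

open Abelian

lemma ext_proj {P : ModuleCat.{v} R} [Projective P] (Y : ModuleCat.{v} R) {i : ℕ} (hi : 0 < i) :
    Subsingleton (Ext P Y i) := by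
  obtain ⟨i, rfl⟩ := Nat.exists_eq_succ_of_ne_zero hi.ne'
  exact ext_sub_of_forall fun x => x.eq_zero_of_projective

lemma ext_inj {P : ModuleCat.{v} R} [Injective P] (Y : ModuleCat.{v} R) {i : ℕ} (hi : 0 < i) :
    Subsingleton (Ext Y P i) := by
  obtain ⟨i, rfl⟩ := Nat.exists_eq_succ_of_ne_zero hi.ne'
  exact ext_sub_of_forall fun x => x.eq_zero_of_injective

lemma inCC_proj (C P : ModuleCat.{v} R) [Projective P] : InCotiltingClass C P :=
  fun _ hi => ext_proj C hi

lemma inCC_left {C : ModuleCat.{v} R} {S : ShortComplex (ModuleCat.{v} R)} (hS : S.ShortExact)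
    (h2 : InCotiltingClass C S.X₂) (h3 : InCotiltingClass C S.X₃) :
    InCotiltingClass C S.X₁ :=
  fun i hi => ext_con_left hS C i (h2 i hi) (h3 (i + 1) (Nat.succ_pos _))

lemma inCC_mid {C : ModuleCat.{v} R} {S : ShortComplex (ModuleCat.{v} R)} (hS : S.ShortExact)
    (h1 : InCotiltingClass C S.X₁) (h3 : InCotiltingClass C S.X₃) :
    InCotiltingClass C S.X₂ :=
  fun i hi => ext_con_mid hS C i (h1 i hi) (h3 i hi)

/-- The pair is hereditary. -/
lemma inF0_ext {C F : ModuleCat.{v} R} (hF : InF0 C F) (i : ℕ) :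
    ∀ M : ModuleCat.{v} R, InCotiltingClass C M → Subsingleton (Ext M F (i + 1)) := by
  induction i with
  | zero => exact hF
  | succ i ih =>
    intro M hM
    have hS := shortExact_kernel (Projective.π M)
    exact ext_con_right hS F (i + 1) (ih _ (inCC_left hS (inCC_proj C _) hM))
      (ext_proj F (Nat.succ_pos _))

lemma inF0_mid {C : ModuleCat.{v} R} {S : ShortComplex (ModuleCat.{v} R)} (hS : S.ShortExact)
    (h1 : InF0 C S.X₁) (h3 : InF0 C S.X₃) : InF0 C S.X₂ :=
  fun M hM => ext_cov_mid hS M 1 (h1 M hM) (h3 M hM)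

lemma inF0_right {C : ModuleCat.{v} R} {S : ShortComplex (ModuleCat.{v} R)} (hS : S.ShortExact)
    (h1 : InF0 C S.X₁) (h2 : InF0 C S.X₂) : InF0 C S.X₃ :=
  fun M hM => ext_cov_right hS M 1 (h2 M hM) (inF0_ext h1 1 M hM)

lemma inF0_prod (C : ModuleCat.{v} R) (ι : Type v) : InF0 C (∏ᶜ (fun _ : ι => C)) := by
  intro M hM
  have hS := shortExact_kernel (Projective.π M)
  refine ext_one_of_extend hS (ext_proj _ one_pos) fun a => ?_
  have := fun j : ι => ext_extend hS (hM 1 one_pos) (a ≫ Pi.π _ j)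
  choose b hb using this
  refine ⟨Pi.lift b, Pi.hom_ext _ _ fun j => ?_⟩
  rw [assoc, Pi.lift_π, hb]

lemma inF0_of_inProd {C M : ModuleCat.{v} R} (h : InProdOf C M) : InF0 C M := by
  obtain ⟨ι, s, r, hsr⟩ := h
  exact fun N hN => ext_retract_right s r hsr 1 (inF0_prod C ι N hN)

end Cotilting

section Steps

variable {R : Type v} [Ring R]

lemma shortExact_step {n : ℕ} {S : ComposableArrows (ModuleCat.{v} R) n} (hS : S.Exact)
    (i : ℕ) (hi : i + 2 ≤ n) :
    ∃ (f : kernel (S.map' i (i + 1)) ⟶ S.obj ⟨i, by omega⟩)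
      (g : S.obj ⟨i, by omega⟩ ⟶ kernel (S.map' (i + 1) (i + 2))) (w : f ≫ g = 0),
      (ShortComplex.mk f g w).ShortExact := by
  have hz := hS.toIsComplex.zero i hi
  have hw : kernel.ι (S.map' i (i + 1)) ≫ kernel.lift (S.map' (i + 1) (i + 2)) _ hz = 0 := by
    rw [← cancel_mono (kernel.ι _), assoc, kernel.lift_ι, kernel.condition, zero_comp]
  have hepi : Epi (kernel.lift (S.map' (i + 1) (i + 2)) _ hz) :=
    (hS.exact i hi).epi_kernelLift
  refine ⟨kernel.ι _, kernel.lift _ _ hz, hw, { exact := ?_, mono_f := ?_, epi_g := hepi }⟩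
  · have : Mono (ShortComplex.mk _ _ hw).f := inferInstanceAs (Mono (kernel.ι _))
    refine exact_of_lift _ fun T t ht => ?_
    dsimp at t ht ⊢
    refine ⟨kernel.lift _ t ?_, kernel.lift_ι _ _ _⟩
    have := ht =≫ kernel.ι _
    rwa [assoc, kernel.lift_ι, zero_comp] at this
  · exact inferInstanceAs (Mono (kernel.ι _))

lemma kernel_one_isZero {n : ℕ} {S : ComposableArrows (ModuleCat.{v} R) n} (hS : S.Exact)
    (hn : 2 ≤ n) (h0 : IsZero (S.obj ⟨0, by omega⟩)) : IsZero (kernel (S.map' 1 2)) := by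
  obtain ⟨f, g, w, h⟩ := shortExact_step hS 0 hn
  have := h.epi_g
  refine IsZero.of_epi g h0

end Steps

section Cotilting

variable {R : Type v} [Ring R] [HasExt.{e} (ModuleCat.{v} R)]

open Abelian

/-- Finite injective dimension gives the vanishing of Ext. -/
lemma injDim_ext {C : ModuleCat.{v} R} {n : ℕ} (hC : InjDimLE C n) (M : ModuleCat.{v} R) (j : ℕ)
    (hj : n < j) : Subsingleton (Ext M C j) := by
  obtain ⟨S, hS, h0, hl, ⟨e⟩, hI⟩ := hC
  have key : ∀ k i : ℕ, ∀ (_ : 2 ≤ i) (_ : i + k = n + 2), ∀ j, k < j →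
      Subsingleton (Ext M (kernel (S.map' i (i + 1))) j) := by
    intro k
    induction k with
    | zero =>
      intro i hi hik j hj
      obtain rfl : i = n + 2 := hik
      have hinj : Injective (S.obj ⟨n + 2, by omega⟩) := hI (n + 2) (by omega) (by omega)
      have : S.map' (n + 2) (n + 2 + 1) = 0 := hl.eq_of_tgt _ _
      refine ext_retract_right (kernel.ι _) (kernel.lift _ (𝟙 _) (by rw [this, comp_zero])) ?_ j
        (ext_inj M hj)
      rw [← cancel_mono (kernel.ι _), assoc, kernel.lift_ι, comp_id, id_comp]
    | succ k ih =>
      intro i hi hik j hj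
      obtain ⟨j, rfl⟩ := Nat.exists_eq_succ_of_ne_zero (show j ≠ 0 by omega)
      obtain ⟨f, g, w, h⟩ := shortExact_step hS i (by omega)
      have hinj : Injective (S.obj ⟨i, by omega⟩) := hI i (by omega) (by omega)
      exact ext_cov_left h M j (ih (i + 1) (by omega) (by omega) j (by omega))
        (ext_inj M (Nat.succ_pos _))
  obtain ⟨f, g, w, h⟩ := shortExact_step hS 1 (by omega)
  have h1 : Subsingleton (Ext M (S.obj ⟨1, by omega⟩) j) :=
    ext_cov_mid h M j (ext_zero_right (kernel_one_isZero hS (by omega) h0) j)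
      (key n 2 le_rfl (by omega) j hj)
  exact ext_retract_right e.inv e.hom e.inv_hom_id j h1

/-- Maps from the cotilting class to the cogenerator lift to `Prod C`. -/
lemma cogen {C : ModuleCat.{v} R} {n : ℕ} (hC : IsBigNCotilting n C) {A : ModuleCat.{v} R}
    (hA : InCotiltingClass C A) :
    Mono (Pi.lift (fun f : A ⟶ C => f) : A ⟶ ∏ᶜ (fun _ : (A ⟶ C) => C)) := by
  obtain ⟨-, -, r, S, hS, h0, hl, hP, -, hQ⟩ := hC
  have key : ∀ i : ℕ, ∀ (hi : i ≤ r), ∀ j, 0 < j →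
      Subsingleton (Ext A (kernel (S.map' (i + 1) (i + 2))) j) := by
    intro i
    induction i with
    | zero => exact fun _ j _ => ext_zero_right (kernel_one_isZero hS (by omega) h0) j
    | succ i ih =>
      intro hi j hj
      obtain ⟨f, g, w, h⟩ := shortExact_step hS (i + 1) (by omega)
      obtain ⟨j, rfl⟩ := Nat.exists_eq_succ_of_ne_zero hj.ne'
      exact ext_cov_right h A (j + 1)
        (inF0_ext (inF0_of_inProd (hP (i + 1) (by omega) (by omega))) j A hA)
        (ih (by omega) _ (Nat.succ_pos _))
  have hepi : Epi (S.map' (r + 1) (r + 2)) :=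
    (hS.exact (r + 1) (by omega)).epi_f (hl.eq_of_tgt _ _)
  let φ := S.map' (r + 1) (r + 2)
  have : Epi φ := hepi
  have hse := shortExact_kernel φ
  have hlift : ∀ a : A ⟶ S.obj ⟨r + 2, by omega⟩, ∃ b : A ⟶ S.obj ⟨r + 1, by omega⟩,
      b ≫ S.map' (r + 1) (r + 2) = a := fun a =>
    ext_lift hse (key r le_rfl 1 one_pos) a
  obtain ⟨ι, s, t, hst⟩ := hP (r + 1) (by omega) le_rfl
  refine Preadditive.mono_of_cancel_zero _ fun {T} g hg => ?_
  refine hQ g 0 fun G hG h => ?_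
  obtain rfl : S.obj ⟨r + 2, by omega⟩ = G := by simpa using hG
  obtain ⟨b, hb⟩ := hlift h
  have hb0 : g ≫ b = 0 := by
    have : g ≫ b ≫ s = 0 := by
      refine Pi.hom_ext _ _ fun j => ?_
      have := hg =≫ Pi.π _ (b ≫ s ≫ Pi.π _ j)
      simpa using this
    have h' := this =≫ t
    rwa [assoc, assoc, hst, comp_id, zero_comp] at h'
  rw [← hb, ← assoc, hb0, zero_comp, zero_comp]

lemma inCC_prod {C : ModuleCat.{v} R} {n : ℕ} (hC : IsBigNCotilting n C) (ι : Type v) :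
    InCotiltingClass C (∏ᶜ (fun _ : ι => C)) := fun i hi => hC.2.1 ι i hi

/-- The universal map to a product of copies of `C` has cokernel in the cotilting class. -/
lemma inCC_coker {C : ModuleCat.{v} R} {n : ℕ} (hC : IsBigNCotilting n C) {A : ModuleCat.{v} R}
    (hA : InCotiltingClass C A) :
    InCotiltingClass C (cokernel (Pi.lift (fun f : A ⟶ C => f))) := by
  have := cogen hC hA
  have hS := shortExact_cokernel (Pi.lift (fun f : A ⟶ C => f))
  intro i hi
  obtain ⟨i, rfl⟩ := Nat.exists_eq_succ_of_ne_zero hi.ne'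
  cases i with
  | zero =>
    exact ext_one_of_extend hS (inCC_prod hC _ 1 one_pos) fun a => ⟨Pi.π _ a, by simp⟩
  | succ i =>
    exact ext_con_right hS C (i + 1) (hA _ (Nat.succ_pos _)) (inCC_prod hC _ _ (Nat.succ_pos _))

/-- Special precovers: an exact sequence `0 → N → A → M → 0`, `A ∈ X_C`, `N ∈ F₀`. -/
def HasPrecover (C M : ModuleCat.{v} R) : Prop :=
  ∃ (N A : ModuleCat.{v} R) (f : N ⟶ A) (g : A ⟶ M) (w : f ≫ g = 0),
    (ShortComplex.mk f g w).ShortExact ∧ InCotiltingClass C A ∧ InF0 C N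

lemma hasPrecover_aux {C : ModuleCat.{v} R} {n : ℕ} (hC : IsBigNCotilting n C) (k : ℕ) :
    ∀ M : ModuleCat.{v} R, (∀ j, k < j → Subsingleton (Ext M C j)) → HasPrecover C M := by
  induction k with
  | zero =>
    intro M hM
    refine ⟨kernel (𝟙 M), M, _, 𝟙 M, _, shortExact_kernel (𝟙 M), hM, ?_⟩
    exact fun N _ => ext_zero_right (isZero_kernel_of_mono _) 1
  | succ k ih =>
    intro M hM
    have hP := shortExact_kernel (Projective.π M)
    obtain ⟨N, A, f, g, w, hS, hA, hN⟩ := ih (kernel (Projective.π M)) fun j hj =>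
      ext_con_left hP C j (ext_proj C (by omega)) (hM (j + 1) (by omega))
    have := cogen hC hA
    have hB := inCC_coker hC hA
    have h1 := shortExact_pushout' hS (Pi.lift (fun f : A ⟶ C => f))
    have h2 := shortExact_pushout (shortExact_cokernel (Pi.lift (fun f : A ⟶ C => f))) g
    have hW := inF0_right h1 hN (inF0_prod C _)
    have h3 := shortExact_pushout hP (pushout.inr (Pi.lift (fun f : A ⟶ C => f)) g)
    have h4 := shortExact_pushout h2 (kernel.ι (Projective.π M))
    refine ⟨_, _, _, _, _, h3, ?_, hW⟩
    have h5 := inCC_mid h4 (inCC_proj C _) hB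
    exact fun i hi => ext_retract_left (pushoutSymmetry _ _).hom (pushoutSymmetry _ _).inv
      (pushoutSymmetry _ _).hom_inv_id i (h5 i hi)

end Cotilting

lemma three_by_three {𝓐 : Type u} [Category.{v} 𝓐] [Abelian 𝓐]
    {Z1 Y Z2 N1 A1 N2 A2 : 𝓐} {z : Z1 ⟶ Y} {q : Y ⟶ Z2} {w : z ≫ q = 0}
    (h : (ShortComplex.mk z q w).ShortExact)
    {n1 : N1 ⟶ A1} {a1 : A1 ⟶ Z1} {w1 : n1 ≫ a1 = 0} (h1 : (ShortComplex.mk n1 a1 w1).ShortExact)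
    {n2 : N2 ⟶ A2} {a2 : A2 ⟶ Z2} {w2 : n2 ≫ a2 = 0} (h2 : (ShortComplex.mk n2 a2 w2).ShortExact)
    {b : A2 ⟶ Y} (hb : b ≫ q = a2) :
    Epi (biprod.desc (a1 ≫ z) b) ∧
    ∃ (j : N1 ⟶ kernel (biprod.desc (a1 ≫ z) b)) (t : kernel (biprod.desc (a1 ≫ z) b) ⟶ N2)
      (wjt : j ≫ t = 0), j ≫ kernel.ι _ = n1 ≫ biprod.inl ∧ t ≫ n2 = kernel.ι _ ≫ biprod.snd ∧
      (ShortComplex.mk j t wjt).ShortExact := by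
  have mz : Mono z := h.mono_f
  have eq : Epi q := h.epi_g
  have mn1 : Mono n1 := h1.mono_f
  have ea1 : Epi a1 := h1.epi_g
  have mn2 : Mono n2 := h2.mono_f
  have ea2 : Epi a2 := h2.epi_g
  refine ⟨Preadditive.epi_of_cancel_zero _ fun {T} x hx => ?_, ?_⟩
  · have e1 : a1 ≫ z ≫ x = 0 := by simpa using biprod.inl ≫= hx
    have e2 : b ≫ x = 0 := by simpa using biprod.inr ≫= hx
    have e3 : z ≫ x = 0 := by rwa [← cancel_epi a1, comp_zero]
    obtain ⟨y, rfl⟩ : ∃ y : Z2 ⟶ T, q ≫ y = x := ⟨h.exact.desc x e3, h.exact.g_desc x e3⟩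
    rw [← assoc, hb] at e2
    have : y = 0 := by rwa [← cancel_epi a2, comp_zero]
    rw [this, comp_zero]
  · have ej : (n1 ≫ biprod.inl) ≫ biprod.desc (a1 ≫ z) b = 0 := by
      rw [assoc, biprod.inl_desc, ← assoc, w1, zero_comp]
    have et : (kernel.ι (biprod.desc (a1 ≫ z) b) ≫ biprod.snd) ≫ a2 = 0 := by
      have hh : (biprod.snd : A1 ⊞ A2 ⟶ A2) ≫ a2 = biprod.desc (a1 ≫ z) b ≫ q := by
        apply biprod.hom_ext' <;> simp [hb, w]
      rw [assoc, hh, kernel.condition_assoc, zero_comp]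
    obtain ⟨t, ht⟩ : ∃ t : kernel (biprod.desc (a1 ≫ z) b) ⟶ N2,
        t ≫ n2 = kernel.ι (biprod.desc (a1 ≫ z) b) ≫ biprod.snd :=
      have := h2.mono_f
      ⟨h2.exact.lift _ et, h2.exact.lift_f _ et⟩
    have hj : kernel.lift _ _ ej ≫ kernel.ι (biprod.desc (a1 ≫ z) b) = n1 ≫ biprod.inl :=
      kernel.lift_ι _ _ _
    have hjt : kernel.lift _ _ ej ≫ t = 0 := by
      rw [← cancel_mono n2, assoc, ht, ← assoc, hj]; simp
    have mj : Mono (kernel.lift (biprod.desc (a1 ≫ z) b) _ ej) := mono_of_mono_fac hj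
    refine ⟨kernel.lift _ _ ej, t, hjt, hj, ht, { exact := ?_, mono_f := mj, epi_g := ?_ }⟩
    · have : Mono (ShortComplex.mk _ _ hjt).f := mj
      refine exact_of_lift _ fun T x hx => ?_
      dsimp at x hx ⊢
      have e1 : (x ≫ kernel.ι _) ≫ biprod.snd = 0 := by
        rw [assoc, ← ht, ← assoc, hx, zero_comp]
      have e2 : x ≫ kernel.ι _ = (x ≫ kernel.ι _ ≫ biprod.fst) ≫ biprod.inl := by
        apply biprod.hom_ext
        · simp
        · rw [e1]; simp
      have e3 : (x ≫ kernel.ι _ ≫ biprod.fst) ≫ a1 = 0 := by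
        have := x ≫= kernel.condition (biprod.desc (a1 ≫ z) b)
        rw [← assoc, e2, assoc, biprod.inl_desc, comp_zero] at this
        rw [← cancel_mono z, zero_comp, ← this, assoc]
      refine ⟨h1.exact.lift _ e3, ?_⟩
      have e4 : h1.exact.lift _ e3 ≫ n1 = _ := h1.exact.lift_f _ e3
      rw [← cancel_mono (kernel.ι _), assoc, hj, ← assoc, e4, ← e2]
    · refine (epi_iff_surjective_up_to_refinements _).2 fun T y => ?_
      dsimp at y ⊢
      have e0 : (y ≫ n2 ≫ b) ≫ q = 0 := by rw [assoc, assoc, hb, w2, comp_zero]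
      have e1 : h.exact.lift _ e0 ≫ z = _ := h.exact.lift_f _ e0
      obtain ⟨T', π, hπ, x, hx⟩ := surjective_up_to_refinements_of_epi a1 (h.exact.lift _ e0)
      refine ⟨T', π, hπ, kernel.lift _ (biprod.lift (-x) (π ≫ y ≫ n2)) ?_, ?_⟩
      · rw [biprod.lift_desc, Preadditive.neg_comp, ← assoc x, ← hx, assoc, e1]
        simp
      · rw [← cancel_mono n2, assoc, assoc, ht, kernel.lift_ι_assoc, biprod.lift_snd]

section Null

variable {R : Type v} [Ring R] [HasExt.{e} (ModuleCat.{v} R)]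

open Abelian

/-- `M` has a resolution of length `k` by modules of `X_C` with syzygies in `F₀`. -/
def ResDim (C : ModuleCat.{v} R) : ℕ → ModuleCat.{v} R → Prop
  | 0, M => IsZero M
  | k + 1, M => ∃ (N A : ModuleCat.{v} R) (f : N ⟶ A) (g : A ⟶ M) (w : f ≫ g = 0),
      (ShortComplex.mk f g w).ShortExact ∧ InCotiltingClass C A ∧ InF0 C N ∧ ResDim C k N

lemma resDim_of_ext {C : ModuleCat.{v} R} {n : ℕ} (hC : IsBigNCotilting n C) (k : ℕ) :
    ∀ M : ModuleCat.{v} R, (∀ j, k < j → Subsingleton (Ext M C j)) → ResDim C (k + 1) M := by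
  induction k with
  | zero =>
    intro M hM
    refine ⟨kernel (𝟙 M), M, _, 𝟙 M, _, shortExact_kernel (𝟙 M), hM, ?_,
      isZero_kernel_of_mono _⟩
    exact fun N _ => ext_zero_right (isZero_kernel_of_mono _) 1
  | succ k ih =>
    intro M hM
    obtain ⟨N, A, f, g, w, hS, hA, hN⟩ := hasPrecover_aux hC (k + 1) M hM
    refine ⟨N, A, f, g, w, hS, hA, hN, ih N fun j hj => ?_⟩
    exact ext_con_left hS C j (hA j (by omega)) (hM (j + 1) (by omega))

lemma null_aux (C : ModuleCat.{v} R) (k : ℕ) :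
    ∀ (W : ℤ → ModuleCat.{v} R) (δ : ∀ i, W i ⟶ W (i + 1)) (_ : ∀ i, δ i ≫ δ (i + 1) = 0)
      (_ : ∀ i, InCotiltingClass C (W i))
      (Zc Y : ℤ → ModuleCat.{v} R) (z : ∀ i, Zc i ⟶ Y i) (q : ∀ i, Y i ⟶ Zc (i + 1))
      (w : ∀ i, z i ≫ q i = 0) (_ : ∀ i, (ShortComplex.mk (z i) (q i) (w i)).ShortExact)
      (_ : ∀ i, InF0 C (Zc i)) (_ : ∀ i, ResDim C k (Zc i))
      (f : ∀ i, W i ⟶ Y i) (_ : ∀ i, f i ≫ q i ≫ z (i + 1) = δ i ≫ f (i + 1)),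
      ∃ h : ∀ i, W (i + 1) ⟶ Y i,
        ∀ i, f (i + 1) = h i ≫ q i ≫ z (i + 1) + δ (i + 1) ≫ h (i + 1) := by
  induction k with
  | zero =>
    intro W δ hδ hW Zc Y z q w hS hF hD f hf
    refine ⟨fun _ => 0, fun i => ?_⟩
    have hY : IsZero (Y (i + 1)) :=
      (hS (i + 1)).exact.isZero_of_both_zeros ((hD (i + 1)).eq_of_src _ _)
        ((hD (i + 1 + 1)).eq_of_tgt _ _)
    exact hY.eq_of_tgt _ _
  | succ k ih =>
    intro W δ hδ hW Zc Y z q w hS hF hD f hf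
    choose N A n a wa hSa hA hN hDN using hD
    have hb : ∀ i, ∃ b : A (i + 1) ⟶ Y i, b ≫ q i = a (i + 1) := fun i =>
      ext_lift (hS i) (hF i _ (hA (i + 1))) (a (i + 1))
    choose b hb using hb
    have h3 := fun i => three_by_three (hS i) (hSa i) (hSa (i + 1)) (hb i)
    have hp := fun i => (h3 i).1
    choose j t wjt hj ht hSK using fun i => (h3 i).2
    let p : ∀ i, A i ⊞ A (i + 1) ⟶ Y i := fun i => biprod.desc (a i ≫ z i) (b i)
    have hpe : ∀ i, Epi (p i) := hp
    have hFK : ∀ i, InF0 C (kernel (p i)) := fun i => inF0_mid (hSK i) (hN i) (hN (i + 1))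
    have hg : ∀ i, ∃ g : W i ⟶ A i ⊞ A (i + 1), g ≫ p i = f i := fun i =>
      ext_lift (shortExact_kernel (p i)) (hFK i _ (hW i)) (f i)
    choose g hg using hg
    let D : ∀ i, A i ⊞ A (i + 1) ⟶ A (i + 1) ⊞ A (i + 1 + 1) := fun i => biprod.snd ≫ biprod.inl
    have hD : ∀ i, D i ≫ p (i + 1) = p i ≫ q i ≫ z (i + 1) := fun i => by
      have hw := w i
      have hb' := hb i
      apply biprod.hom_ext'
      · simp [D, p, reassoc_of% hw]
      · simp [D, p, reassoc_of% hb']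
    have hDD : ∀ i, D i ≫ D (i + 1) = 0 := fun i => by simp [D]
    have hDK : ∀ i, (t i ≫ j (i + 1)) ≫ kernel.ι (p (i + 1)) = kernel.ι (p i) ≫ D i := fun i => by
      have e1 : j (i + 1) ≫ kernel.ι (p (i + 1)) = _ := hj (i + 1)
      have e2 : t i ≫ n (i + 1) = kernel.ι (p i) ≫ biprod.snd := ht i
      rw [assoc, e1, ← assoc, e2, assoc]
    have hc : ∀ i, (g i ≫ D i - δ i ≫ g (i + 1)) ≫ p (i + 1) = 0 := fun i => by
      rw [Preadditive.sub_comp, assoc (g i) (D i), assoc (δ i), hD, hg, ← assoc (g i), hg, hf, sub_self]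
    obtain ⟨s, hs⟩ := ih W (fun i => - δ i) (fun i => by simp [hδ]) hW
      (fun i => N (i + 1)) (fun i => kernel (p (i + 1))) (fun i => j (i + 1))
      (fun i => t (i + 1)) (fun i => wjt (i + 1)) (fun i => hSK (i + 1)) (fun i => hN (i + 1))
      (fun i => hDN (i + 1)) (fun i => kernel.lift _ _ (hc i)) (fun i => by
        rw [← cancel_mono (kernel.ι _), assoc, hDK, assoc, kernel.lift_ι, kernel.lift_ι_assoc]
        simp [hDD, reassoc_of% hδ])
    let γ : ∀ i, W (i + 1) ⟶ A (i + 1) ⊞ A (i + 1 + 1) := fun i =>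
      g (i + 1) - s i ≫ kernel.ι (p (i + 1))
    have hγp : ∀ i, γ i ≫ p (i + 1) = f (i + 1) := fun i => by
      simp [γ, Preadditive.sub_comp, hg]
    have hγD : ∀ i, γ i ≫ D (i + 1) = δ (i + 1) ≫ γ (i + 1) := fun i => by
      have := hs i =≫ kernel.ι _
      rw [kernel.lift_ι, Preadditive.add_comp, assoc, hDK] at this
      simp only [γ, Preadditive.sub_comp, Preadditive.comp_sub, assoc, Preadditive.neg_comp]
        at this ⊢
      rw [sub_eq_iff_eq_add] at this ⊢
      rw [this]
      abel
    refine ⟨fun i => γ i ≫ biprod.fst ≫ b i, fun i => ?_⟩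
    have e1 : δ (i + 1) ≫ γ (i + 1) ≫ biprod.fst ≫ b (i + 1) = γ i ≫ biprod.snd ≫ b (i + 1) := by
      rw [← assoc, ← hγD]
      simp [D]
    have hb' := hb i
    rw [e1, assoc, assoc, reassoc_of% hb', ← hγp, ← Preadditive.comp_add]
    congr 1
    apply biprod.hom_ext' <;> simp [p]

end Null

theorem statement10 (R : Type v) [Ring R] [HasExt.{e} (ModuleCat.{v} R)]
    (C : ModuleCat.{v} R) (hC : IsBigCotilting C)
    (Z X : CochainComplex (ModuleCat.{v} R) ℤ)
    (hZ : ∀ i : ℤ, InCotiltingClass C (Z.X i))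
    (hXacyclic : ∀ i : ℤ, X.ExactAt i)
    (hXcocycles : ∀ i : ℤ, InF0 C (X.cycles i)) :
    ∀ f : Z ⟶ X, Nonempty (Homotopy f 0) := by
  intro f
  obtain ⟨n, hC⟩ := hC
  have hrel : ∀ i : ℤ, (ComplexShape.up ℤ).Rel i (i + 1) := fun i => rfl
  have hS : ∀ i, (ShortComplex.mk (X.iCycles i) (X.toCycles i (i + 1))
      (by rw [← cancel_mono (X.iCycles (i + 1)), assoc, X.toCycles_i, X.iCycles_d, zero_comp])).ShortExact := by
    intro i
    have hepi : Epi (X.toCycles i (i + 1)) := by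
      have h1 := hXacyclic (i + 1)
      rw [X.exactAt_iff_isZero_homology] at h1
      exact Preadditive.epi_of_isZero_cokernel' _ (X.homologyIsCokernel i (i + 1) (by simp)) h1
    refine { exact := ?_, mono_f := inferInstanceAs (Mono (X.iCycles i)), epi_g := hepi }
    have : Mono (ShortComplex.mk (X.iCycles i) (X.toCycles i (i + 1))
      (by rw [← cancel_mono (X.iCycles (i + 1)), assoc, X.toCycles_i, X.iCycles_d, zero_comp])).f :=
      inferInstanceAs (Mono (X.iCycles i))
    refine exact_of_lift _ fun T x hx => ?_
    dsimp at x hx ⊢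
    refine ⟨X.liftCycles x (i + 1) (by simp) ?_, X.liftCycles_i _ _ _ _⟩
    rw [← X.toCycles_i, ← assoc, hx, zero_comp]
  obtain ⟨h, hh⟩ := null_aux C (n + 1) Z.X (fun i => Z.d i (i + 1)) (fun i => Z.d_comp_d _ _ _) hZ
    (fun i => X.cycles i) X.X (fun i => X.iCycles i) (fun i => X.toCycles i (i + 1)) _ hS hXcocycles
    (fun i => resDim_of_ext hC n _ fun j hj => injDim_ext hC.1 _ j hj) f.f (fun i => by simp)
  let H : ∀ i j : ℤ, Z.X i ⟶ X.X j := fun i j =>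
    if hij : i = j + 1 then eqToHom (by rw [hij]) ≫ h j else 0
  have hH : ∀ j, H (j + 1) j = h j := fun j => by simp [H]
  refine ⟨{ hom := H, zero := fun i j hij => dif_neg fun e => hij e.symm, comm := fun i => ?_ }⟩
  obtain ⟨i, rfl⟩ : ∃ k, i = k + 1 := ⟨i - 1, by omega⟩
  rw [dNext_eq H (hrel (i + 1)), prevD_eq H (hrel i), hH, hH, hh i, X.toCycles_i,
    HomologicalComplex.zero_f, add_zero]
  exact add_comm _ _
end

section
/- Let R be a ring, C a big cotilting right R-module with cotilting class X_C, and let Z, X be cochain complexes of right R-modules such that every component of Z belongs to X_C and X is a bounded below complex all of whose components are direct summands of products of copies of C. Then the canonical map Hom_{K(R)}(Z, X) → Hom_{D(R)}(Z, X) from homotopy classes of chain maps to morphisms in the derived category is an isomorphism. -/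
/-!
Statement 11: Let `R` be a ring and `C` a big cotilting module with cotilting class `X_C`.
If `Z` is a complex with components in `X_C` and `X` is a bounded below complex with components
in `Prod C`, then the canonical map `Hom_{K(R)}(Z, X) → Hom_{D(R)}(Z, X)` is bijective.
-/

universe e w v u

open CategoryTheory Category Limits

open PaperStmt

namespace PaperProof

open CochainComplex CochainComplex.HomComplex

section Abstract

variable {A : Type*} [Category* A] [Abelian A]

/-- Degreewise lifting of cochains along a degreewise `Hom(Z, -)`-surjective map. -/
lemma exists_lift_cochain {Z J K : CochainComplex A ℤ} (g : J ⟶ K)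
    (hg : ∀ (i k : ℤ) (φ : Z.X i ⟶ K.X k), ∃ ψ : Z.X i ⟶ J.X k, ψ ≫ g.f k = φ)
    {m : ℤ} (β : Cochain Z K m) :
    ∃ γ : Cochain Z J m, γ.comp (Cochain.ofHom g) (add_zero m) = β := by
  choose L hL using hg
  refine ⟨Cochain.mk (fun p q h => L p q (β.v p q h)), ?_⟩
  ext p q h
  simp [hL]

/-- A cochain which vanishes in the quotient comes from the subcomplex. -/
lemma exists_factor_cochain {Z : CochainComplex A ℤ} {S : ShortComplex (CochainComplex A ℤ)}
    (hS : S.ShortExact) {m : ℤ} (β : Cochain Z S.X₂ m)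
    (hβ : β.comp (Cochain.ofHom S.g) (add_zero m) = 0) :
    ∃ γ : Cochain Z S.X₁ m, γ.comp (Cochain.ofHom S.f) (add_zero m) = β := by
  have h (i k : ℤ) (φ : Z.X i ⟶ S.X₂.X k) (hφ : φ ≫ S.g.f k = 0) :
      ∃ ψ : Z.X i ⟶ S.X₁.X k, ψ ≫ S.f.f k = φ := by
    have hk := (HomologicalComplex.shortExact_iff_degreewise_shortExact S).1 hS k
    have := hk.mono_f
    exact ⟨hk.exact.lift φ hφ, hk.exact.lift_f φ hφ⟩
  have hv (p q : ℤ) (hpq : p + m = q) : β.v p q hpq ≫ S.g.f q = 0 := by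
    simpa using Cochain.congr_v hβ p q hpq
  choose L hL using h
  refine ⟨Cochain.mk (fun p q hpq => L p q (β.v p q hpq) (hv p q hpq)), ?_⟩
  ext p q hpq
  simp [hL]

lemma comp_ofHom_injective {Z : CochainComplex A ℤ} {S : ShortComplex (CochainComplex A ℤ)}
    (hS : S.ShortExact) {m : ℤ} (β γ : Cochain Z S.X₁ m)
    (h : β.comp (Cochain.ofHom S.f) (add_zero m) = γ.comp (Cochain.ofHom S.f) (add_zero m)) :
    β = γ := by
  ext p q hpq
  have hk := (HomologicalComplex.shortExact_iff_degreewise_shortExact S).1 hS q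
  have : Mono (S.f.f q) := hk.mono_f
  rw [← cancel_mono (S.f.f q)]
  simpa using Cochain.congr_v h p q hpq

/-- The key chasing lemma. -/
lemma coboundary_of_shortExact {Z : CochainComplex A ℤ} {S : ShortComplex (CochainComplex A ℤ)}
    (hS : S.ShortExact)
    (hg : ∀ (i k : ℤ) (φ : Z.X i ⟶ S.X₃.X k), ∃ ψ : Z.X i ⟶ S.X₂.X k, ψ ≫ S.g.f k = φ)
    (hK : ∀ (m n : ℤ) (_ : m + 1 = n) (z : Cochain Z S.X₃ n), δ n (n + 1) z = 0 →
      ∃ α : Cochain Z S.X₃ m, δ m n α = z)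
    {m n : ℤ} (hmn : m + 1 = n) (z : Cochain Z S.X₁ n)
    (β : Cochain Z S.X₂ m) (hβ : δ m n β = z.comp (Cochain.ofHom S.f) (add_zero n)) :
    ∃ α : Cochain Z S.X₁ m, δ m n α = z := by
  subst hmn
  obtain ⟨k, hk⟩ := hK (m - 1) m (by lia) (β.comp (Cochain.ofHom S.g) (add_zero m)) (by
    rw [δ_comp_ofHom, hβ, Cochain.comp_assoc_of_second_is_zero_cochain, ← Cochain.ofHom_comp,
      S.zero, Cochain.ofHom_zero, Cochain.comp_zero])
  obtain ⟨k', rfl⟩ := exists_lift_cochain S.g hg k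
  obtain ⟨α, hα⟩ := exists_factor_cochain hS (β - δ (m - 1) m k') (by
    rw [Cochain.sub_comp, ← hk, δ_comp_ofHom, sub_self])
  refine ⟨α, comp_ofHom_injective hS _ _ ?_⟩
  rw [← hβ, ← δ_comp_ofHom, hα, δ_sub, δ_δ, sub_zero]

section Resolutions

variable [EnoughInjectives A] [HasExt.{e} A]

/-- Short exact sequence embedding into injectives. -/
lemma exists_embedding (W : CochainComplex A ℤ) (d : ℤ) [W.IsStrictlyGE d] (n : ℕ)
    (hW : ∀ i, HasInjectiveDimensionLT (W.X i) (n + 2)) (Z : CochainComplex A ℤ)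
    (hZ : ∀ i k (j : ℕ), 0 < j → Subsingleton (Abelian.Ext (Z.X i) (W.X k) j)) :
    ∃ (J K : CochainComplex A ℤ) (f : W ⟶ J) (g : J ⟶ K) (w : f ≫ g = 0),
      (ShortComplex.mk f g w).ShortExact ∧ QuasiIso f ∧ J.IsKInjective ∧
      K.IsStrictlyGE (d - 1) ∧ K.Acyclic ∧ (∀ i, HasInjectiveDimensionLT (K.X i) (n + 1)) ∧
      (∀ i k (j : ℕ), 0 < j → Subsingleton (Abelian.Ext (Z.X i) (K.X k) j)) ∧
      (∀ (i k : ℤ) (φ : Z.X i ⟶ K.X k), ∃ ψ : Z.X i ⟶ J.X k, ψ ≫ g.f k = φ) := by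
  obtain ⟨J, f, _, hqi, hJ, hGE⟩ :=
    Plus.modelCategoryQuillen.exists_mono_quasiIso_injective W (d - 1) d (by lia)
  have hS : (ShortComplex.mk f (cokernel.π f) (cokernel.condition f)).ShortExact :=
    { exact := ShortComplex.exact_cokernel f }
  have hk := (HomologicalComplex.shortExact_iff_degreewise_shortExact _).1 hS
  refine ⟨J, cokernel f, f, cokernel.π f, cokernel.condition f, hS, hqi,
    isKInjective_of_injective J (d - 1), ?_, hS.acyclic_X₃ hqi, ?_, ?_, ?_⟩
  · rw [isStrictlyGE_iff]
    intro i hi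
    have : Epi ((cokernel.π f).f i) := (hk i).epi_g
    exact (J.isZero_of_isStrictlyGE (d - 1) i hi).of_epi ((cokernel.π f).f i)
  · intro i
    exact ((hk i).hasInjectiveDimensionLT_X₃_iff n (hJ i)).2 (hW i)
  · intro i k j hj
    obtain ⟨j, rfl⟩ : ∃ l, j = l + 1 := ⟨j - 1, by lia⟩
    refine subsingleton_of_forall_eq 0 (fun x => ?_)
    have := hZ i k (j + 2) (by lia)
    obtain ⟨y, hy⟩ := Abelian.Ext.covariant_sequence_exact₃ _ (hk k) x (n₁ := j + 2) rfl
      (this.elim _ _)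
    have hj : Injective (J.X k) := hJ k
    have : y = 0 := Abelian.Ext.eq_zero_of_injective (I := J.X k) y
    rw [← hy, this, Abelian.Ext.zero_comp]
    rfl
  · intro i k φ
    have := hZ i k 1 (by lia)
    obtain ⟨y, hy⟩ := Abelian.Ext.covariant_sequence_exact₃ _ (hk k) (Abelian.Ext.mk₀ φ)
      (n₁ := 1) rfl (this.elim _ _)
    obtain ⟨y, rfl⟩ := Abelian.Ext.homEquiv₀.symm.surjective y
    refine ⟨y, Abelian.Ext.homEquiv₀.symm.injective ?_⟩
    rw [Abelian.Ext.homEquiv₀_symm_apply, Abelian.Ext.homEquiv₀_symm_apply]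
    rw [Abelian.Ext.homEquiv₀_symm_apply] at hy
    exact (Abelian.Ext.mk₀_comp_mk₀ _ _).symm.trans hy

lemma coboundary_of_acyclic (Z : CochainComplex A ℤ) (N : ℕ) :
    ∀ (W : CochainComplex A ℤ) (d : ℤ) (_ : W.IsStrictlyGE d) (_ : W.Acyclic)
    (_ : ∀ i, HasInjectiveDimensionLT (W.X i) (N + 1))
    (_ : ∀ i k (j : ℕ), 0 < j → Subsingleton (Abelian.Ext (Z.X i) (W.X k) j))
    (m n : ℤ) (_ : m + 1 = n) (z : Cochain Z W n) (_ : δ n (n + 1) z = 0),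
      ∃ α : Cochain Z W m, δ m n α = z := by
  induction N with
  | zero =>
    intro W d _ hac hid hZ m n hmn z hz
    have (i : ℤ) : Injective (W.X i) := injective_iff_hasInjectiveDimensionLT_one.2 (hid i)
    have := isKInjective_of_injective W d
    exact IsKInjective.eq_δ_of_cocycle' (Cocycle.mk z _ rfl hz) hac m hmn
  | succ N ih =>
    intro W d _ hac hid hZ m n hmn z hz
    obtain ⟨J, K, f, g, w, hS, hqi, hJ, hGE, hK, hKid, hKZ, hg⟩ := exists_embedding W d N hid Z hZ
    have hJac : J.Acyclic := hS.acyclic_X₂ hac hK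
    obtain ⟨β, hβ⟩ := IsKInjective.eq_δ_of_cocycle'
      ((Cocycle.mk z _ rfl hz).postcomp f) hJac m hmn
    exact coboundary_of_shortExact hS hg (fun m n hmn z hz => ih K (d - 1) hGE hK hKid hKZ m n hmn z hz)
      hmn z β hβ

theorem main [HasDerivedCategory.{w} A] (Z X : CochainComplex A ℤ) (d : ℤ) [X.IsStrictlyGE d]
    (N : ℕ) (hid : ∀ i, HasInjectiveDimensionLT (X.X i) (N + 2))
    (hZ : ∀ i k (j : ℕ), 0 < j → Subsingleton (Abelian.Ext (Z.X i) (X.X k) j)) :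
    Function.Bijective
      (fun f : ((HomotopyCategory.quotient A (ComplexShape.up ℤ)).obj Z ⟶
          (HomotopyCategory.quotient A (ComplexShape.up ℤ)).obj X) =>
        DerivedCategory.Qh.map f) := by
  obtain ⟨J, K, f, g, w, hS, hqi, hJ, hGE, hK, hKid, hKZ, hg⟩ := exists_embedding X d N hid Z hZ
  have hcob := coboundary_of_acyclic Z N K (d - 1) hGE hK hKid hKZ
  let q := HomotopyCategory.quotient A (ComplexShape.up ℤ)
  have hbij := IsKInjective.Qh_map_bijective (q.obj Z) J
  have hiso : IsIso (DerivedCategory.Qh.map (q.map f)) :=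
    inferInstanceAs (IsIso (DerivedCategory.Q.map f))
  constructor
  · intro a b hab
    dsimp only at hab
    obtain ⟨a, rfl⟩ := q.map_surjective a
    obtain ⟨b, rfl⟩ := q.map_surjective b
    have h1 : q.map (a ≫ f) = q.map (b ≫ f) := by
      apply hbij.1
      simp only [Functor.map_comp]
      rw [hab]
    have ho := Cochain.equivHomotopy _ _ (HomotopyCategory.homotopyOfEq _ _ h1)
    obtain ⟨α, hα⟩ := coboundary_of_shortExact hS hg hcob (m := -1) (n := 0) (by simp)
      (Cochain.ofHom (a - b)) ho.1 (by
        have := ho.2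
        rw [← sub_eq_iff_eq_add] at this
        rw [← this]
        simp)
    refine HomotopyCategory.eq_of_homotopy _ _ ((Cochain.equivHomotopy _ _).symm ⟨α, ?_⟩)
    rw [hα]
    simp
  · intro φ
    obtain ⟨h, hh⟩ := hbij.2 (φ ≫ DerivedCategory.Qh.map (q.map f))
    obtain ⟨h, rfl⟩ := q.map_surjective h
    obtain ⟨k, hk⟩ := hcob (-1) 0 (by simp) (Cochain.ofHom (h ≫ g)) (by simp)
    obtain ⟨k', rfl⟩ := exists_lift_cochain g hg k
    obtain ⟨γ, hγ⟩ := exists_factor_cochain hS (Cochain.ofHom h - δ (-1) 0 k') (by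
      rw [δ_comp_ofHom] at hk
      rw [Cochain.sub_comp]
      erw [hk]
      simp)
    have hγ0 : δ 0 1 γ = 0 := comp_ofHom_injective hS _ _ (by
      rw [← δ_comp_ofHom, hγ, δ_sub, δ_ofHom, zero_sub]
      simpa using! δ_δ (-1) 0 1 k')
    let c := (Cocycle.mk γ 1 (by simp) hγ0).homOf
    have hc : q.map (c ≫ f) = q.map h := by
      refine (HomotopyCategory.eq_of_homotopy _ _
        ((Cochain.equivHomotopy _ _).symm ⟨k', ?_⟩)).symm
      have : Cochain.ofHom c = γ := Cocycle.cochain_ofHom_homOf_eq_coe _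
      rw [Cochain.ofHom_comp, this]
      erw [hγ]
      simp
    refine ⟨q.map c, ?_⟩
    dsimp only
    rw [← cancel_mono (DerivedCategory.Qh.map (q.map f)), ← hh, ← hc, ← Functor.map_comp,
      ← Functor.map_comp]

end Resolutions

/-- Transport of the explicit definition of injective dimension. -/
lemma injDim_kernel {n : ℕ} (S : ComposableArrows A (n + 3)) (hS : S.Exact)
    (h0 : IsZero (S.obj (Fin.last (n + 3))))
    (hinj : ∀ (i : ℕ) (_ : 2 ≤ i) (_ : i ≤ n + 2), Injective (S.obj ⟨i, by omega⟩))
    (l : ℕ) : ∀ (i : ℕ) (_ : 2 ≤ i) (_ : i + l = n + 2),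
      HasInjectiveDimensionLT (kernel (S.map' i (i + 1) (by omega) (by omega))) (l + 1) := by
  induction l with
  | zero =>
    intro i h2 hi
    obtain rfl : i = n + 2 := by omega
    have : Injective (S.obj ⟨n + 2, by omega⟩) := hinj (n + 2) h2 (by omega)
    have hz : S.map' (n + 2) (n + 2 + 1) (by omega) (by omega) = 0 := h0.eq_of_tgt _ _
    have : IsIso (kernel.ι (S.map' (n + 2) (n + 2 + 1) (by omega) (by omega))) := by
      rw [hz]; infer_instance
    exact injective_iff_hasInjectiveDimensionLT_one.1
      (Injective.of_iso (asIso (kernel.ι _)).symm ‹_›)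
  | succ l ih =>
    intro i h2 hi
    have hnext := ih (i + 1) (by omega) (by omega)
    have hiinj := hinj i h2 (by omega)
    have hex := hS.exact i (by omega)
    let a := S.map' i (i + 1) (by omega) (by omega)
    let b := S.map' (i + 1) (i + 1 + 1) (by omega) (by omega)
    have hw : a ≫ b = 0 := hS.zero i (by omega)
    let p : S.obj ⟨i, by omega⟩ ⟶ kernel b := kernel.lift b a hw
    have hp : Epi p := ShortComplex.Exact.epi_kernelLift hex
    have hker : kernel.ι a ≫ p = 0 := by
      rw [← cancel_mono (kernel.ι b)]; simp [p]
    have hse : (ShortComplex.mk (kernel.ι a) p hker).ShortExact :=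
      { exact := ShortComplex.exact_of_f_is_kernel _
          (KernelFork.IsLimit.ofι' _ _ (fun {T} x hx => ⟨kernel.lift a x (by
            have := hx =≫ kernel.ι b
            simpa [p] using this), by simp⟩)) }
    exact (hse.hasInjectiveDimensionLT_X₃_iff l hiinj).1 hnext

lemma injDim_of_sequence {n : ℕ} (S : ComposableArrows A (n + 3)) (hS : S.Exact)
    (hz : IsZero (S.obj 0)) (h0 : IsZero (S.obj (Fin.last (n + 3))))
    (hinj : ∀ (i : ℕ) (_ : 2 ≤ i) (_ : i ≤ n + 2), Injective (S.obj ⟨i, by omega⟩)) :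
    HasInjectiveDimensionLT (S.obj ⟨1, by omega⟩) (n + 1) := by
  have h := injDim_kernel S hS h0 hinj n 2 le_rfl (by omega)
  have hm : Mono (S.map' 1 2 (by omega) (by omega)) :=
    (hS.exact 0 (by omega)).mono_g (hz.eq_of_src _ _)
  let a := S.map' 1 2 (by omega) (by omega)
  let b := S.map' 2 (2 + 1) (by omega) (by omega)
  have hw : a ≫ b = 0 := hS.zero 1 (by omega)
  let p : S.obj ⟨1, by omega⟩ ⟶ kernel b := kernel.lift b a hw
  have hp : Epi p := ShortComplex.Exact.epi_kernelLift (hS.exact 1 (by omega))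
  have : Mono p := by
    have : Mono (p ≫ kernel.ι b) := by
      rw [kernel.lift_ι]; exact hm
    exact mono_of_mono p (kernel.ι b)
  have : IsIso p := isIso_of_mono_of_epi p
  exact hasInjectiveDimensionLT_of_iso (asIso p).symm (n + 1)

lemma ext_pi [HasExt.{e} A] [EnoughProjectives A] (C : A) {ι : Type*} [HasProduct (fun _ : ι => C)] (j : ℕ) :
    ∀ (Y : A), Subsingleton (Abelian.Ext Y C (j + 1)) →
      Subsingleton (Abelian.Ext Y (∏ᶜ (fun _ : ι => C)) (j + 1)) := by
  induction j with
  | zero =>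
    intro Y hY
    refine subsingleton_of_forall_eq 0 (fun x => ?_)
    have hS : (ShortComplex.mk _ _ (kernel.condition (Projective.π Y))).ShortExact :=
      { exact := ShortComplex.exact_of_f_is_kernel _ (kernelIsKernel _) }
    obtain ⟨y, hy⟩ := Abelian.Ext.contravariant_sequence_exact₃ hS _ x
      (Abelian.Ext.eq_zero_of_projective (P := Projective.over Y) _) (n₀ := 0) rfl
    obtain ⟨y, rfl⟩ := Abelian.Ext.homEquiv₀.symm.surjective y
    have key (i : ι) : ∃ t : Projective.over Y ⟶ C,
        kernel.ι (Projective.π Y) ≫ t = y ≫ Pi.π (fun _ : ι => C) i := by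
      obtain ⟨t, ht⟩ := Abelian.Ext.contravariant_sequence_exact₁ hS _
        (Abelian.Ext.mk₀ (y ≫ Pi.π (fun _ : ι => C) i)) (n₁ := 1) rfl (hY.elim _ _)
      obtain ⟨t, rfl⟩ := Abelian.Ext.homEquiv₀.symm.surjective t
      exact ⟨t, Abelian.Ext.homEquiv₀.symm.injective (by simpa using! ht)⟩
    choose t ht using key
    have hyt : y = kernel.ι (Projective.π Y) ≫ Pi.lift t := by
      apply Pi.hom_ext
      intro i
      simp [ht]
    rw [← hy, hyt, Abelian.Ext.homEquiv₀_symm_apply, ← Abelian.Ext.mk₀_comp_mk₀]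
    exact hS.extClass_comp_assoc _
  | succ j ih =>
    intro Y hY
    have hS : (ShortComplex.mk _ _ (kernel.condition (Projective.π Y))).ShortExact :=
      { exact := ShortComplex.exact_of_f_is_kernel _ (kernelIsKernel _) }
    have hK : Subsingleton (Abelian.Ext (kernel (Projective.π Y)) C (j + 1)) := by
      refine subsingleton_of_forall_eq 0 (fun x => ?_)
      obtain ⟨y, hy⟩ := Abelian.Ext.contravariant_sequence_exact₁ hS _ x
        (n₁ := j + 1 + 1) (by omega) (hY.elim _ _)
      rw [← hy, Abelian.Ext.eq_zero_of_projective (P := Projective.over Y) y,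
        Abelian.Ext.comp_zero]
    have := ih _ hK
    refine subsingleton_of_forall_eq 0 (fun x => ?_)
    obtain ⟨y, hy⟩ := Abelian.Ext.contravariant_sequence_exact₃ hS _ x
      (Abelian.Ext.eq_zero_of_projective (P := Projective.over Y) _) (n₀ := j + 1) (by omega)
    rw [← hy, this.elim y 0, Abelian.Ext.comp_zero]

end Abstract

lemma ext_inProd {R : Type v} [Ring R] [HasExt.{e} (ModuleCat.{v} R)] (C M Y : ModuleCat.{v} R)
    (hM : InProdOf C M) (j : ℕ) (hj : 0 < j) (h : Subsingleton (Abelian.Ext Y C j)) :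
    Subsingleton (Abelian.Ext Y M j) := by
  obtain ⟨ι, s, r, hsr⟩ := hM
  obtain ⟨j, rfl⟩ : ∃ l, j = l + 1 := ⟨j - 1, by lia⟩
  have := ext_pi (ι := ι) C j Y h
  refine subsingleton_of_forall_eq 0 (fun x => ?_)
  rw [← x.comp_mk₀_id, ← hsr, ← Abelian.Ext.mk₀_comp_mk₀,
    ← Abelian.Ext.comp_assoc_of_second_deg_zero,
    this.elim (x.comp (Abelian.Ext.mk₀ s) (add_zero _)) 0, Abelian.Ext.zero_comp]

end PaperProof

theorem statement11 (R : Type v) [Ring R] [HasExt.{e} (ModuleCat.{v} R)]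
    [HasDerivedCategory.{w} (ModuleCat.{v} R)]
    (C : ModuleCat.{v} R) (hC : IsBigCotilting C)
    (Z X : CochainComplex (ModuleCat.{v} R) ℤ)
    (hZ : ∀ i : ℤ, InCotiltingClass C (Z.X i))
    (hXbdd : ∃ m : ℤ, ∀ i : ℤ, i < m → IsZero (X.X i))
    (hXcomp : ∀ i : ℤ, InProdOf C (X.X i)) :
    Function.Bijective
      (fun f : ((HomotopyCategory.quotient (ModuleCat.{v} R) (ComplexShape.up ℤ)).obj Z ⟶
          (HomotopyCategory.quotient (ModuleCat.{v} R) (ComplexShape.up ℤ)).obj X) =>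
        DerivedCategory.Qh.map f) := by
  obtain ⟨n, ⟨S, hS, hz, h0, ⟨iso⟩, hinj⟩, -, -⟩ := hC
  obtain ⟨d, hd⟩ := hXbdd
  have : X.IsStrictlyGE d := (CochainComplex.isStrictlyGE_iff X d).2 (fun i hi => hd i hi)
  have hC1 := PaperProof.injDim_of_sequence S hS hz h0 hinj
  have hC2 : HasInjectiveDimensionLT C (n + 1) := hasInjectiveDimensionLT_of_iso iso (n + 1)
  refine PaperProof.main Z X d n (fun i => ?_) (fun i k j hj =>
    PaperProof.ext_inProd C _ _ (hXcomp k) j hj (hZ i j hj))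
  rw [hasInjectiveDimensionLT_iff]
  intro j hj Y x
  have := PaperProof.ext_inProd C _ Y (hXcomp i) j (by omega)
    (HasInjectiveDimensionLT.subsingleton C (n + 1) j (by omega) Y)
  exact this.elim _ _
end
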